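/- For every ε > 0 there exists N such that for all n ≥ N, every truly n-variate Boolean function f : {0,1}^n → {0,1} satisfies pdeg(f) ≥ (log₂ n)^{1/3−ε}. -/

import Mathlib

open scoped Classical

noncomputable def evalBool {ι : Type} (a : ι → Bool) (P : MvPolynomial ι ℝ) : ℝ :=
  MvPolynomial.eval (fun i => if a i then (1:ℝ) else 0) P

def HasProbPoly {ι : Type} (f : (ι → Bool) → Bool) (ε : ℝ) (d : ℕ) : Prop :=
  ∃ (k : ℕ) (w : Fin k → ℝ) (P : Fin k → MvPolynomial ι ℝ),
    (∀ i, 0 ≤ w i) ∧ (∑ i, w i = 1) ∧ (∀ i, (P i).totalDegree ≤ d) ∧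
    ∀ a : ι → Bool,
      ∑ i ∈ Finset.univ.filter
          (fun i => evalBool a (P i) ≠ (if f a then (1:ℝ) else 0)), w i ≤ ε

noncomputable def pdeg {ι : Type} (ε : ℝ) (f : (ι → Bool) → Bool) : ℕ :=
  sInf {d | HasProbPoly f ε d}

def TrulyVariate {ι : Type} (f : (ι → Bool) → Bool) : Prop :=
  ∀ i : ι, ∃ a, f (Function.update a i (!(a i))) ≠ f a

def ORf (n : ℕ) : (Fin n → Bool) → Bool := fun a => decide (∃ i, a i = true)

noncomputable def sensitivity {n : ℕ} (f : (Fin n → Bool) → Bool) : ℕ :=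
  Finset.univ.sup (fun a : Fin n → Bool =>
    (Finset.univ.filter (fun i : Fin n => f (Function.update a i (!(a i))) ≠ f a)).card)

set_option linter.unusedVariables false
set_option linter.unusedSectionVars false
/-! ### Expectation over product spaces -/

noncomputable def Ex {V Ω : Type} [Fintype V] [DecidableEq V] [Fintype Ω] (w : Ω → ℝ)
    (F : (V → Ω) → ℝ) : ℝ := ∑ ω, (∏ i, w (ω i)) * F ω

section ExSec
variable {V Ω Ω' : Type} [Fintype V] [DecidableEq V] [Fintype Ω] [Fintype Ω']

structure IsW (w : Ω → ℝ) : Prop where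
  nn : ∀ o, 0 ≤ w o
  sum : ∑ o, w o = 1

lemma Ex_add (w : Ω → ℝ) (F G : (V → Ω) → ℝ) : Ex w (fun ω => F ω + G ω) = Ex w F + Ex w G := by
  simp [Ex, mul_add, Finset.sum_add_distrib]

lemma Ex_sub (w : Ω → ℝ) (F G : (V → Ω) → ℝ) : Ex w (fun ω => F ω - G ω) = Ex w F - Ex w G := by
  simp [Ex, mul_sub, Finset.sum_sub_distrib]

lemma Ex_mul (w : Ω → ℝ) (r : ℝ) (F : (V → Ω) → ℝ) : Ex w (fun ω => r * F ω) = r * Ex w F := by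
  simp only [Ex, Finset.mul_sum]
  exact Finset.sum_congr rfl fun _ _ => by ring

lemma Ex_mul_right (w : Ω → ℝ) (r : ℝ) (F : (V → Ω) → ℝ) :
    Ex w (fun ω => F ω * r) = Ex w F * r := by
  rw [mul_comm, ← Ex_mul]; congr 1; ext; ring

lemma Ex_sum {K : Type} (w : Ω → ℝ) (s : Finset K) (F : K → (V → Ω) → ℝ) :
    Ex w (fun ω => ∑ k ∈ s, F k ω) = ∑ k ∈ s, Ex w (F k) := by
  simp only [Ex, Finset.mul_sum]
  exact Finset.sum_comm

lemma Ex_one {w : Ω → ℝ} (hw : IsW w) : Ex w (fun _ : V → Ω => (1:ℝ)) = 1 := by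
  simp only [Ex, mul_one]
  have := Finset.prod_univ_sum (fun _ : V => (Finset.univ : Finset Ω)) (fun _ o => w o)
  simp only [hw.sum, Finset.prod_const_one, Fintype.piFinset_univ] at this
  exact this.symm

lemma Ex_const {w : Ω → ℝ} (hw : IsW w) (r : ℝ) : Ex w (fun _ : V → Ω => r) = r := by
  have := Ex_mul w r (fun _ : V → Ω => (1:ℝ))
  rw [Ex_one hw] at this
  simpa using this

lemma Ex_mono {w : Ω → ℝ} (hw : IsW w) {F G : (V → Ω) → ℝ} (h : ∀ ω, F ω ≤ G ω) :
    Ex w F ≤ Ex w G :=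
  Finset.sum_le_sum fun ω _ =>
    mul_le_mul_of_nonneg_left (h ω) (Finset.prod_nonneg fun i _ => hw.nn _)

lemma Ex_nonneg {w : Ω → ℝ} (hw : IsW w) {F : (V → Ω) → ℝ} (h : ∀ ω, 0 ≤ F ω) :
    0 ≤ Ex w F :=
  Finset.sum_nonneg fun ω _ => mul_nonneg (Finset.prod_nonneg fun i _ => hw.nn _) (h ω)

lemma Ex_abs_le {w : Ω → ℝ} (hw : IsW w) (F : (V → Ω) → ℝ) :
    |Ex w F| ≤ Ex w (fun ω => |F ω|) := by
  refine (Finset.abs_sum_le_sum_abs _ _).trans (le_of_eq ?_)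
  refine Finset.sum_congr rfl fun ω _ => ?_
  rw [abs_mul, abs_of_nonneg (Finset.prod_nonneg fun i _ => hw.nn _)]

/-- some point has value at most the expectation -/
lemma Ex_exists_le {w : Ω → ℝ} (hw : IsW w) (F : (V → Ω) → ℝ) : ∃ ω, F ω ≤ Ex w F := by
  by_contra hcon
  push Not at hcon
  have h1 : ∃ ω : V → Ω, 0 < ∏ i, w (ω i) := by
    by_contra h
    push Not at h
    have h2 := Ex_one (V := V) hw
    simp only [Ex, mul_one] at h2
    have : ∑ ω : V → Ω, ∏ i, w (ω i) ≤ 0 := Finset.sum_nonpos fun ω _ => h ω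
    linarith
  obtain ⟨ω0, h0⟩ := h1
  have h3 : Ex w (fun _ : V → Ω => Ex w F) < Ex w F := by
    refine Finset.sum_lt_sum (fun ω _ => mul_le_mul_of_nonneg_left (hcon ω).le
      (Finset.prod_nonneg fun i _ => hw.nn _)) ⟨ω0, Finset.mem_univ _, ?_⟩
    exact mul_lt_mul_of_pos_left (hcon ω0) h0
  rw [Ex_const hw] at h3
  exact lt_irrefl _ h3

/-- Cauchy–Schwarz -/
lemma Ex_cs {w : Ω → ℝ} (hw : IsW w) (F G : (V → Ω) → ℝ) :
    (Ex w (fun ω => F ω * G ω))^2 ≤ Ex w (fun ω => F ω ^ 2) * Ex w (fun ω => G ω ^ 2) := by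
  have hp : ∀ ω : V → Ω, 0 ≤ ∏ i, w (ω i) := fun ω => Finset.prod_nonneg fun i _ => hw.nn _
  have := Finset.sum_mul_sq_le_sq_mul_sq Finset.univ
    (fun ω : V → Ω => Real.sqrt (∏ i, w (ω i)) * F ω) (fun ω => Real.sqrt (∏ i, w (ω i)) * G ω)
  simp only [mul_pow, Real.sq_sqrt (hp _)] at this
  refine le_trans (le_of_eq ?_) this
  unfold Ex
  congr 1
  refine Finset.sum_congr rfl fun ω _ => ?_
  conv_lhs => rw [← Real.mul_self_sqrt (hp ω)]
  ring

/-- resampling one coordinate -/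
lemma Ex_resample {w : Ω → ℝ} (hw : IsW w) (F : (V → Ω) → ℝ) (j : V) :
    Ex w F = Ex w (fun ω => ∑ o, w o * F (Function.update ω j o)) := by
  have key : ∀ G : (V → Ω) → ℝ, Ex w G =
      ∑ o, ∑ ω : {x : V // x ≠ j} → Ω, (w o * ∏ i, w (ω i)) *
        G ((Equiv.funSplitAt j Ω).symm (o, ω)) := by
    intro G
    unfold Ex
    rw [← (Equiv.funSplitAt j Ω).symm.sum_comp, Fintype.sum_prod_type]
    refine Finset.sum_congr rfl fun o _ => Finset.sum_congr rfl fun ω _ => ?_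
    congr 1
    rw [← Finset.mul_prod_erase Finset.univ _ (Finset.mem_univ j)]
    congr 1
    · simp [Equiv.funSplitAt]
    · rw [Finset.prod_subtype (p := fun x => x ≠ j) (Finset.univ.erase j) (by simp)]
      refine Finset.prod_congr rfl fun i _ => ?_
      simp [Equiv.funSplitAt, i.2]
  rw [key, key]
  have h2 : ∀ (o o' : Ω) (ω : {x : V // x ≠ j} → Ω),
      Function.update ((Equiv.funSplitAt j Ω).symm (o, ω)) j o' =
        (Equiv.funSplitAt j Ω).symm (o', ω) := by
    intro o o' ω
    ext i
    by_cases h : i = j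
    · subst h; simp [Equiv.funSplitAt]
    · simp [Equiv.funSplitAt, h]
  simp only [h2]
  have : ∀ o : Ω, ∑ ω : {x : V // x ≠ j} → Ω, (w o * ∏ i, w (ω i)) *
      ∑ o', w o' * F ((Equiv.funSplitAt j Ω).symm (o', ω)) = w o *
      ∑ ω : {x : V // x ≠ j} → Ω, (∏ i, w (ω i)) *
      ∑ o', w o' * F ((Equiv.funSplitAt j Ω).symm (o', ω)) := by
    intro o
    rw [Finset.mul_sum]
    exact Finset.sum_congr rfl fun _ _ => by ring
  simp only [this]
  rw [← Finset.sum_mul, hw.sum, one_mul, Finset.sum_comm]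
  refine Finset.sum_congr rfl fun ω _ => ?_
  rw [Finset.mul_sum]
  exact Finset.sum_congr rfl fun _ _ => by ring

/-- marginalisation -/
lemma Ex_map (w : Ω → ℝ) (p : Ω → Ω') (w' : Ω' → ℝ)
    (h : ∀ o', w' o' = ∑ o, if p o = o' then w o else 0) (F : (V → Ω') → ℝ) :
    Ex w (fun ω => F (fun i => p (ω i))) = Ex w' F := by
  unfold Ex
  have h1 : ∀ ω' : V → Ω', ∏ i, w' (ω' i) =
      ∑ ω : V → Ω, if (fun i => p (ω i)) = ω' then ∏ i, w (ω i) else 0 := by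
    intro ω'
    simp only [h]
    rw [Finset.prod_univ_sum (fun _ : V => (Finset.univ : Finset Ω))
      (fun i o => if p o = ω' i then w o else 0), Fintype.piFinset_univ]
    refine Finset.sum_congr rfl fun ω _ => ?_
    split_ifs with hh
    · refine Finset.prod_congr rfl fun i _ => ?_
      rw [if_pos (congrFun hh i)]
    · have : ∃ i, p (ω i) ≠ ω' i := by
        by_contra hc; push Not at hc; exact hh (funext hc)
      obtain ⟨i, hi⟩ := this
      exact Finset.prod_eq_zero (Finset.mem_univ i) (if_neg hi)
  simp only [h1, Finset.sum_mul]
  rw [Finset.sum_comm]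
  refine Finset.sum_congr rfl fun ω _ => ?_
  simp [ite_mul]

/-- Paley–Zygmund -/
lemma Ex_pz {w : Ω → ℝ} (hw : IsW w) (W : (V → Ω) → ℝ) (hW : ∀ ω, 0 ≤ W ω) (C : ℝ)
    (hC : Ex w (fun ω => W ω ^ 2) ≤ C * (Ex w W)^2) (hpos : 0 < Ex w W) (m : ℝ)
    (hm : m ≤ Ex w W / 4) :
    1 ≤ 2 * C * Ex w (fun ω => if m ≤ W ω then 1 else 0) := by
  set A := Ex w W with hA
  set g := Ex w (fun ω => if m ≤ W ω then (1:ℝ) else 0) with hg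
  have hg0 : 0 ≤ g := Ex_nonneg hw fun ω => by positivity
  have h1 : A ≤ A/4 + Ex w (fun ω => W ω * (if m ≤ W ω then (1:ℝ) else 0)) := by
    rw [← Ex_const (V := V) hw (A/4), ← Ex_add]
    refine Ex_mono hw fun ω => ?_
    split_ifs with h
    · linarith
    · push Not at h; linarith
  have h2 := Ex_cs hw W (fun ω => if m ≤ W ω then (1:ℝ) else 0)
  have h3 : Ex w (fun ω => (if m ≤ W ω then (1:ℝ) else 0)^2) = g := by
    rw [hg]; congr 1; ext ω; split_ifs <;> simp
  rw [h3] at h2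
  set B := Ex w (fun ω => W ω * (if m ≤ W ω then (1:ℝ) else 0))
  have h4 : (3/4*A)^2 ≤ B^2 := by
    apply pow_le_pow_left₀ <;> linarith
  have h5 : (3/4*A)^2 ≤ C * A^2 * g := h4.trans (h2.trans (mul_le_mul_of_nonneg_right hC hg0))
  have h6 : A^2 * (9/16) ≤ A^2 * (C * g) := by nlinarith
  have h7 := le_of_mul_le_mul_left h6 (by positivity)
  linarith

/-- Markov -/
lemma Ex_markov {w : Ω → ℝ} (hw : IsW w) (W : (V → Ω) → ℝ) (hW : ∀ ω, 0 ≤ W ω) (m : ℝ) :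
    m * Ex w (fun ω => if m ≤ W ω then (1:ℝ) else 0) ≤ Ex w W := by
  rw [← Ex_mul]
  refine Ex_mono hw fun ω => ?_
  split_ifs with h
  · linarith
  · simpa using hW ω

/-- sums of hyper-bounded nonnegative variables are hyper-bounded -/
lemma Ex_hyper_sum {w : Ω → ℝ} (hw : IsW w) {K : Type} (s : Finset K) (F : K → (V → Ω) → ℝ)
    (hF : ∀ k ω, 0 ≤ F k ω) (C : ℝ) (hC0 : 0 ≤ C)
    (hC : ∀ k ∈ s, Ex w (fun ω => F k ω ^ 2) ≤ C * (Ex w (F k))^2) :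
    Ex w (fun ω => (∑ k ∈ s, F k ω)^2) ≤ C * (∑ k ∈ s, Ex w (F k))^2 := by
  have h1 : ∀ ω, (∑ k ∈ s, F k ω)^2 = ∑ k ∈ s, ∑ l ∈ s, F k ω * F l ω := by
    intro ω; rw [sq, Finset.sum_mul_sum]
  simp only [h1]
  rw [Ex_sum]
  simp only [Ex_sum]
  rw [sq, Finset.sum_mul_sum, Finset.mul_sum]
  refine Finset.sum_le_sum fun k hk => ?_
  rw [Finset.mul_sum]
  refine Finset.sum_le_sum fun l hl => ?_
  have h2 := Ex_cs hw (F k) (F l)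
  have hk0 := Ex_nonneg hw (hF k)
  have hl0 := Ex_nonneg hw (hF l)
  refine abs_le_of_sq_le_sq' ?_ (by positivity) |>.2
  calc _ ≤ _ := h2
    _ ≤ (C * (Ex w (F k))^2) * (C * (Ex w (F l))^2) := by
        apply mul_le_mul (hC k hk) (hC l hl) (Ex_nonneg hw fun ω => by positivity) (by positivity)
    _ = _ := by ring

end ExSec

/-! ### Signs, uniform bits -/
noncomputable def sg (b : Bool) : ℝ := if b then 1 else -1
@[simp] lemma sg_true : sg true = 1 := rfl
@[simp] lemma sg_false : sg false = -1 := by simp [sg]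
lemma sg_sq (b : Bool) : sg b ^ 2 = 1 := by cases b <;> simp
noncomputable def hf (_ : Bool) : ℝ := 1/2
lemma hf_isW : IsW hf := ⟨fun _ => by simp [hf], by simp [hf]⟩

/-! ### Multilinear polynomials, Bonami's inequality, hypercontractivity -/
section Poly
variable {V Ω : Type} [Fintype V] [DecidableEq V] [Fintype Ω]

noncomputable def QQ (c : Finset V → ℝ) (y : V → ℝ) : ℝ := ∑ S, c S * ∏ i ∈ S, y i

noncomputable def QJ (c : Finset V → ℝ) (J : Finset V) (y : V → ℝ) : ℝ :=
  ∑ S ∈ J.powerset, c S * ∏ i ∈ S, y i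

lemma QQ_eq_QJ (c : Finset V → ℝ) (y : V → ℝ) : QQ c y = QJ c Finset.univ y := by
  simp [QQ, QJ]

lemma QJ_insert (c : Finset V → ℝ) (J : Finset V) (j : V) (hj : j ∉ J) (y : V → ℝ) :
    QJ c (insert j J) y = QJ c J y + y j * QJ (fun S => c (insert j S)) J y := by
  unfold QJ
  rw [Finset.sum_powerset_insert hj, Finset.mul_sum]
  congr 1
  refine Finset.sum_congr rfl fun S hS => ?_
  have : j ∉ S := fun h => hj (Finset.mem_powerset.1 hS h)
  rw [Finset.prod_insert this]
  ring

lemma QJ_congr (c : Finset V → ℝ) (J : Finset V) (y y' : V → ℝ) (h : ∀ i ∈ J, y i = y' i) :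
    QJ c J y = QJ c J y' := by
  unfold QJ
  refine Finset.sum_congr rfl fun S hS => ?_
  congr 1
  exact Finset.prod_congr rfl fun i hi => h i (Finset.mem_powerset.1 hS hi)

lemma QJ_update (c : Finset V → ℝ) (J : Finset V) (j : V) (hj : j ∉ J) (ζ : V → Ω → ℝ)
    (ω : V → Ω) (o : Ω) :
    QJ c J (fun i => ζ i (Function.update ω j o i)) = QJ c J (fun i => ζ i (ω i)) := by
  apply QJ_congr
  intro i hi
  have : i ≠ j := fun h => hj (h ▸ hi)
  simp [this]

lemma Ex_step {w : Ω → ℝ} (hw : IsW w) (ζ : V → Ω → ℝ) (c : Finset V → ℝ) (J : Finset V)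
    (j : V) (hj : j ∉ J) (p : ℕ) :
    Ex w (fun ω => QJ c (insert j J) (fun i => ζ i (ω i)) ^ p) =
    Ex w (fun ω => ∑ o, w o * (QJ c J (fun i => ζ i (ω i)) + ζ j o *
      QJ (fun S => c (insert j S)) J (fun i => ζ i (ω i))) ^ p) := by
  rw [Ex_resample hw _ j]
  congr 1; ext ω
  refine Finset.sum_congr rfl fun o _ => ?_
  rw [QJ_insert _ _ _ hj, QJ_update _ _ _ hj, QJ_update _ _ _ hj]
  simp

/-- a system of coordinates with the moments used in the Bonami inequality -/
structure Mom (w : Ω → ℝ) (ζ : V → Ω → ℝ) : Prop where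
  m1 : ∀ i, ∑ o, w o * ζ i o = 0
  m2 : ∀ i, ∑ o, w o * ζ i o ^ 2 = 1
  m3 : ∀ i, ∑ o, w o * ζ i o ^ 3 = 0
  m4 : ∀ i, ∑ o, w o * ζ i o ^ 4 ≤ 9

lemma secondJ {w : Ω → ℝ} (hw : IsW w) {ζ : V → Ω → ℝ} (hζ : Mom w ζ) (J : Finset V) :
    ∀ c : Finset V → ℝ, Ex w (fun ω => QJ c J (fun i => ζ i (ω i)) ^ 2) =
      ∑ S ∈ J.powerset, c S ^ 2 := by
  induction J using Finset.induction_on with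
  | empty => intro c; simp [QJ, Ex_const hw]
  | insert j J hj ih =>
    intro c
    rw [Ex_step hw _ _ _ _ hj, Finset.sum_powerset_insert hj, ← ih, ← ih, ← Ex_add]
    congr 1; ext ω
    generalize QJ c J _ = A
    generalize QJ (fun S => c (insert j S)) J _ = B
    have : ∀ o, w o * (A + ζ j o * B)^2 = A^2 * w o + (2*A*B) * (w o * ζ j o) +
        B^2 * (w o * ζ j o ^ 2) := fun o => by ring
    simp only [this, Finset.sum_add_distrib, ← Finset.mul_sum, hw.sum, hζ.m1, hζ.m2]
    ring

lemma bonamiJ {w : Ω → ℝ} (hw : IsW w) {ζ : V → Ω → ℝ} (hζ : Mom w ζ) (J : Finset V) :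
    ∀ c : Finset V → ℝ, Ex w (fun ω => QJ c J (fun i => ζ i (ω i)) ^ 4) ≤
      (∑ S ∈ J.powerset, 3 ^ S.card * c S ^ 2) ^ 2 := by
  induction J using Finset.induction_on with
  | empty => intro c; simp [QJ, Ex_const hw]; apply le_of_eq; ring
  | insert j J hj ih =>
    intro c
    rw [Ex_step hw _ _ _ _ hj, Finset.sum_powerset_insert hj]
    have h3 : ∑ S ∈ J.powerset, (3:ℝ) ^ (insert j S).card * c (insert j S) ^ 2 =
        3 * ∑ S ∈ J.powerset, 3 ^ S.card * c (insert j S) ^ 2 := by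
      rw [Finset.mul_sum]
      refine Finset.sum_congr rfl fun S hS => ?_
      have : j ∉ S := fun h => hj (Finset.mem_powerset.1 hS h)
      rw [Finset.card_insert_of_notMem this]; ring
    rw [h3]
    have iA := ih c
    have iB := ih (fun S => c (insert j S))
    set a := ∑ S ∈ J.powerset, (3:ℝ) ^ S.card * c S ^ 2
    set b := ∑ S ∈ J.powerset, (3:ℝ) ^ S.card * c (insert j S) ^ 2
    have ha : 0 ≤ a := Finset.sum_nonneg fun S _ => by positivity
    have hb : 0 ≤ b := Finset.sum_nonneg fun S _ => by positivity
    set A := fun ω : V → Ω => QJ c J (fun i => ζ i (ω i))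
    set B := fun ω : V → Ω => QJ (fun S => c (insert j S)) J (fun i => ζ i (ω i))
    have hAB : Ex w (fun ω => A ω ^ 2 * B ω ^ 2) ≤ a * b := by
      refine abs_le_of_sq_le_sq' ?_ (by positivity) |>.2
      refine (Ex_cs hw _ _).trans ?_
      have e : ∀ x : ℝ, (x^2)^2 = x^4 := fun x => by ring
      simp only [e]
      calc _ ≤ a^2 * b^2 := mul_le_mul iA iB (Ex_nonneg hw fun ω => by positivity) (by positivity)
        _ = _ := by ring
    calc _ ≤ Ex w (fun ω => A ω ^ 4 + (6 * (A ω ^ 2 * B ω ^ 2) + 9 * B ω ^ 4)) := by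
          refine Ex_mono hw fun ω => ?_
          show ∑ o, w o * (A ω + ζ j o * B ω) ^ 4 ≤ _
          generalize A ω = A
          generalize B ω = B
          have : ∀ o, w o * (A + ζ j o * B)^4 = A^4 * w o + (4*A^3*B) * (w o * ζ j o) +
            (6*A^2*B^2) * (w o * ζ j o ^ 2) + (4*A*B^3) * (w o * ζ j o ^ 3) +
              B^4 * (w o * ζ j o ^ 4):= fun o => by ring
          simp only [this, Finset.sum_add_distrib, ← Finset.mul_sum, hw.sum, hζ.m1, hζ.m2, hζ.m3]
          have := mul_le_mul_of_nonneg_left (hζ.m4 j) (by positivity : 0 ≤ B^4)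
          nlinarith
      _ = Ex w (fun ω => A ω ^ 4) + (6 * Ex w (fun ω => A ω ^ 2 * B ω ^ 2) +
            9 * Ex w (fun ω => B ω ^ 4)) := by
          rw [Ex_add, Ex_add, Ex_mul, Ex_mul]
      _ ≤ a^2 + (6 * (a*b) + 9 * b^2) := by gcongr
      _ = _ := by ring

lemma second {w : Ω → ℝ} (hw : IsW w) {ζ : V → Ω → ℝ} (hζ : Mom w ζ) (c : Finset V → ℝ) :
    Ex w (fun ω => QQ c (fun i => ζ i (ω i)) ^ 2) = ∑ S, c S ^ 2 := by
  simp only [QQ_eq_QJ]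
  rw [secondJ hw hζ]; simp

lemma bonami {w : Ω → ℝ} (hw : IsW w) {ζ : V → Ω → ℝ} (hζ : Mom w ζ) (c : Finset V → ℝ) (D : ℕ)
    (hc : ∀ S, D < S.card → c S = 0) :
    Ex w (fun ω => QQ c (fun i => ζ i (ω i)) ^ 4) ≤ 9 ^ D * (∑ S, c S ^ 2) ^ 2 := by
  simp only [QQ_eq_QJ]
  refine (bonamiJ hw hζ _ _).trans ?_
  have : (9:ℝ) ^ D * (∑ S, c S ^ 2) ^ 2 = (3 ^ D * ∑ S, c S ^ 2)^2 := by
    rw [mul_pow, ← pow_mul, mul_comm D 2, pow_mul]; norm_num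
  rw [this]
  refine pow_le_pow_left₀ (Finset.sum_nonneg fun S _ => by positivity) ?_ 2
  rw [Finset.mul_sum, Finset.powerset_univ]
  refine Finset.sum_le_sum fun S _ => ?_
  by_cases h : D < S.card
  · simp [hc S h]
  · push Not at h
    gcongr; norm_num

lemma mom_sg : Mom (V := V) hf (fun _ b => sg b) := by
  constructor <;> intro i <;> simp [hf] <;> norm_num

/-- two-point inequality -/
lemma two_point (k : ℕ) (r u v : ℝ) (hr : |r| * (2*k) ≤ 1) :
    ((u + r * v)^(2*k) + (u - r * v)^(2*k)) / 2 ≤ (u^2 + v^2)^k := by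
  have even_sum : ∀ (k : ℕ) (f : ℕ → ℝ), (∀ m, Odd m → f m = 0) →
      ∑ m ∈ Finset.range (2*k+1), f m = ∑ j ∈ Finset.range (k+1), f (2*j) := by
    intro k f hf
    induction k with
    | zero => simp
    | succ k ih =>
      rw [show 2*(k+1)+1 = (2*k+1)+1+1 by ring, Finset.sum_range_succ, Finset.sum_range_succ, ih,
        Finset.sum_range_succ _ (k+1), hf (2*k+1) ⟨k, rfl⟩, add_zero]
      congr 1
  have h1 : ((u + r * v)^(2*k) + (u - r * v)^(2*k)) / 2 =
      ∑ j ∈ Finset.range (k+1), (r*v)^(2*j) * u^(2*k-2*j) * ((2*k).choose (2*j)) := by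
    have e : ∀ j ∈ Finset.range (k+1), 
      (r*v)^(2*j) * u^(2*k-2*j) * ((2*k).choose (2*j) : ℝ) = (fun m => if Even m then
        (r*v)^m * u^(2*k-m) * ((2*k).choose m : ℝ) else 0) (2*j) := by
      intro j _
      simp
    rw [Finset.sum_congr rfl e]
    refine Eq.trans ?_ (even_sum k (fun m => if Even m then
        (r*v)^m * u^(2*k-m) * ((2*k).choose m : ℝ) else 0) ?_)
    · rw [add_comm u, show u - r*v = -(r*v) + u by ring, add_pow, add_pow, ← Finset.sum_add_distrib,
        Finset.sum_div]
      refine Finset.sum_congr rfl fun m _ => ?_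
      rcases Nat.even_or_odd m with h | h
      · simp only [if_pos h, h.neg_pow]; ring
      · simp only [if_neg (Nat.not_even_iff_odd.2 h), h.neg_pow]; ring
    · intro m hm
      simp only [if_neg (Nat.not_even_iff_odd.2 hm)]
  rw [h1, add_comm (u^2), add_pow]
  refine Finset.sum_le_sum fun j hj => ?_
  have hjk : j ≤ k := by simpa [Nat.lt_succ_iff] using hj
  have c1 : ((2*k).choose (2*j) : ℝ) ≤ ((2*k : ℕ):ℝ)^(2*j) := by
    exact_mod_cast Nat.choose_le_pow (2*k) (2*j)
  have c2 : r^(2*j) * ((2*k).choose (2*j) : ℝ) ≤ 1 := by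
    have : r^(2*j) = |r|^(2*j) := by rw [pow_mul, pow_mul, sq_abs]
    rw [this]
    calc _ ≤ |r|^(2*j) * ((2*k : ℕ):ℝ)^(2*j) := by gcongr
      _ = (|r| * (2*k))^(2*j) := by rw [mul_pow]; push_cast; ring
      _ ≤ 1 := pow_le_one₀ (by positivity) hr
  have c3 : (1:ℝ) ≤ k.choose j := by exact_mod_cast Nat.choose_pos hjk
  have e1 : (v^2)^j = v^(2*j) := by rw [pow_mul]
  have e2 : (u^2)^(k-j) = u^(2*k-2*j) := by rw [← pow_mul, Nat.mul_sub]
  rw [e1, e2]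
  have p1 : 0 ≤ v^(2*j) := by rw [pow_mul]; positivity
  have p2 : 0 ≤ u^(2*k-2*j) := by rw [← Nat.mul_sub, pow_mul]; positivity
  calc _ = (v^(2*j) * u^(2*k-2*j)) * (r^(2*j) * ((2*k).choose (2*j) : ℝ)) := by
        rw [mul_pow]; ring
    _ ≤ (v^(2*j) * u^(2*k-2*j)) * (k.choose j) :=
        mul_le_mul_of_nonneg_left (c2.trans c3) (by positivity)

/-- Minkowski-type inequality -/
lemma mink {w : Ω → ℝ} (hw : IsW w) (k : ℕ) (A B : (V → Ω) → ℝ) (a b : ℝ) (ha : 0 < a) (hb : 0 < b)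
    (hA : Ex w (fun ω => A ω ^ (2*k)) ≤ a^k) (hB : Ex w (fun ω => B ω ^ (2*k)) ≤ b^k) :
    Ex w (fun ω => (A ω ^ 2 + B ω ^ 2)^k) ≤ (a+b)^k := by
  have hpt : ∀ ω, (A ω ^ 2 + B ω ^ 2)^k ≤ (a+b)^k * (a/(a+b) * (A ω ^ (2*k) * (a^k)⁻¹) +
      b/(a+b) * (B ω ^ (2*k) * (b^k)⁻¹)) := by
    intro ω
    have h1 : A ω ^2 / a ∈ Set.Ici (0:ℝ) := by simp; positivity
    have h2 : B ω ^2 / b ∈ Set.Ici (0:ℝ) := by simp; positivity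
    have h3 : 0 ≤ a/(a+b) := by positivity
    have h4 : 0 ≤ b/(a+b) := by positivity
    have h5 : a/(a+b) + b/(a+b) = 1 := by field_simp
    have hc := (convexOn_pow (𝕜 := ℝ) k).2 h1 h2 h3 h4 h5
    simp only [smul_eq_mul] at hc
    have e1 : A ω ^ 2 + B ω ^ 2 = (a+b) * (a/(a+b) * (A ω ^2 / a) + b/(a+b) * (B ω ^2 / b)) := by
      field_simp
    rw [e1, mul_pow]
    refine mul_le_mul_of_nonneg_left (hc.trans (le_of_eq ?_)) (by positivity)
    rw [div_pow, div_pow, ← pow_mul, ← pow_mul]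
    simp only [div_eq_mul_inv]
  refine (Ex_mono hw hpt).trans ?_
  rw [Ex_mul, Ex_add, Ex_mul, Ex_mul, Ex_mul_right, Ex_mul_right]
  have hA' : Ex w (fun ω => A ω ^ (2*k)) * (a^k)⁻¹ ≤ 1 := by
    rw [← div_eq_mul_inv, div_le_one (by positivity)]; exact hA
  have hB' : Ex w (fun ω => B ω ^ (2*k)) * (b^k)⁻¹ ≤ 1 := by
    rw [← div_eq_mul_inv, div_le_one (by positivity)]; exact hB
  have : a/(a+b) * (Ex w (fun ω => A ω ^ (2*k)) * (a^k)⁻¹) +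
      b/(a+b) * (Ex w (fun ω => B ω ^ (2*k)) * (b^k)⁻¹) ≤ a/(a+b)*1 + b/(a+b)*1 := by gcongr
  have e : a/(a+b)*1 + b/(a+b)*1 = 1 := by field_simp
  calc _ ≤ (a+b)^k * 1 := mul_le_mul_of_nonneg_left (this.trans e.le) (by positivity)
    _ = _ := by ring

lemma hyperJ (k : ℕ) (r : ℝ) (hr : |r| * (2*k) ≤ 1) (J : Finset V) :
    ∀ c : Finset V → ℝ, Ex hf (fun z => QJ (fun S => r^S.card * c S) J (fun i => sg (z i)) ^ (2*k)) ≤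
      (∑ S ∈ J.powerset, c S ^ 2) ^ k := by
  induction J using Finset.induction_on with
  | empty => intro c; simp [QJ, Ex_const hf_isW, pow_mul]
  | insert j J hj ih =>
    intro c
    rw [Ex_step hf_isW (fun _ b => sg b) _ _ _ hj, Finset.sum_powerset_insert hj]
    have iA := ih c
    have iB := ih (fun S => c (insert j S))
    have hQ : ∀ y, QJ (fun S => r^(insert j S).card * c (insert j S)) J y =
        r * QJ (fun S => r^S.card * c (insert j S)) J y := by
      intro y
      unfold QJ
      rw [Finset.mul_sum]
      refine Finset.sum_congr rfl fun S hS => ?_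
      have : j ∉ S := fun h => hj (Finset.mem_powerset.1 hS h)
      simp only [Finset.card_insert_of_notMem this]; ring
    simp only [hQ]
    set A := fun ω : V → Bool => QJ (fun S => r^S.card * c S) J (fun i => sg (ω i)) with hAdef
    set B := fun ω : V → Bool => QJ (fun S => r^S.card * c (insert j S)) J (fun i => sg (ω i)) with hBdef
    have h1 : Ex hf (fun ω => ∑ o, hf o * (A ω + sg o * (r * B ω))^(2*k)) ≤
        Ex hf (fun ω => (A ω ^ 2 + B ω ^ 2)^k) := by
      refine Ex_mono hf_isW fun ω => ?_
      refine le_trans (le_of_eq ?_) (two_point k r (A ω) (B ω) hr)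
      simp [hf]
      ring
    refine h1.trans ?_
    set a := ∑ S ∈ J.powerset, c S ^ 2
    set b := ∑ S ∈ J.powerset, c (insert j S) ^ 2
    have ha : 0 ≤ a := Finset.sum_nonneg fun S _ => by positivity
    have hb : 0 ≤ b := Finset.sum_nonneg fun S _ => by positivity
    rcases ha.eq_or_lt with ha0 | ha
    · have hz : ∀ S ∈ J.powerset, c S ^ 2 = 0 :=
        (Finset.sum_eq_zero_iff_of_nonneg fun S _ => by positivity).1 ha0.symm
      have : ∀ ω, A ω = 0 := by
        intro ω
        refine Finset.sum_eq_zero fun S hS => ?_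
        have := pow_eq_zero_iff (two_ne_zero) |>.1 (hz S hS)
        simp [this]
      simp only [this, ← ha0]
      simpa [← pow_mul] using iB
    rcases hb.eq_or_lt with hb0 | hb
    · have hz : ∀ S ∈ J.powerset, c (insert j S) ^ 2 = 0 :=
        (Finset.sum_eq_zero_iff_of_nonneg fun S _ => by positivity).1 hb0.symm
      have : ∀ ω, B ω = 0 := by
        intro ω
        refine Finset.sum_eq_zero fun S hS => ?_
        have := pow_eq_zero_iff (two_ne_zero) |>.1 (hz S hS)
        simp [this]
      simp only [this, ← hb0]
      simpa [← pow_mul] using iA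
    exact mink hf_isW k A B a b ha hb iA iB

lemma hyper (k : ℕ) (r : ℝ) (hr : |r| * (2*k) ≤ 1) (c : Finset V → ℝ) :
    Ex hf (fun z => QQ (fun S => r^S.card * c S) (fun i => sg (z i)) ^ (2*k)) ≤
      (∑ S, c S ^ 2) ^ k := by
  simp only [QQ_eq_QJ]
  refine (hyperJ k r hr _ c).trans (le_of_eq ?_)
  simp

/-- Bessel -/
lemma bessel (g : (V → Bool) → ℝ) :
    ∑ S, (Ex hf (fun z => g z * ∏ i ∈ S, sg (z i)))^2 ≤ Ex hf (fun z => g z ^ 2) := by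
  set c : Finset V → ℝ := fun S => Ex hf (fun z => g z * ∏ i ∈ S, sg (z i))
  have h2 := second hf_isW (mom_sg (V := V)) c
  have h1 : Ex hf (fun z => g z * QQ c (fun i => sg (z i))) = ∑ S, c S ^ 2 := by
    simp only [QQ, Finset.mul_sum]
    rw [Ex_sum]
    refine Finset.sum_congr rfl fun S _ => ?_
    rw [sq, ← Ex_mul]
    congr 1; ext z; ring
  have h3 : 0 ≤ Ex hf (fun z => (g z - QQ c (fun i => sg (z i)))^2) :=
    Ex_nonneg hf_isW fun z => by positivity
  have h4 : ∀ z : V → Bool, (g z - QQ c (fun i => sg (z i)))^2 =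
    g z ^ 2 - 2 * (g z * QQ c (fun i => sg (z i))) + QQ c (fun i => sg (z i))^2 := fun z => by ring
  simp only [h4] at h3
  rw [Ex_add, Ex_sub, Ex_mul, h1, h2] at h3
  linarith

/-- noise operator -/
noncomputable def Tn (r : ℝ) (g : (V → Bool) → ℝ) (b : V → Bool) : ℝ :=
  Ex hf (fun x => (∏ i, (1 + r * sg (b i) * sg (x i))) * g x)

lemma Tn_eq (r : ℝ) (g : (V → Bool) → ℝ) (b : V → Bool) :
    Tn r g b = QQ (fun S => r^S.card * Ex hf (fun z => g z * ∏ i ∈ S, sg (z i)))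
      (fun i => sg (b i)) := by
  unfold Tn QQ
  have : ∀ x : V → Bool, (∏ i, (1 + r * sg (b i) * sg (x i))) * g x =
      ∑ S, (r^S.card * ∏ i ∈ S, sg (b i)) * (g x * ∏ i ∈ S, sg (x i)) := by
    intro x
    rw [Finset.prod_one_add, Finset.powerset_univ, Finset.sum_mul]
    refine Finset.sum_congr rfl fun S _ => ?_
    rw [Finset.prod_mul_distrib, Finset.prod_mul_distrib, Finset.prod_const]
    ring
  simp only [this]
  rw [Ex_sum]
  refine Finset.sum_congr rfl fun S _ => ?_
  rw [Ex_mul]; ring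

lemma Tn_hyper (k : ℕ) (r : ℝ) (hr : |r| * (2*k) ≤ 1) (g : (V → Bool) → ℝ) :
    Ex hf (fun b => Tn r g b ^ (2*k)) ≤ (Ex hf (fun z => g z ^ 2))^k := by
  simp only [Tn_eq]
  refine (hyper k r hr _).trans ?_
  exact pow_le_pow_left₀ (Finset.sum_nonneg fun S _ => by positivity) (bessel g) k
end Poly

/-! ### Lindeberg replacement -/
noncomputable def phi (t : ℝ) : ℝ := 1 / (1 + t^2)

lemma phi_nonneg (t : ℝ) : 0 ≤ phi t := by unfold phi; positivity
lemma phi_le_one (t : ℝ) : phi t ≤ 1 := by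
  unfold phi; rw [div_le_one (by positivity)]; nlinarith [sq_nonneg t]

lemma phi_taylor (u h : ℝ) :
    |phi (u+h) - phi u - (-2*u/(1+u^2)^2) * h - ((3*u^2-1)/(1+u^2)^3) * h^2| ≤ |h|^3 := by
  set w := u + h with hw
  have hh : h = w - u := by rw [hw]; ring
  have d1 : 0 < 1 + u^2 := by positivity
  have d2 : 0 < 1 + w^2 := by positivity
  set N := (3*u - u^3) - (3*u^2-1)*w with hN
  have e : phi w - phi u - (-2*u/(1+u^2)^2) * h - ((3*u^2-1)/(1+u^2)^3) * h^2 =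
      h^3 * (N / ((1+u^2)^3 * (1+w^2))) := by
    unfold phi
    rw [hh, hN]
    field_simp
    ring
  rw [e, abs_mul, abs_pow]
  have hN2 : N^2 ≤ (1+u^2)^3 * (1+w^2) := by
    have : (1+u^2)^3 * (1+w^2) = N^2 + ((3*u-u^3)*w + (3*u^2-1))^2 := by rw [hN]; ring
    rw [this]; nlinarith [sq_nonneg ((3*u-u^3)*w + (3*u^2-1))]
  have hP : 1 ≤ (1+u^2)^3 * (1+w^2) := by
    have a1 : 1 ≤ (1+u^2)^3 := one_le_pow₀ (by nlinarith [sq_nonneg u])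
    have a2 : 1 ≤ 1+w^2 := by nlinarith [sq_nonneg w]
    nlinarith
  set P := (1+u^2)^3 * (1+w^2)
  have : |N / P| ≤ 1 := by
    rw [abs_div, abs_of_pos (by linarith : 0 < P), div_le_one (by linarith)]
    refine abs_le_of_sq_le_sq (by nlinarith) (by linarith)
  exact mul_le_of_le_one_right (by positivity) this

noncomputable def infl {V : Type} [Fintype V] [DecidableEq V] (c : Finset V → ℝ) (j : V) : ℝ :=
  ∑ S, if j ∈ S then c S ^ 2 else 0
noncomputable def vari {V : Type} [Fintype V] [DecidableEq V] (c : Finset V → ℝ) : ℝ :=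
  ∑ S, if S.Nonempty then c S ^ 2 else 0

section Lind
variable {V : Type} [Fintype V] [DecidableEq V]

lemma infl_nonneg (c : Finset V → ℝ) (j : V) : 0 ≤ infl c j :=
  Finset.sum_nonneg fun S _ => by positivity
lemma vari_nonneg (c : Finset V → ℝ) : 0 ≤ vari c :=
  Finset.sum_nonneg fun S _ => by positivity

lemma sum_infl (c : Finset V → ℝ) : ∑ j, infl c j = ∑ S, (S.card : ℝ) * c S ^ 2 := by
  unfold infl
  rw [Finset.sum_comm]
  refine Finset.sum_congr rfl fun S _ => ?_
  rw [← Finset.sum_filter]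
  simp

lemma sum_infl_le (c : Finset V → ℝ) (D : ℕ) (hc : ∀ S, D < S.card → c S = 0) :
    ∑ j, infl c j ≤ D * vari c := by
  rw [sum_infl]
  unfold vari
  rw [Finset.mul_sum]
  refine Finset.sum_le_sum fun S _ => ?_
  by_cases h : D < S.card
  · simp [hc S h]
  · push Not at h
    by_cases hS : S.Nonempty
    · rw [if_pos hS]; gcongr
    · rw [Finset.not_nonempty_iff_eq_empty] at hS; simp [hS]

lemma infl_eq (c : Finset V → ℝ) (j : V) :
    ∑ S ∈ (Finset.univ.erase j).powerset, c (insert j S)^2 = infl c j := by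
  unfold infl
  have h := Finset.sum_powerset_insert (Finset.notMem_erase j (Finset.univ : Finset V))
    (fun S => if j ∈ S then c S ^ 2 else 0)
  rw [Finset.insert_erase (Finset.mem_univ j), Finset.powerset_univ] at h
  rw [h]
  have : ∑ S ∈ (Finset.univ.erase j).powerset, (if j ∈ S then c S ^ 2 else 0) = 0 := by
    refine Finset.sum_eq_zero fun S hS => if_neg ?_
    intro hj
    have := Finset.mem_powerset.1 hS hj
    simp at this
  rw [this, zero_add]
  refine Finset.sum_congr rfl fun S _ => ?_
  simp

abbrev Om := Bool × Bool × Bool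
noncomputable def wr (ρ : ℝ) (o : Om) : ℝ := (1 + ρ * sg o.2.1 * sg o.2.2) / 8
noncomputable def Xr (ρ s : ℝ) (o : Om) : ℝ := ρ * sg o.2.1 + s * sg o.1
noncomputable def zt (ρ s : ℝ) (J : Finset V) (i : V) (o : Om) : ℝ :=
  if i ∈ J then Xr ρ s o else sg o.2.2

lemma wr_isW (ρ : ℝ) (h0 : 0 ≤ ρ) (h1 : ρ ≤ 1) : IsW (wr ρ) := by
  constructor
  · rintro ⟨a, b, x⟩
    cases b <;> cases x <;> simp [wr] <;> linarith
  · simp [wr, Fintype.sum_prod_type]; ring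

lemma zt_mom (ρ s : ℝ) (h0 : 0 ≤ ρ) (h1 : ρ ≤ 1) (hs : ρ^2 + s^2 = 1) (J : Finset V) :
    Mom (wr ρ) (zt ρ s J) := by
  have e1 : s^2 = 1 - ρ^2 := by linarith
  constructor <;> intro i <;> by_cases hi : i ∈ J <;>
    simp [wr, zt, Xr, hi, Fintype.sum_prod_type]
  · ring
  · ring_nf; linarith
  · ring
  · ring
  · ring
  · have : s^4 = (1-ρ^2)^2 := by rw [← e1]; ring
    ring_nf
    rw [this, e1]
    nlinarith [sq_nonneg ρ, mul_nonneg h0 h0]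
  · ring_nf; norm_num

lemma Xr_abs (ρ s : ℝ) (h0 : 0 ≤ ρ) (h1 : ρ ≤ 1) (hs : ρ^2 + s^2 = 1) (o : Om) :
    |Xr ρ s o| ≤ 2 := by
  have : |s| ≤ 1 := abs_le_one_iff_mul_self_le_one.2 (by nlinarith)
  rw [abs_le] at this ⊢
  rcases o with ⟨a, b, x⟩
  cases a <;> cases b <;> simp [Xr] <;> constructor <;> linarith [this.1, this.2]

lemma local_step (ρ s : ℝ) (h0 : 0 ≤ ρ) (h1 : ρ ≤ 1) (hs : ρ^2 + s^2 = 1) (e : Bool → ℝ)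
    (he0 : ∀ b, 0 ≤ e b) (he1 : ∀ b, e b ≤ 1) (u h : ℝ) :
    |∑ o : Om, wr ρ o * (e o.2.1 * (phi (u + Xr ρ s o * h) - phi (u + sg o.2.2 * h)))|
      ≤ 9 * |h|^3 := by
  set p1 := (-2*u/(1+u^2)^2)
  set p2 := ((3*u^2-1)/(1+u^2)^3)
  have e1 : s^2 = 1 - ρ^2 := by linarith
  have hzero : ∑ o : Om, wr ρ o * (e o.2.1 * (p1 * h * (Xr ρ s o - sg o.2.2) +
      p2 * h^2 * (Xr ρ s o ^ 2 - sg o.2.2 ^ 2))) = 0 := by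
    simp [wr, Xr, Fintype.sum_prod_type]
    ring_nf
    rw [e1]
    ring
  have hW := wr_isW ρ h0 h1
  rw [← sub_zero (∑ o : Om, _), ← hzero, ← Finset.sum_sub_distrib]
  calc _ ≤ ∑ o : Om, wr ρ o * (9 * |h|^3) := by
        refine (Finset.abs_sum_le_sum_abs _ _).trans (Finset.sum_le_sum fun o _ => ?_)
        rw [← mul_sub, ← mul_sub, abs_mul, abs_mul, abs_of_nonneg (hW.nn o), abs_of_nonneg (he0 _)]
        refine mul_le_mul_of_nonneg_left ?_ (hW.nn o)
        refine (mul_le_of_le_one_left (abs_nonneg _) (he1 _)).trans ?_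
        have t1 := phi_taylor u (Xr ρ s o * h)
        have t2 := phi_taylor u (sg o.2.2 * h)
        have eq : phi (u + Xr ρ s o * h) - phi (u + sg o.2.2 * h) -
          (p1 * h * (Xr ρ s o - sg o.2.2) + p2 * h^2 * (Xr ρ s o ^ 2 - sg o.2.2 ^ 2)) =
          (phi (u + Xr ρ s o * h) - phi u - p1 * (Xr ρ s o * h) - p2 * (Xr ρ s o * h)^2) -
          (phi (u + sg o.2.2 * h) - phi u - p1 * (sg o.2.2 * h) - p2 * (sg o.2.2 * h)^2) := by ring
        rw [eq]
        refine (abs_sub _ _).trans ?_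
        have b1 : |Xr ρ s o * h|^3 ≤ 8 * |h|^3 := by
          rw [abs_mul, mul_pow]
          have : |Xr ρ s o|^3 ≤ 2^3 := pow_le_pow_left₀ (abs_nonneg _) (Xr_abs ρ s h0 h1 hs o) 3
          have h3 : 0 ≤ |h|^3 := by positivity
          nlinarith
        have b2 : |sg o.2.2 * h|^3 = |h|^3 := by
          have : |sg o.2.2| = 1 := by cases o.2.2 <;> simp
          rw [abs_mul, this, one_mul]
        linarith
    _ = _ := by rw [← Finset.sum_mul, hW.sum, one_mul]

noncomputable def Psi (ρ s : ℝ) (c : Finset V → ℝ) (e : (V → Bool) → ℝ) (v ε : ℝ) (J : Finset V) : ℝ :=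
  Ex (wr ρ) (fun ω => e (fun i => (ω i).2.1) *
    phi ((QQ c (fun i => zt ρ s J i (ω i)) - v) / ε))

lemma QQ_split (c : Finset V → ℝ) (y : V → ℝ) (j : V) :
    QQ c y = QJ c (Finset.univ.erase j) y + y j * QJ (fun S => c (insert j S)) (Finset.univ.erase j) y := by
  rw [QQ_eq_QJ, ← QJ_insert _ _ _ (Finset.notMem_erase j _), Finset.insert_erase (Finset.mem_univ j)]

lemma third_moment (ρ s : ℝ) (h0 : 0 ≤ ρ) (h1 : ρ ≤ 1) (hs : ρ^2 + s^2 = 1) (c : Finset V → ℝ)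
    (D : ℕ) (hc : ∀ S, D < S.card → c S = 0) (J : Finset V) (j : V) (l : ℝ) (hl : 0 < l) :
    Ex (wr ρ) (fun ω => |QJ (fun S => c (insert j S)) (Finset.univ.erase j)
      (fun i => zt ρ s J i (ω i))|^3) ≤ l * infl c j + 9^D * infl c j ^ 2 / l := by
  have hW := wr_isW ρ h0 h1
  have hM := zt_mom ρ s h0 h1 hs J
  have h2 := secondJ hW hM (Finset.univ.erase j) (fun S => c (insert j S))
  have h4 := bonamiJ hW hM (Finset.univ.erase j) (fun S => c (insert j S))
  rw [infl_eq] at h2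
  have h4' : (∑ S ∈ (Finset.univ.erase j).powerset, (3:ℝ) ^ S.card * c (insert j S) ^ 2) ^ 2 ≤
      9^D * infl c j ^ 2 := by
    have : (9:ℝ) ^ D * infl c j ^ 2 = (3 ^ D * infl c j)^2 := by
      rw [mul_pow, ← pow_mul, mul_comm D 2, pow_mul]; norm_num
    rw [this]
    refine pow_le_pow_left₀ (Finset.sum_nonneg fun S _ => by positivity) ?_ 2
    rw [← infl_eq, Finset.mul_sum]
    refine Finset.sum_le_sum fun S _ => ?_
    by_cases h : D < (insert j S).card
    · simp [hc _ h]
    · push Not at h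
      have : S.card ≤ D := (Finset.card_le_card (Finset.subset_insert j S)).trans h
      gcongr; norm_num
  have h5 := h4.trans h4'
  calc _ ≤ Ex (wr ρ) (fun ω => l * QJ (fun S => c (insert j S)) (Finset.univ.erase j)
      (fun i => zt ρ s J i (ω i))^2 + QJ (fun S => c (insert j S)) (Finset.univ.erase j)
      (fun i => zt ρ s J i (ω i))^4 * l⁻¹) := by
        refine Ex_mono hW fun ω => ?_
        generalize QJ _ _ _ = B
        have e2 : B^2 = |B|^2 := (sq_abs B).symm
        have e4 : B^4 = |B|^4 := by
          rw [show (4:ℕ) = 2*2 by norm_num, pow_mul, pow_mul, sq_abs]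
        rw [e2, e4]
        have hb : 0 ≤ |B| := abs_nonneg _
        generalize |B| = B at hb
        have : l * B^2 + B^4 * l⁻¹ - B^3 = B^2 * ((l - B/2)^2 + 3/4*B^2) / l := by
          field_simp; ring
        have : 0 ≤ l * B^2 + B^4 * l⁻¹ - B^3 := by rw [this]; positivity
        linarith
    _ = l * infl c j + Ex (wr ρ) (fun ω => QJ (fun S => c (insert j S)) (Finset.univ.erase j)
      (fun i => zt ρ s J i (ω i))^4) * l⁻¹ := by rw [Ex_add, Ex_mul, Ex_mul_right, h2]
    _ ≤ _ := by rw [div_eq_mul_inv]; gcongr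

lemma Psi_step (ρ s : ℝ) (h0 : 0 ≤ ρ) (h1 : ρ ≤ 1) (hs : ρ^2 + s^2 = 1) (c : Finset V → ℝ)
    (D : ℕ) (hc : ∀ S, D < S.card → c S = 0) (e : (V → Bool) → ℝ)
    (he0 : ∀ b, 0 ≤ e b) (he1 : ∀ b, e b ≤ 1) (v ε : ℝ) (hε : 0 < ε)
    (J : Finset V) (j : V) (hj : j ∉ J) (l : ℝ) (hl : 0 < l) :
    |Psi ρ s c e v ε (insert j J) - Psi ρ s c e v ε J| ≤
      9 / ε^3 * (l * infl c j + 9^D * infl c j ^ 2 / l) := by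
  have hW := wr_isW ρ h0 h1
  unfold Psi
  rw [← Ex_sub, Ex_resample hW _ j]
  have key : ∀ ω : V → Om, |∑ o, wr ρ o * (e (fun i => (Function.update ω j o i).2.1) *
      phi ((QQ c (fun i => zt ρ s (insert j J) i (Function.update ω j o i)) - v) / ε) -
      e (fun i => (Function.update ω j o i).2.1) *
      phi ((QQ c (fun i => zt ρ s J i (Function.update ω j o i)) - v) / ε))| ≤
      9 / ε^3 * |QJ (fun S => c (insert j S)) (Finset.univ.erase j)
      (fun i => zt ρ s J i (ω i))|^3 := by
    intro ω
    set A := QJ c (Finset.univ.erase j) (fun i => zt ρ s J i (ω i)) with hA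
    set B := QJ (fun S => c (insert j S)) (Finset.univ.erase j) (fun i => zt ρ s J i (ω i)) with hB
    have hzz : ∀ c' : Finset V → ℝ, ∀ o, QJ c' (Finset.univ.erase j)
        (fun i => zt ρ s (insert j J) i (Function.update ω j o i)) =
        QJ c' (Finset.univ.erase j) (fun i => zt ρ s J i (ω i)) := by
      intro c' o
      rw [QJ_update _ _ _ (Finset.notMem_erase j _)]
      refine QJ_congr _ _ _ _ fun i hi => ?_
      have : i ≠ j := (Finset.mem_erase.1 hi).1
      simp [zt, this]
    have q1 : ∀ o, QQ c (fun i => zt ρ s (insert j J) i (Function.update ω j o i)) =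
        A + Xr ρ s o * B := by
      intro o
      rw [QQ_split c _ j, hzz, hzz]
      simp [zt, hA, hB]
    have q2 : ∀ o, QQ c (fun i => zt ρ s J i (Function.update ω j o i)) = A + sg o.2.2 * B := by
      intro o
      rw [QQ_split c _ j, QJ_update _ _ _ (Finset.notMem_erase j _),
        QJ_update _ _ _ (Finset.notMem_erase j _)]
      simp [zt, hA, hB, hj]
    have q3 : ∀ o, e (fun i => (Function.update ω j o i).2.1) =
        (fun b => e (Function.update (fun i => (ω i).2.1) j b)) o.2.1 := by
      intro o
      show _ = e _
      congr 1; ext i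
      by_cases h : i = j
      · subst h; simp
      · simp [h]
    simp only [q1, q2]
    simp only [q3]
    have := local_step ρ s h0 h1 hs (fun b => e (Function.update (fun i => (ω i).2.1) j b))
      (fun b => he0 _) (fun b => he1 _) ((A - v)/ε) (B/ε)
    have e3 : 9 / ε^3 * |B|^3 = 9 * |B/ε|^3 := by
      rw [abs_div, abs_of_pos hε, div_pow]; ring
    rw [e3]
    refine le_trans (le_of_eq ?_) this
    congr 1
    refine Finset.sum_congr rfl fun o _ => ?_
    rw [mul_sub (e _)]
    congr 3
    · congr 1; ring
    · congr 1; ring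
  refine (Ex_abs_le hW _).trans ((Ex_mono hW key).trans ?_)
  rw [Ex_mul]
  exact mul_le_mul_of_nonneg_left (third_moment ρ s h0 h1 hs c D hc J j l hl) (by positivity)

lemma lindeberg (ρ s : ℝ) (h0 : 0 ≤ ρ) (h1 : ρ ≤ 1) (hs : ρ^2 + s^2 = 1) (c : Finset V → ℝ)
    (D : ℕ) (hc : ∀ S, D < S.card → c S = 0) (e : (V → Bool) → ℝ)
    (he0 : ∀ b, 0 ≤ e b) (he1 : ∀ b, e b ≤ 1) (v ε : ℝ) (hε : 0 < ε) (l : ℝ) (hl : 0 < l) :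
    |Psi ρ s c e v ε Finset.univ - Psi ρ s c e v ε ∅| ≤
      9 / ε^3 * (l * (D * vari c) + 9^D * (∑ j, infl c j ^ 2) / l) := by
  have gen : ∀ J : Finset V, |Psi ρ s c e v ε J - Psi ρ s c e v ε ∅| ≤
      ∑ j ∈ J, 9 / ε^3 * (l * infl c j + 9^D * infl c j ^ 2 / l) := by
    intro J
    induction J using Finset.induction_on with
    | empty => simp
    | insert j J hj ih =>
      rw [Finset.sum_insert hj]
      have := Psi_step ρ s h0 h1 hs c D hc e he0 he1 v ε hε J j hj l hl
      refine (abs_sub_le _ (Psi ρ s c e v ε J) _).trans (add_le_add this ih)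
  refine (gen _).trans ?_
  rw [← Finset.mul_sum, Finset.sum_add_distrib, ← Finset.mul_sum, ← Finset.sum_div, ← Finset.mul_sum]
  have := sum_infl_le c D hc
  gcongr
end Lind

/-! ### Interpolation -/
lemma interp (p : Polynomial ℝ) (n : ℕ) (hdeg : p.natDegree ≤ n) (M : ℕ) (hM : 0 < M)
    (s : Finset ℕ) (hs : s.card = n+1) (hsM : ∀ k ∈ s, k ≤ M) (ε : ℝ)
    (hp : ∀ k ∈ s, |p.eval ((k:ℝ)/M)| ≤ ε) :
    |p.eval 1| ≤ (n+1) * (M^n * ε) := by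
  have hM' : (0:ℝ) < M := by exact_mod_cast hM
  have hinj : Set.InjOn (fun k : ℕ => (k:ℝ)/M) s := by
    intro a _ b _ h
    simp only at h
    field_simp at h
    exact_mod_cast h
  have hd : p.degree < s.card := by
    rw [hs]
    exact lt_of_le_of_lt (Polynomial.degree_le_of_natDegree_le hdeg) (by exact_mod_cast Nat.lt_succ_self n)
  have h1 := Lagrange.eq_interpolate hinj hd
  have h2 := congrArg (Polynomial.eval 1) h1
  rw [Lagrange.interpolate_apply, Polynomial.eval_finsetSum] at h2
  rw [h2]
  refine (Finset.abs_sum_le_sum_abs _ _).trans ?_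
  have : ∑ k ∈ s, (M^n * ε : ℝ) = (n+1) * (M^n * ε) := by
    rw [Finset.sum_const, hs]; simp
  rw [← this]
  refine Finset.sum_le_sum fun k hk => ?_
  rw [Polynomial.eval_mul, Polynomial.eval_C, abs_mul, mul_comm]
  have hb : |Polynomial.eval 1 (Lagrange.basis s (fun k : ℕ => (k:ℝ)/M) k)| ≤ (M:ℝ)^n := by
    unfold Lagrange.basis
    rw [Polynomial.eval_prod, Finset.abs_prod]
    have hc : (s.erase k).card = n := by rw [Finset.card_erase_of_mem hk, hs]; simp
    rw [← hc, ← Finset.prod_const]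
    refine Finset.prod_le_prod (fun _ _ => abs_nonneg _) fun l hl => ?_
    have hlk : l ≠ k := (Finset.mem_erase.1 hl).1
    have hls := (Finset.mem_erase.1 hl).2
    simp only [Lagrange.basisDivisor, Polynomial.eval_mul, Polynomial.eval_C, Polynomial.eval_sub,
      Polynomial.eval_X]
    rw [abs_mul, abs_inv]
    have a1 : |1 - (l:ℝ)/M| ≤ 1 := by
      have : (l:ℝ)/M ≤ 1 := by
        rw [div_le_one hM']; exact_mod_cast hsM l hls
      have : 0 ≤ (l:ℝ)/M := by positivity
      rw [abs_le]; constructor <;> linarith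
    have a2 : 1 / (M:ℝ) ≤ |(k:ℝ)/M - (l:ℝ)/M| := by
      rw [← sub_div, abs_div, abs_of_pos hM']
      gcongr
      have : (1:ℤ) ≤ |(k:ℤ) - l| := Int.one_le_abs (by omega)
      exact_mod_cast this
    have a3 : |(k:ℝ)/M - (l:ℝ)/M|⁻¹ ≤ M := by
      rw [inv_le_comm₀ (lt_of_lt_of_le (by positivity) a2) hM']
      simpa using a2
    calc _ ≤ (M:ℝ) * 1 := mul_le_mul a3 a1 (abs_nonneg _) hM'.le
      _ = _ := mul_one _
  exact mul_le_mul hb (hp k hk) (abs_nonneg _) (by positivity)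

section Nodes
variable {V : Type} [Fintype V] [DecidableEq V]

noncomputable def rt (t : ℝ) : ℝ := 2*t/(1+t^2)
noncomputable def st (t : ℝ) : ℝ := (1-t^2)/(1+t^2)
lemma rt_st (t : ℝ) : rt t ^ 2 + st t ^ 2 = 1 := by
  unfold rt st
  have : 0 < 1 + t^2 := by positivity
  field_simp; ring
lemma rt_nonneg (t : ℝ) (h : 0 ≤ t) : 0 ≤ rt t := by unfold rt; positivity
lemma rt_le (t : ℝ) (h : 0 ≤ t) : rt t ≤ 2*t := by
  unfold rt; apply div_le_self (by positivity); nlinarith [sq_nonneg t]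

open Polynomial in
lemma node_poly (c : Finset V → ℝ) (D : ℕ) (hc : ∀ S, D < S.card → c S = 0) (v : ℝ) (a b : V → ℝ) :
    ∃ p : ℝ[X], p.natDegree ≤ 2*D ∧ ∀ t, p.eval t =
      (1+t^2)^D * (QQ c (fun i => rt t * b i + st t * a i) - v) := by
  refine ⟨∑ S, C (c S) * ((1 + X^2)^(D-S.card) * ∏ i ∈ S, (C (2 * b i) * X + C (a i) * (1 - X^2)))
    - C v * (1+X^2)^D, ?_, ?_⟩
  · have q : (1 + X^2 : ℝ[X]).natDegree ≤ 2 := by compute_degree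
    refine (natDegree_sub_le _ _).trans (max_le ?_ ?_)
    · refine natDegree_sum_le_of_forall_le _ _ fun S _ => ?_
      by_cases h : D < S.card
      · simp [hc S h]
      · push Not at h
        refine (natDegree_C_mul_le _ _).trans (natDegree_mul_le.trans ?_)
        have h1 : ((1 + X^2 : ℝ[X])^(D-S.card)).natDegree ≤ (D-S.card)*2 :=
          natDegree_pow_le.trans (Nat.mul_le_mul_left _ q)
        have h2 : (∏ i ∈ S, (C (2 * b i) * X + C (a i) * (1 - X^2))).natDegree ≤ S.card * 2 := by
          refine (natDegree_prod_le _ _).trans ?_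
          refine (Finset.sum_le_card_nsmul _ _ 2 fun i _ => ?_).trans (by simp)
          compute_degree
        omega
    · refine (natDegree_C_mul_le _ _).trans (natDegree_pow_le.trans ?_)
      have := Nat.mul_le_mul_left D q
      omega
  · intro t
    have d : 0 < 1 + t^2 := by positivity
    simp only [eval_sub, eval_finsetSum, eval_mul, eval_C, eval_pow, eval_add, eval_one, eval_X,
      eval_prod]
    rw [mul_sub, QQ, Finset.mul_sum]
    congr 1
    · refine Finset.sum_congr rfl fun S _ => ?_
      by_cases h : D < S.card
      · simp [hc S h]
      · push Not at h
        have : ∀ i, rt t * b i + st t * a i = (1+t^2)⁻¹ * (2 * b i * t + a i * (1 - t^2)) := by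
          intro i; unfold rt st; field_simp
        simp only [this]
        rw [Finset.prod_mul_distrib, Finset.prod_const, inv_pow]
        have e : (1+t^2)^D = (1+t^2)^(D-S.card) * (1+t^2)^S.card := by
          rw [← pow_add]; congr 1; omega
        rw [e]
        field_simp
        congr 1
        exact Finset.prod_congr rfl fun _ _ => by ring
    · ring

lemma node_count (c : Finset V → ℝ) (D : ℕ) (hc : ∀ S, D < S.card → c S = 0) (v : ℝ) (a b : V → ℝ)
    (K M : ℕ) (hM : 0 < M) (hKM : K ≤ M) (ε' : ℝ)
    (hb : (2*D+1) * (M^(2*D) * ε') < |QQ c b - v|) :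
    (((Finset.Icc 1 K).filter (fun k : ℕ => |QQ c (fun i => rt ((k:ℝ)/M) * b i + st ((k:ℝ)/M) * a i) - v| ≤ ε')).card : ℝ)
      ≤ 2*D := by
  by_contra hcon
  push Not at hcon
  have hcon' : 2*D + 1 ≤ ((Finset.Icc 1 K).filter (fun k : ℕ => |QQ c (fun i => rt ((k:ℝ)/M) * b i + st ((k:ℝ)/M) * a i) - v| ≤ ε')).card := by
    have : 2*D < ((Finset.Icc 1 K).filter (fun k : ℕ => |QQ c (fun i => rt ((k:ℝ)/M) * b i + st ((k:ℝ)/M) * a i) - v| ≤ ε')).card := by exact_mod_cast hcon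
    omega
  obtain ⟨s, hs, hcard⟩ := Finset.exists_subset_card_eq hcon'
  obtain ⟨p, hdeg, hp⟩ := node_poly c D hc v a b
  have hM' : (0:ℝ) < M := by exact_mod_cast hM
  have hkM : ∀ k ∈ s, k ≤ M := fun k hk => by
    have := Finset.mem_filter.1 (hs hk)
    have := Finset.mem_Icc.1 this.1
    omega
  have h1 := interp p (2*D) hdeg M hM s hcard hkM (2^D * ε') (by
    intro k hk
    rw [hp, abs_mul]
    have h2 := (Finset.mem_filter.1 (hs hk)).2
    have h3 : (k:ℝ)/M ≤ 1 := by rw [div_le_one hM']; exact_mod_cast hkM k hk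
    have h4 : 0 ≤ (k:ℝ)/M := by positivity
    rw [abs_of_nonneg (by positivity)]
    refine mul_le_mul ?_ h2 (abs_nonneg _) (by positivity)
    apply pow_le_pow_left₀ (by positivity)
    nlinarith)
  rw [hp] at h1
  have e1 : rt 1 = 1 := by norm_num [rt]
  have e2 : st 1 = 0 := by norm_num [st]
  simp only [e1, e2, one_mul, zero_mul, add_zero] at h1
  rw [abs_mul, abs_of_nonneg (by positivity)] at h1
  norm_num at h1
  have h5 : (2:ℝ)^D * |QQ c b - v| ≤ 2^D * ((2*D+1) * (M^(2*D) * ε')) := by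
    refine h1.trans (le_of_eq ?_)
    ring
  have h6 := le_of_mul_le_mul_left h5 (by positivity)
  have e3 : (fun i => b i) = b := rfl
  linarith

/-- joint law of (b, x) -/
lemma Ex_bx (ρ : ℝ) (e g : (V → Bool) → ℝ) :
    Ex (wr ρ) (fun ω : V → Om => e (fun i => (ω i).2.1) * g (fun i => (ω i).2.2)) =
      Ex hf (fun b => e b * Tn ρ g b) := by
  rw [Ex_map (wr ρ) (fun o => o.2) (fun q : Bool × Bool => (1 + ρ * sg q.1 * sg q.2)/4) (by
    rintro ⟨b, x⟩
    cases b <;> cases x <;> simp [wr, Fintype.sum_prod_type] <;> ring)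
    (fun ω => e (fun i => (ω i).1) * g (fun i => (ω i).2))]
  unfold Tn Ex
  rw [← (Equiv.arrowProdEquivProdArrow V (fun _ => Bool) (fun _ => Bool)).symm.sum_comp, Fintype.sum_prod_type]
  refine Finset.sum_congr rfl fun b _ => ?_
  simp only [Finset.mul_sum]
  refine Finset.sum_congr rfl fun x _ => ?_
  have : ∀ i, (1 + ρ * sg (b i) * sg (x i))/4 = hf (b i) * (hf (x i) * (1 + ρ * sg (b i) * sg (x i))) := by
    intro i; simp [hf]; ring
  simp only [Equiv.arrowProdEquivProdArrow, Equiv.coe_fn_symm_mk, this, Finset.prod_mul_distrib]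
  ring

lemma Ex_b (ρ : ℝ) (e : (V → Bool) → ℝ) :
    Ex (wr ρ) (fun ω : V → Om => e (fun i => (ω i).2.1)) = Ex hf e := by
  rw [Ex_map (wr ρ) (fun o => o.2.1) hf (by
    rintro b; cases b <;> simp [wr, hf, Fintype.sum_prod_type] <;> ring) e]

noncomputable def qt (_ : Bool × Bool) : ℝ := 1/4
lemma qt_isW : IsW qt := ⟨fun _ => by simp [qt], by simp [qt]⟩
lemma Ex_ab (ρ : ℝ) (F : (V → Bool × Bool) → ℝ) :
    Ex (wr ρ) (fun ω : V → Om => F (fun i => ((ω i).1, (ω i).2.1))) = Ex qt F := by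
  rw [Ex_map (wr ρ) (fun o => (o.1, o.2.1)) qt (by
    rintro ⟨a, b⟩; cases a <;> cases b <;> simp [wr, qt, Fintype.sum_prod_type] <;> ring) F]
lemma Ex_qb (e : (V → Bool) → ℝ) :
    Ex qt (fun ω : V → Bool × Bool => e (fun i => (ω i).2)) = Ex hf e := by
  rw [Ex_map qt (fun o => o.2) hf (by
    rintro b; cases b <;> simp [qt, hf, Fintype.sum_prod_type] <;> ring) e]

/-- Jensen on the set weighted by `e` -/
lemma Ex_jensen {Ω : Type} [Fintype Ω] {w : Ω → ℝ} (hw : IsW w) (e T : (V → Ω) → ℝ)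
    (he0 : ∀ b, 0 ≤ e b) (he1 : ∀ b, e b ≤ 1) (n : ℕ) (hn : Even n) (hg : 0 < Ex w e) :
    (Ex w (fun b => e b * T b) / Ex w e)^n ≤ Ex w (fun b => T b ^ n) / Ex w e := by
  set γ := Ex w e with hγ
  have hp : ∀ ω : V → Ω, 0 ≤ ∏ i, w (ω i) := fun ω => Finset.prod_nonneg fun i _ => hw.nn _
  have := Real.pow_arith_mean_le_arith_mean_pow_of_even Finset.univ
    (fun ω : V → Ω => (∏ i, w (ω i)) * e ω / γ) T
    (fun ω _ => div_nonneg (mul_nonneg (hp ω) (he0 ω)) hg.le) (by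
      rw [← Finset.sum_div]; exact div_self hg.ne') hn
  have e1 : Ex w (fun b => e b * T b) / γ = ∑ ω, (∏ i, w (ω i)) * e ω / γ * T ω := by
    unfold Ex; rw [Finset.sum_div]; refine Finset.sum_congr rfl fun _ _ => by ring
  rw [e1]
  refine this.trans ?_
  unfold Ex
  rw [Finset.sum_div]
  refine Finset.sum_le_sum fun ω _ => ?_
  have : 0 ≤ T ω ^ n := hn.pow_nonneg _
  rw [div_mul_eq_mul_div]
  refine div_le_div_of_nonneg_right ?_ hg.le
  rw [mul_assoc]
  exact mul_le_mul_of_nonneg_left (mul_le_of_le_one_left this (he1 ω)) (hp ω)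
end Nodes

/-! ### Anticoncentration of regular polynomials -/
def MM (D : ℕ) : ℕ := 20000*D^2
def etaI (D : ℕ) : ℕ := 40*(2*D+1)*(MM D)^(2*D)
def kapI (D : ℕ) : ℕ := 2000*(D+1)*9^D*(etaI D)^3
def tauI (D : ℕ) : ℕ := (kapI D)^2*9^D

section Reg
variable {V : Type} [Fintype V] [DecidableEq V]

/-- subtract a constant -/
noncomputable def shiftc (c : Finset V → ℝ) (v : ℝ) (S : Finset V) : ℝ := if S = ∅ then c S - v else c S

lemma QQ_shiftc (c : Finset V → ℝ) (v : ℝ) (y : V → ℝ) : QQ (shiftc c v) y = QQ c y - v := by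
  unfold QQ
  have : ∀ S : Finset V, shiftc c v S * ∏ i ∈ S, y i = c S * ∏ i ∈ S, y i - if S = ∅ then v else 0 := by
    intro S
    unfold shiftc
    split_ifs with h
    · subst h; simp
    · ring
  simp [this, Finset.sum_sub_distrib]

lemma vari_le_shiftc (c : Finset V → ℝ) (v : ℝ) : vari c ≤ ∑ S, shiftc c v S ^ 2 := by
  unfold vari
  refine Finset.sum_le_sum fun S _ => ?_
  unfold shiftc
  split_ifs with h1 h2
  · subst h2; simp at h1
  · exact le_rfl
  · positivity
  · positivity

lemma shiftc_deg (c : Finset V → ℝ) (v : ℝ) (D : ℕ) (hc : ∀ S, D < S.card → c S = 0) :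
    ∀ S, D < S.card → shiftc c v S = 0 := by
  intro S hS
  have : S ≠ ∅ := by rintro rfl; simp at hS
  simp [shiftc, this, hc S hS]

lemma pz_poly (c : Finset V → ℝ) (D : ℕ) (hc : ∀ S, D < S.card → c S = 0) (hv : 0 < vari c) (v m : ℝ)
    (hm : m ≤ (∑ S, shiftc c v S ^ 2) / 4) :
    1 ≤ 2 * 9^D * Ex hf (fun b : V → Bool => if m ≤ (QQ c (fun i => sg (b i)) - v)^2 then (1:ℝ) else 0) := by
  have h2 := second hf_isW (mom_sg (V := V)) (shiftc c v)
  have h4 := bonami hf_isW (mom_sg (V := V)) (shiftc c v) D (shiftc_deg c v D hc)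
  simp only [QQ_shiftc] at h2 h4
  have hA : 0 < ∑ S, shiftc c v S ^ 2 := lt_of_lt_of_le hv (vari_le_shiftc c v)
  refine Ex_pz hf_isW (fun b : V → Bool => (QQ c (fun i => sg (b i)) - v)^2) (fun _ => by positivity)
    (9^D) ?_ (by rw [h2]; exact hA) m (by rw [h2]; exact hm)
  rw [h2]
  refine le_trans (le_of_eq ?_) h4
  congr 1; ext b; ring

lemma regular_core (D : ℕ) (hD : 1 ≤ D) (c : Finset V → ℝ) (hc : ∀ S, D < S.card → c S = 0)
    (hv : 0 < vari c) (hreg : ∑ j, infl c j ^ 2 * tauI D ≤ vari c ^ 2) (v : ℝ)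
    (e : (V → Bool) → ℝ) (A : ℝ) (hA0 : 0 < A) (hA : A^2 = ∑ S, shiftc c v S ^ 2)
    (he : e = fun b : V → Bool => if A^2/4 ≤ (QQ c (fun i => sg (b i)) - v)^2 then (1:ℝ) else 0) :
    ∃ ρ : ℝ, 0 ≤ ρ ∧ |ρ| * (2 * (50*D : ℕ)) ≤ 1 ∧ 0.96 * Ex hf e ≤ Ex hf (fun b => e b *
      Tn ρ (fun x => if QQ c (fun i => sg (x i)) ≠ v then (1:ℝ) else 0) b) := by
  have he0 : ∀ b, 0 ≤ e b := fun b => by rw [he]; positivity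
  have he1 : ∀ b, e b ≤ 1 := fun b => by rw [he]; dsimp only; split_ifs <;> norm_num
  set γ := Ex hf e with hγdef
  have hpz : 1 ≤ 2 * 9^D * γ := by
    rw [hγdef, he]
    exact pz_poly c D hc hv v (A^2/4) (by rw [hA])
  have hγ : 0 < γ := by
    by_contra h
    push Not at h
    have : 2 * 9^D * γ ≤ 0 := mul_nonpos_of_nonneg_of_nonpos (by positivity) h
    linarith
  have hDr : (1:ℝ) ≤ D := by exact_mod_cast hD
  have hMpos : 0 < MM D := by unfold MM; positivity
  have hMr : (MM D : ℝ) = 20000 * D^2 := by unfold MM; push_cast; ring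
  have hMr0 : (0:ℝ) < MM D := by exact_mod_cast hMpos
  set H : ℝ := (etaI D : ℝ) with hH
  have hHeq : H = 40 * (2*D+1) * (MM D : ℝ)^(2*D) := by rw [hH]; unfold etaI; push_cast; ring
  have hH0 : 0 < H := by rw [hHeq]; positivity
  set ε : ℝ := A / H with hεdef
  have hε : 0 < ε := by positivity
  -- averaging over nodes
  have hnode : ∃ k ∈ Finset.Icc 1 (100*D), Ex (wr (rt ((k:ℝ)/MM D))) (fun ω : V → Om =>
      e (fun i => (ω i).2.1) * (if |QQ c (fun i => Xr (rt ((k:ℝ)/MM D)) (st ((k:ℝ)/MM D)) (ω i)) - v| ≤ 10 * ε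
        then (1:ℝ) else 0)) ≤ γ / 50 := by
    by_contra hcon
    push Not at hcon
    have h1 : ∑ k ∈ Finset.Icc 1 (100*D), γ/50 < ∑ k ∈ Finset.Icc 1 (100*D),
      Ex (wr (rt ((k:ℝ)/MM D))) (fun ω : V → Om =>
      e (fun i => (ω i).2.1) * (if |QQ c (fun i => Xr (rt ((k:ℝ)/MM D)) (st ((k:ℝ)/MM D)) (ω i)) - v| ≤ 10 * ε
        then (1:ℝ) else 0)) :=
      Finset.sum_lt_sum_of_nonempty ⟨1, by simp; omega⟩ hcon
    have h2 : ∀ k : ℕ, Ex (wr (rt ((k:ℝ)/MM D))) (fun ω : V → Om =>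
      e (fun i => (ω i).2.1) * (if |QQ c (fun i => Xr (rt ((k:ℝ)/MM D)) (st ((k:ℝ)/MM D)) (ω i)) - v| ≤ 10 * ε
        then (1:ℝ) else 0)) = Ex qt (fun ω : V → Bool × Bool => e (fun i => (ω i).2) *
        (if |QQ c (fun i => rt ((k:ℝ)/MM D) * sg (ω i).2 + st ((k:ℝ)/MM D) * sg (ω i).1) - v| ≤ 10 * ε
        then (1:ℝ) else 0)) := by
      intro k
      rw [← Ex_ab (rt ((k:ℝ)/MM D))]
      rfl
    simp only [h2] at h1
    rw [← Ex_sum] at h1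
    have h3 : Ex qt (fun ω : V → Bool × Bool => ∑ k ∈ Finset.Icc 1 (100*D), e (fun i => (ω i).2) *
        (if |QQ c (fun i => rt ((k:ℝ)/MM D) * sg (ω i).2 + st ((k:ℝ)/MM D) * sg (ω i).1) - v| ≤ 10 * ε
        then (1:ℝ) else 0)) ≤ Ex qt (fun ω : V → Bool × Bool => (2*D) * e (fun i => (ω i).2)) := by
      refine Ex_mono qt_isW fun ω => ?_
      rw [← Finset.mul_sum]
      by_cases hb : A^2/4 ≤ (QQ c (fun i => sg (ω i).2) - v)^2
      · have e1 : e (fun i => (ω i).2) = 1 := by rw [he]; simp only [if_pos hb]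
        rw [e1, one_mul, mul_one, ← Finset.sum_filter, Finset.sum_const, nsmul_eq_mul, mul_one]
        refine node_count c D hc v _ _ _ _ hMpos ?_ _ ?_
        · unfold MM; nlinarith
        · have : A/2 ≤ |QQ c (fun i => sg (ω i).2) - v| := by
            refine abs_le_of_sq_le_sq' ?_ (abs_nonneg _) |>.2
            rw [sq_abs]; linarith
          refine lt_of_lt_of_le ?_ this
          rw [hεdef, hHeq]
          have : (2*(D:ℝ)+1) * ((MM D : ℝ)^(2*D) * (10 * (A / (40 * (2*D+1) * (MM D : ℝ)^(2*D))))) = A/4 := by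
            field_simp; norm_num
          rw [this]; linarith
      · have e1 : e (fun i => (ω i).2) = 0 := by rw [he]; simp only [if_neg hb]
        rw [e1]; simp
    rw [Ex_mul, Ex_qb] at h3
    rw [Finset.sum_const, Nat.card_Icc, nsmul_eq_mul] at h1
    push_cast at h1
    have : (100*(D:ℝ)) * (γ/50) = 2*D*γ := by ring
    linarith
  obtain ⟨k, hk, hGk⟩ := hnode
  set t : ℝ := (k:ℝ)/MM D with ht
  have ht0 : 0 ≤ t := by positivity
  have hkD : (k:ℝ) ≤ 100*D := by exact_mod_cast (Finset.mem_Icc.1 hk).2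
  have htle : t * (200 * D) ≤ 1 := by
    rw [ht, hMr, div_mul_eq_mul_div, div_le_one (by positivity)]
    nlinarith
  set ρ := rt t with hρ
  have hρ0 : 0 ≤ ρ := rt_nonneg t ht0
  have hρ2 : ρ ≤ 2*t := rt_le t ht0
  have hρ1 : ρ ≤ 1 := by nlinarith
  have hW := wr_isW ρ hρ0 hρ1
  refine ⟨ρ, hρ0, ?_, ?_⟩
  · rw [abs_of_nonneg hρ0]; push_cast
    nlinarith
  rw [← Ex_bx]
  -- Psi univ
  have hP1 : Psi ρ (st t) c e v ε Finset.univ ≤ γ/50 + γ/101 := by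
    have : Psi ρ (st t) c e v ε Finset.univ ≤ Ex (wr ρ) (fun ω : V → Om =>
      e (fun i => (ω i).2.1) * (if |QQ c (fun i => Xr ρ (st t) (ω i)) - v| ≤ 10 * ε
        then (1:ℝ) else 0) + e (fun i => (ω i).2.1) * (1/101)) := by
      refine Ex_mono hW fun ω => ?_
      rw [← mul_add]
      refine mul_le_mul_of_nonneg_left ?_ (he0 _)
      simp only [zt, Finset.mem_univ, if_true]
      split_ifs with h
      · have := phi_le_one ((QQ c (fun i => Xr ρ (st t) (ω i)) - v)/ε)
        linarith
      · push Not at h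
        rw [zero_add]
        unfold phi
        apply one_div_le_one_div_of_le (by norm_num)
        have h10 : 10 ≤ |(QQ c (fun i => Xr ρ (st t) (ω i)) - v)/ε| := by
          rw [abs_div, abs_of_pos hε, le_div_iff₀ hε]; exact h.le
        have := pow_le_pow_left₀ (by norm_num) h10 2
        rw [sq_abs] at this
        linarith
    rw [Ex_add, Ex_mul_right, Ex_b] at this
    linarith
  have hP2 : Ex (wr ρ) (fun ω : V → Om => e (fun i => (ω i).2.1)) - Ex (wr ρ) (fun ω : V → Om => e (fun i => (ω i).2.1) *
      (fun x => if QQ c (fun i => sg (x i)) ≠ v then (1:ℝ) else 0) (fun i => (ω i).2.2)) ≤ Psi ρ (st t) c e v ε ∅ := by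
    rw [← Ex_sub]
    refine Ex_mono hW fun ω => ?_
    simp only [zt, Finset.notMem_empty, if_false]
    by_cases h : QQ c (fun i => sg (ω i).2.2) = v
    · simp [h, phi]
    · simp only [ne_eq, h, not_false_eq_true, if_true, mul_one, sub_self]
      exact mul_nonneg (he0 _) (phi_nonneg _)
  rw [Ex_b] at hP2
  -- Lindeberg
  set Kp : ℝ := (kapI D : ℝ) with hKp
  have hKeq : Kp = 2000*(D+1)*9^D*H^3 := by rw [hKp]; unfold kapI; push_cast; rw [hH]
  have hK0 : 0 < Kp := by rw [hKeq]; positivity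
  set σ := Real.sqrt (vari c) with hσ
  have hσ0 : 0 < σ := Real.sqrt_pos.2 hv
  have hσ2 : σ^2 = vari c := Real.sq_sqrt hv.le
  have hσA : σ ≤ A := by
    refine abs_le_of_sq_le_sq' ?_ hA0.le |>.2
    rw [hσ2, hA]; exact vari_le_shiftc c v
  have hL := lindeberg ρ (st t) hρ0 hρ1 (rt_st t) c D hc e he0 he1 v ε hε (σ/Kp) (by positivity)
  have htau : (tauI D : ℝ) = Kp^2 * 9^D := by rw [hKp]; unfold tauI; push_cast; ring
  rw [← Finset.sum_mul, htau] at hreg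
  have b1 : 9^D * (∑ j, infl c j ^ 2) / (σ/Kp) ≤ σ^3/Kp := by
    rw [div_le_div_iff₀ (by positivity) hK0]
    have : σ^3 * (σ/Kp) = (σ^2)^2/Kp := by ring
    rw [this, le_div_iff₀ hK0, hσ2]
    calc _ = (∑ j, infl c j ^ 2) * (Kp^2 * 9^D) := by ring
      _ ≤ _ := hreg
  have b2 : σ/Kp * (D * vari c) = D * σ^3/Kp := by rw [← hσ2]; ring
  have b3 : 9 / ε^3 * (σ/Kp * (D * vari c) + 9^D * (∑ j, infl c j ^ 2) / (σ/Kp)) ≤ γ/100 := by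
    calc _ ≤ 9 / ε^3 * (D * σ^3/Kp + σ^3/Kp) := by rw [b2]; gcongr
      _ ≤ 9 / ε^3 * (D * A^3/Kp + A^3/Kp) := by gcongr
      _ = 9 / (2000 * 9^D) := by
          rw [hεdef, hKeq]; field_simp
      _ ≤ γ/100 := by
          rw [div_le_div_iff₀ (by positivity) (by norm_num)]
          nlinarith
  have hL2 := (abs_le.1 (hL.trans b3)).1
  linarith

/-- Anticoncentration for regular polynomials. -/
theorem regular_ac (D : ℕ) (hD : 1 ≤ D) (c : Finset V → ℝ) (hc : ∀ S, D < S.card → c S = 0)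
    (hv : 0 < vari c) (hreg : ∑ j, infl c j ^ 2 * tauI D ≤ vari c ^ 2) (v : ℝ) :
    Ex hf (fun x : V → Bool => if QQ c (fun i => sg (x i)) = v then (1:ℝ) else 0) ≤ 1/5 := by
  have hS : 0 < ∑ S, shiftc c v S ^ 2 := lt_of_lt_of_le hv (vari_le_shiftc c v)
  set A := Real.sqrt (∑ S, shiftc c v S ^ 2) with hAdef
  have hA0 : 0 < A := Real.sqrt_pos.2 hS
  have hA : A^2 = ∑ S, shiftc c v S ^ 2 := Real.sq_sqrt hS.le
  set e : (V → Bool) → ℝ := fun b : V → Bool => if A^2/4 ≤ (QQ c (fun i => sg (b i)) - v)^2 then (1:ℝ) else 0 with he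
  set g : (V → Bool) → ℝ := fun x => if QQ c (fun i => sg (x i)) ≠ v then (1:ℝ) else 0 with hg
  obtain ⟨ρ, hρ0, hρ1, hmain⟩ := regular_core D hD c hc hv hreg v e A hA0 hA he
  have he0 : ∀ b, 0 ≤ e b := fun b => by rw [he]; positivity
  have he1 : ∀ b, e b ≤ 1 := fun b => by rw [he]; dsimp only; split_ifs <;> norm_num
  have hpz : 1 ≤ 2 * 9^D * Ex hf e := pz_poly c D hc hv v (A^2/4) (by rw [hA])
  have hγ : 0 < Ex hf e := by
    by_contra h
    push Not at h
    have : 2 * 9^D * Ex hf e ≤ 0 := mul_nonpos_of_nonneg_of_nonpos (by positivity) h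
    linarith
  set γ := Ex hf e with hγdef
  have hJ := Ex_jensen hf_isW e (Tn ρ g) he0 he1 (2*(50*D)) (by simp) hγ
  have hT := Tn_hyper (50*D) ρ hρ1 g
  have hg2 : Ex hf (fun z => g z ^ 2) = Ex hf g := by
    congr 1; ext z; rw [hg]; dsimp only; split_ifs <;> norm_num
  rw [hg2] at hT
  set δ := Ex hf g with hδ
  have hδ0 : 0 ≤ δ := Ex_nonneg hf_isW fun z => by rw [hg]; positivity
  have h1 : (0.96:ℝ)^(2*(50*D)) ≤ δ^(50*D) / γ := by
    refine le_trans ?_ (hJ.trans (div_le_div_of_nonneg_right hT hγ.le))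
    refine pow_le_pow_left₀ (by norm_num) ?_ _
    rw [le_div_iff₀ hγ]; exact hmain
  have h2 : (0.96:ℝ)^(2*(50*D)) ≤ (18 * δ^50)^D := by
    refine h1.trans ?_
    rw [div_le_iff₀ hγ, mul_pow, ← pow_mul]
    have : (1:ℝ) ≤ 18^D * γ := by
      have h18 : (2:ℝ) * 9^D ≤ 18^D := by
        rw [show (18:ℝ) = 2*9 by norm_num, mul_pow]
        have : (2:ℝ) ≤ 2^D := by
          calc (2:ℝ) = 2^1 := by norm_num
            _ ≤ 2^D := pow_le_pow_right₀ (by norm_num) hD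
        gcongr
      calc (1:ℝ) ≤ _ := hpz
        _ ≤ _ := by gcongr
    calc δ^(50*D) = δ^(50*D) * 1 := by ring
      _ ≤ δ^(50*D) * (18^D * γ) := by gcongr
      _ = _ := by ring
  have h3 : (0.96:ℝ)^100 ≤ 18 * δ^50 := by
    have : (0.96:ℝ)^(2*(50*D)) = (0.96^100)^D := by rw [← pow_mul]; congr 1; ring
    rw [this] at h2
    exact le_of_pow_le_pow_left₀ (by omega) (by positivity) h2
  have h4 : 4/5 ≤ δ := by
    by_contra h
    push Not at h
    have : δ^50 ≤ (4/5)^50 := pow_le_pow_left₀ hδ0 h.le 50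
    norm_num at h3 this
    linarith
  have h5 : Ex hf (fun x : V → Bool => if QQ c (fun i => sg (x i)) = v then (1:ℝ) else 0) = 1 - δ := by
    have h1' : Ex hf (fun _ : V → Bool => (1:ℝ)) = 1 := Ex_const hf_isW 1
    rw [eq_sub_iff_add_eq, hδ, ← Ex_add]
    refine Eq.trans ?_ h1'
    congr 1; ext x; rw [hg]; dsimp only
    by_cases h : QQ c (fun i => sg (x i)) = v <;> simp [h]
  rw [h5]; linarith
end Reg

/-! ### Restrictions -/
section Restr
variable {V Ω : Type} [Fintype V] [DecidableEq V] [Fintype Ω]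

lemma Ex_piecewise {w : Ω → ℝ} (hw : IsW w) (H : Finset V) :
    ∀ F : (V → Ω) → ℝ, Ex w (fun ρ => Ex w (fun y => F (H.piecewise ρ y))) = Ex w F := by
  induction H using Finset.induction_on with
  | empty => intro F; simp [Ex_const hw]
  | insert j H hj ih =>
    intro F
    rw [Ex_resample hw _ j, ← ih F]
    congr 1; ext ρ
    rw [Ex_resample hw (fun y => F (H.piecewise ρ y)) j, Ex_sum]
    refine Finset.sum_congr rfl fun o _ => ?_
    rw [← Ex_mul]
    congr 1; ext y
    congr 2
    ext i
    by_cases hij : i = j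
    · subst hij; simp [Finset.piecewise, hj]
    · by_cases hi : i ∈ H <;> simp [Finset.piecewise, hij, hi]

lemma sum_split (H : Finset V) (g : Finset V → ℝ) :
    ∑ S, g S = ∑ S' : Finset V, ∑ T : Finset V, if T ⊆ H ∧ Disjoint S' H then g (S' ∪ T) else 0 := by
  rw [← Finset.sum_product', ← Finset.sum_filter]
  refine Finset.sum_nbij' (fun S => (S \ H, S ∩ H)) (fun p => p.1 ∪ p.2) ?_ ?_ ?_ ?_ ?_
  · intro S _; simp [Finset.sdiff_disjoint]
  · intro p _; simp
  · intro S _; simp [Finset.sdiff_union_inter]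
  · rintro ⟨S', T⟩ h
    simp only [Finset.univ_product_univ, Finset.mem_filter, Finset.mem_univ, true_and] at h
    obtain ⟨h1, h2⟩ := h
    rw [Finset.disjoint_left] at h2
    ext i <;> simp <;> grind
  · intro S _; simp [Finset.sdiff_union_inter]

noncomputable def cc (c : Finset V → ℝ) (H S' T : Finset V) : ℝ :=
  if T ⊆ H ∧ Disjoint S' H then c (S' ∪ T) else 0

noncomputable def rs (c : Finset V → ℝ) (H : Finset V) (ρ : V → Bool) (S' : Finset V) : ℝ :=
  QQ (cc c H S') (fun i => sg (ρ i))

lemma QQ_rs (c : Finset V → ℝ) (H : Finset V) (ρ y : V → Bool) :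
    QQ (rs c H ρ) (fun i => sg (y i)) = QQ c (fun i => sg (H.piecewise ρ y i)) := by
  unfold QQ rs QQ
  rw [sum_split H (fun S => c S * ∏ i ∈ S, sg (H.piecewise ρ y i))]
  refine Finset.sum_congr rfl fun S' _ => ?_
  rw [Finset.sum_mul]
  refine Finset.sum_congr rfl fun T _ => ?_
  unfold cc
  split_ifs with h
  · have hd : Disjoint S' T := Finset.disjoint_of_subset_right h.1 h.2
    rw [Finset.prod_union hd]
    have e1 : ∏ i ∈ S', sg (H.piecewise ρ y i) = ∏ i ∈ S', sg (y i) := by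
      refine Finset.prod_congr rfl fun i hi => ?_
      rw [Finset.piecewise_eq_of_notMem _ _ _ (Finset.disjoint_left.1 h.2 hi)]
    have e2 : ∏ i ∈ T, sg (H.piecewise ρ y i) = ∏ i ∈ T, sg (ρ i) := by
      refine Finset.prod_congr rfl fun i hi => ?_
      rw [Finset.piecewise_eq_of_mem _ _ _ (h.1 hi)]
    rw [e1, e2]; ring
  · simp

lemma cc_deg (c : Finset V → ℝ) (H S' : Finset V) (D : ℕ) (hc : ∀ S, D < S.card → c S = 0) :
    ∀ T, D < T.card → cc c H S' T = 0 := by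
  intro T hT
  unfold cc
  split_ifs with h
  · exact hc _ (lt_of_lt_of_le hT (Finset.card_le_card Finset.subset_union_right))
  · rfl

lemma rs_deg (c : Finset V → ℝ) (H : Finset V) (ρ : V → Bool) (D : ℕ) (hc : ∀ S, D < S.card → c S = 0) :
    ∀ S', D < S'.card → rs c H ρ S' = 0 := by
  intro S' hS'
  unfold rs QQ
  refine Finset.sum_eq_zero fun T _ => ?_
  unfold cc
  split_ifs with h
  · rw [hc _ (lt_of_lt_of_le hS' (Finset.card_le_card Finset.subset_union_left)), zero_mul]
  · simp

lemma rs_top (c : Finset V → ℝ) (H : Finset V) (ρ : V → Bool) (M : Finset V)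
    (hc : ∀ S, M.card < S.card → c S = 0) (hM : Disjoint M H) : rs c H ρ M = c M := by
  unfold rs QQ
  rw [Finset.sum_eq_single ∅]
  · simp [cc, hM]
  · intro T _ hT
    unfold cc
    split_ifs with h
    · rw [hc, zero_mul]
      rw [Finset.card_union_of_disjoint (Finset.disjoint_of_subset_right h.1 h.2)]
      have := Finset.card_pos.2 (Finset.nonempty_iff_ne_empty.2 hT)
      omega
    · simp
  · simp

lemma rs_not_disj (c : Finset V → ℝ) (H : Finset V) (ρ : V → Bool) (S' : Finset V)
    (h : ¬ Disjoint S' H) : rs c H ρ S' = 0 := by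
  unfold rs QQ cc
  simp [h]

lemma Ex_rs_sq (c : Finset V → ℝ) (H S' : Finset V) :
    Ex hf (fun ρ => rs c H ρ S' ^ 2) = ∑ T, cc c H S' T ^ 2 := second hf_isW mom_sg _

lemma Ex_rs_four (c : Finset V → ℝ) (H S' : Finset V) (D : ℕ) (hc : ∀ S, D < S.card → c S = 0) :
    Ex hf (fun ρ => (rs c H ρ S' ^ 2)^2) ≤ 9^D * (Ex hf (fun ρ => rs c H ρ S' ^ 2))^2 := by
  rw [Ex_rs_sq]
  have := bonami hf_isW (mom_sg (V := V)) (cc c H S') D (cc_deg c H S' D hc)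
  refine le_trans (le_of_eq ?_) this
  congr 1; ext ρ; unfold rs; ring

lemma Ex_rs_weighted (c : Finset V → ℝ) (H : Finset V) (p : Finset V → Prop) [DecidablePred p] :
    Ex hf (fun ρ => ∑ S', if p S' then rs c H ρ S' ^ 2 else 0) =
      ∑ S, if p (S \ H) then c S ^ 2 else 0 := by
  rw [Ex_sum, sum_split H (fun S => if p (S \ H) then c S ^ 2 else 0)]
  refine Finset.sum_congr rfl fun S' _ => ?_
  have : Ex hf (fun ρ => if p S' then rs c H ρ S' ^ 2 else 0) = if p S' then ∑ T, cc c H S' T ^ 2 else 0 := by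
    split_ifs with h
    · exact Ex_rs_sq c H S'
    · exact Ex_const hf_isW 0
  rw [this]
  by_cases hp : p S'
  · rw [if_pos hp]
    refine Finset.sum_congr rfl fun T _ => ?_
    unfold cc
    by_cases h : T ⊆ H ∧ Disjoint S' H
    · rw [if_pos h, if_pos h]
      have : (S' ∪ T) \ H = S' := by
        rw [Finset.union_sdiff_distrib, Finset.sdiff_eq_self_of_disjoint h.2, Finset.sdiff_eq_empty_iff_subset.2 h.1]
        simp
      rw [this, if_pos hp]
    · rw [if_neg h, if_neg h]; simp
  · rw [if_neg hp]
    symm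
    refine Finset.sum_eq_zero fun T _ => ?_
    by_cases h : T ⊆ H ∧ Disjoint S' H
    · rw [if_pos h]
      have : (S' ∪ T) \ H = S' := by
        rw [Finset.union_sdiff_distrib, Finset.sdiff_eq_self_of_disjoint h.2, Finset.sdiff_eq_empty_iff_subset.2 h.1]
        simp
      rw [this, if_neg hp]
    · rw [if_neg h]

lemma Ex_infl_rs (c : Finset V → ℝ) (H : Finset V) (j : V) :
    Ex hf (fun ρ => infl (rs c H ρ) j) = if j ∈ H then 0 else infl c j := by
  unfold infl
  rw [Ex_rs_weighted c H (fun S => j ∈ S)]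
  split_ifs with h
  · refine Finset.sum_eq_zero fun S _ => ?_
    simp [h]
  · simp [h]

lemma Ex_infl_rs_sq (c : Finset V → ℝ) (H : Finset V) (D : ℕ) (hc : ∀ S, D < S.card → c S = 0) (j : V) :
    Ex hf (fun ρ => infl (rs c H ρ) j ^ 2) ≤ 9^D * (Ex hf (fun ρ => infl (rs c H ρ) j))^2 := by
  have := Ex_hyper_sum hf_isW (Finset.univ.filter (fun S : Finset V => j ∈ S))
    (fun S ρ => rs c H ρ S ^ 2) (fun _ _ => by positivity) (9^D) (by positivity)
    (fun S _ => Ex_rs_four c H S D hc)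
  rw [← Ex_sum] at this
  simp only [Finset.sum_filter] at this
  exact this

lemma Ex_combine (C : ℝ) (hC : 0 ≤ C) (A B P : (V → Bool) → Prop)
    (hA : 1 ≤ 2 * C * Ex hf (fun ρ => if A ρ then (1:ℝ) else 0))
    (hB : 4 * C * Ex hf (fun ρ => if B ρ then (1:ℝ) else 0) ≤ 1)
    (h : ∀ ρ, A ρ → ¬ B ρ → P ρ) : 1 ≤ 4 * C * Ex hf (fun ρ => if P ρ then (1:ℝ) else 0) := by
  have h1 : Ex hf (fun ρ => if A ρ then (1:ℝ) else 0) ≤ Ex hf (fun ρ => if P ρ then (1:ℝ) else 0) +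
      Ex hf (fun ρ => if B ρ then (1:ℝ) else 0) := by
    rw [← Ex_add]
    refine Ex_mono hf_isW fun ρ => ?_
    have := h ρ
    by_cases a : A ρ <;> by_cases b : B ρ <;> by_cases p : P ρ <;> simp_all
  have := mul_le_mul_of_nonneg_left h1 hC
  nlinarith
end Restr

def tpI (D : ℕ) : ℕ := 10240 * 9^(3*D) * D^2 * tauI D
def K0 (D : ℕ) : ℕ := D * tpI D

section Bunch
variable {V : Type} [Fintype V] [DecidableEq V]

lemma tauI_pos (D : ℕ) (hD : 1 ≤ D) : 0 < tauI D := by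
  unfold tauI kapI etaI MM; positivity
lemma tpI_pos (D : ℕ) (hD : 1 ≤ D) : 0 < tpI D := by
  have := tauI_pos D hD
  unfold tpI; positivity

lemma bunch_case1 (D : ℕ) (hD : 1 ≤ D) (c : Finset V → ℝ) (hc : ∀ S, D < S.card → c S = 0)
    (hv : 0 < vari c) (v : ℝ) (H : Finset V)
    (hT : (∑ j, if j ∈ H then 0 else infl c j) * (160*9^D) ≤ vari c) :
    1 ≤ 4 * 9^D * Ex hf (fun ρ => if Ex hf (fun y : V → Bool => if QQ (rs c H ρ) (fun i => sg (y i)) = v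
      then (1:ℝ) else 0) ≤ 1/5 then (1:ℝ) else 0) := by
  set T := ∑ j, if j ∈ H then 0 else infl c j with hTdef
  have hout : (∑ S : Finset V, if (S \ H).Nonempty then c S ^ 2 else 0) ≤ T := by
    have : T = ∑ j, Ex hf (fun ρ => infl (rs c H ρ) j) := by
      rw [hTdef]; exact Finset.sum_congr rfl fun j _ => (Ex_infl_rs c H j).symm
    rw [this, ← Ex_sum, ← Ex_rs_weighted c H (fun S => S.Nonempty)]
    refine Ex_mono hf_isW fun ρ => ?_
    rw [sum_infl]
    refine Finset.sum_le_sum fun S _ => ?_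
    split_ifs with h
    · have : (1:ℝ) ≤ S.card := by exact_mod_cast Finset.card_pos.2 h
      nlinarith [sq_nonneg (rs c H ρ S)]
    · positivity
  have h9 : (1:ℝ) ≤ 9^D := one_le_pow₀ (by norm_num)
  have hT0 : 0 ≤ T := Finset.sum_nonneg fun j _ => by
    split_ifs; exacts [le_rfl, infl_nonneg _ _]
  have hvv : vari c ≤ vari (cc c H ∅) + T := by
    refine le_trans ?_ (add_le_add le_rfl hout)
    unfold vari
    rw [← Finset.sum_add_distrib]
    refine Finset.sum_le_sum fun S _ => ?_
    by_cases hS : S.Nonempty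
    · by_cases hSH : S ⊆ H
      · simp only [hS, if_true, cc, hSH, Finset.disjoint_empty_left, and_self, Finset.empty_union]
        have : (0:ℝ) ≤ if (S \ H).Nonempty then c S ^ 2 else 0 := by positivity
        linarith
      · have : (S \ H).Nonempty := Finset.sdiff_nonempty.2 hSH
        simp only [hS, this, if_true]
        nlinarith [sq_nonneg (cc c H ∅ S)]
    · simp only [hS, if_false]; positivity
  have hv2 : vari c / 2 ≤ vari (cc c H ∅) := by nlinarith
  refine Ex_combine (9^D) (by positivity) (fun ρ => vari c / 8 ≤ (QQ (cc c H ∅) (fun i => sg (ρ i)) - v)^2)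
    (fun ρ => vari c / 40 ≤ vari (rs c H ρ)) _ ?_ ?_ ?_
  · refine pz_poly (cc c H ∅) D (cc_deg c H ∅ D hc) (by linarith) v _ ?_
    have := vari_le_shiftc (cc c H ∅) v
    linarith
  · have hm := Ex_markov hf_isW (fun ρ => vari (rs c H ρ)) (fun ρ => vari_nonneg _) (vari c / 40)
    have he : Ex hf (fun ρ => vari (rs c H ρ)) ≤ T := by
      unfold vari
      rw [Ex_rs_weighted c H (fun S => S.Nonempty)]; exact hout
    have h2 := hm.trans he
    set p := Ex hf (fun ρ => if vari c / 40 ≤ vari (rs c H ρ) then (1:ℝ) else 0)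
    have h3 : (vari c / 40 * p) * (160*9^D) ≤ vari c * 1 := by
      rw [mul_one]
      refine le_trans ?_ hT
      gcongr
    have h4 : vari c * (4 * 9^D * p) ≤ vari c * 1 := by
      refine le_trans (le_of_eq ?_) h3; ring
    exact le_of_mul_le_mul_left h4 hv
  · intro ρ hA hB
    push Not at hB
    set h := QQ (cc c H ∅) (fun i => sg (ρ i)) with hh
    set p := Ex hf (fun y : V → Bool => if QQ (rs c H ρ) (fun i => sg (y i)) = v then (1:ℝ) else 0)
    have h1 : (h - v)^2 * p ≤ vari (rs c H ρ) := by
      rw [← Ex_mul]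
      have h2 := second hf_isW (mom_sg (V := V)) (shiftc (rs c H ρ) h)
      have h3 : ∑ S, shiftc (rs c H ρ) h S ^ 2 = vari (rs c H ρ) := by
        unfold vari
        refine Finset.sum_congr rfl fun S _ => ?_
        unfold shiftc
        by_cases hS : S = ∅
        · subst hS; simp [rs, hh]
        · simp [hS, Finset.nonempty_iff_ne_empty]
      rw [← h3, ← h2]
      refine Ex_mono hf_isW fun y => ?_
      rw [QQ_shiftc]
      split_ifs with he
      · rw [he]; apply le_of_eq; ring
      · simp only [mul_zero]; positivity
    have hp0 : 0 ≤ p := Ex_nonneg hf_isW fun y => by positivity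
    have h4 : vari c / 8 * p ≤ vari c / 8 * (1/5) := by
      calc vari c / 8 * p ≤ (h-v)^2 * p := mul_le_mul_of_nonneg_right hA hp0
        _ ≤ vari c / 8 * (1/5) := by linarith
    exact le_of_mul_le_mul_left h4 (by linarith)

lemma bunch_case2 (D : ℕ) (hD : 1 ≤ D) (c : Finset V → ℝ) (hc : ∀ S, D < S.card → c S = 0)
    (hv : 0 < vari c) (v : ℝ) (H : Finset V) (hH : ∀ j, j ∉ H → infl c j * tpI D ≤ vari c)
    (hT : vari c ≤ (∑ j, if j ∈ H then 0 else infl c j) * (160*9^D)) :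
    1 ≤ 4 * 9^D * Ex hf (fun ρ => if Ex hf (fun y : V → Bool => if QQ (rs c H ρ) (fun i => sg (y i)) = v
      then (1:ℝ) else 0) ≤ 1/5 then (1:ℝ) else 0) := by
  set T := ∑ j, if j ∈ H then 0 else infl c j with hTdef
  have h9 : (1:ℝ) ≤ 9^D := one_le_pow₀ (by norm_num)
  have hT0 : 0 < T := by
    by_contra h
    push Not at h
    have : T * (160*9^D) ≤ 0 := mul_nonpos_of_nonpos_of_nonneg h (by positivity)
    linarith
  have htp : (0:ℝ) < tpI D := by exact_mod_cast tpI_pos D hD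
  have htau : (0:ℝ) < tauI D := by exact_mod_cast tauI_pos D hD
  have hDr : (1:ℝ) ≤ D := by exact_mod_cast hD
  have hET : Ex hf (fun ρ => ∑ j, infl (rs c H ρ) j) = T := by
    rw [Ex_sum, hTdef]; exact Finset.sum_congr rfl fun j _ => Ex_infl_rs c H j
  have hET2 : Ex hf (fun ρ => (∑ j, infl (rs c H ρ) j)^2) ≤ 9^D * T^2 := by
    have := Ex_hyper_sum hf_isW Finset.univ (fun j ρ => infl (rs c H ρ) j)
      (fun _ _ => infl_nonneg _ _) (9^D) (by positivity) (fun j _ => Ex_infl_rs_sq c H D hc j)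
    rwa [← Ex_sum, hET] at this
  have hES : Ex hf (fun ρ => ∑ j, infl (rs c H ρ) j ^ 2) * tpI D ≤ 9^D * (T * (160*9^D) * T) := by
    rw [Ex_sum]
    calc _ ≤ (∑ j, (9:ℝ)^D * (if j ∈ H then 0 else infl c j)^2) * (tpI D : ℝ) := by
          gcongr with j
          rw [← Ex_infl_rs]; exact Ex_infl_rs_sq c H D hc j
      _ = (9:ℝ)^D * ∑ j, (if j ∈ H then 0 else infl c j * (infl c j * tpI D)) := by
          rw [← Finset.mul_sum, mul_assoc, Finset.sum_mul]
          congr 1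
          refine Finset.sum_congr rfl fun j _ => ?_
          split_ifs
          · simp
          · ring
      _ ≤ (9:ℝ)^D * ∑ j, (if j ∈ H then 0 else infl c j * vari c) := by
          gcongr with j
          split_ifs with h
          · exact le_rfl
          · exact mul_le_mul_of_nonneg_left (hH j h) (infl_nonneg _ _)
      _ = 9^D * (vari c * T) := by
          congr 1
          rw [hTdef, Finset.mul_sum]
          apply Finset.sum_congr rfl
          intro j _
          split_ifs
          · simp
          · ring
      _ ≤ _ := by gcongr
  set m : ℝ := T^2 / (16 * D^2 * tauI D) with hm
  have hm0 : 0 < m := by positivity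
  refine Ex_combine (9^D) (by positivity) (fun ρ => T/4 ≤ ∑ j, infl (rs c H ρ) j)
    (fun ρ => m ≤ ∑ j, infl (rs c H ρ) j ^ 2) _ ?_ ?_ ?_
  · refine Ex_pz hf_isW (fun ρ => ∑ j, infl (rs c H ρ) j) (fun ρ => Finset.sum_nonneg fun j _ => infl_nonneg _ _)
      (9^D) ?_ ?_ (T/4) ?_
    · rw [hET]; exact hET2
    · rw [hET]; exact hT0
    · rw [hET]
  · have hmk := Ex_markov hf_isW (fun ρ => ∑ j, infl (rs c H ρ) j ^ 2)
      (fun ρ => Finset.sum_nonneg fun j _ => by positivity) m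
    set p := Ex hf (fun ρ => if m ≤ ∑ j, infl (rs c H ρ) j ^ 2 then (1:ℝ) else 0)
    have h1 : m * p * tpI D ≤ 9^D * (T * (160*9^D) * T) := le_trans (by gcongr) hES
    have e1 : m * p * tpI D = (160 * 9^D * 9^D * T^2) * (4 * 9^D * p) := by
      have : (tpI D : ℝ) = 10240 * (9^D)^3 * D^2 * tauI D := by
        unfold tpI; push_cast; rw [← pow_mul, mul_comm 3 D]
      rw [hm, this]; field_simp; ring
    have h2 : (160 * 9^D * 9^D * T^2) * (4 * 9^D * p) ≤ (160 * 9^D * 9^D * T^2) * 1 := by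
      rw [← e1]; refine h1.trans (le_of_eq ?_); ring
    exact le_of_mul_le_mul_left h2 (by positivity)
  · intro ρ hA hB
    push Not at hB
    have hle := sum_infl_le (rs c H ρ) D (rs_deg c H ρ D hc)
    have hlow : T / (4*D) ≤ vari (rs c H ρ) := by
      rw [div_le_iff₀ (by positivity)]
      linarith
    refine regular_ac D hD (rs c H ρ) (rs_deg c H ρ D hc) (lt_of_lt_of_le (by positivity) hlow) ?_ v
    rw [← Finset.sum_mul]
    calc _ ≤ m * tauI D := by gcongr
      _ = (T/(4*D))^2 := by rw [hm]; field_simp; norm_num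
      _ ≤ _ := by gcongr

lemma bunch (D : ℕ) (hD : 1 ≤ D) (c : Finset V → ℝ) (hc : ∀ S, D < S.card → c S = 0)
    (hv : 0 < vari c) (v : ℝ) : ∃ H : Finset V, H.card ≤ K0 D ∧
    1 ≤ 4 * 9^D * Ex hf (fun ρ => if Ex hf (fun y : V → Bool => if QQ (rs c H ρ) (fun i => sg (y i)) = v
      then (1:ℝ) else 0) ≤ 1/5 then (1:ℝ) else 0) := by
  set H := Finset.univ.filter (fun j => vari c < infl c j * tpI D) with hH
  have htp : (0:ℝ) < tpI D := by exact_mod_cast tpI_pos D hD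
  refine ⟨H, ?_, ?_⟩
  · have h1 : (H.card : ℝ) * vari c ≤ (K0 D : ℝ) * vari c := by
      calc (H.card : ℝ) * vari c = ∑ j ∈ H, vari c := by simp
        _ ≤ ∑ j ∈ H, infl c j * tpI D := Finset.sum_le_sum fun j hj => (Finset.mem_filter.1 hj).2.le
        _ ≤ ∑ j, infl c j * tpI D := Finset.sum_le_sum_of_subset_of_nonneg (Finset.subset_univ _)
            fun j _ _ => mul_nonneg (infl_nonneg _ _) htp.le
        _ = (∑ j, infl c j) * tpI D := by rw [Finset.sum_mul]
        _ ≤ (D * vari c) * tpI D := by gcongr; exact sum_infl_le c D hc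
        _ = _ := by unfold K0; push_cast; ring
    exact_mod_cast le_of_mul_le_mul_right h1 hv
  · rcases le_total ((∑ j, if j ∈ H then 0 else infl c j) * (160*9^D)) (vari c) with h | h
    · exact bunch_case1 D hD c hc hv v H h
    · refine bunch_case2 D hD c hc hv v H (fun j hj => ?_) h
      simpa [hH] using hj
end Bunch

/-! ### Anticoncentration -/
def RI (D : ℕ) : ℕ := 16 * 9^D * K0 D + 1
noncomputable def bz (b : Bool) : ℝ := if b then 1 else 0
lemma bz_eq (b : Bool) : bz b = (1 + sg b) / 2 := by cases b <;> simp [bz]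
@[simp] lemma bz_true : bz true = 1 := by simp [bz]
@[simp] lemma bz_false : bz false = 0 := by simp [bz]

section AC
variable {V : Type} [Fintype V] [DecidableEq V]

lemma family_hit (Fm : Finset (Finset V)) (hdisj : ∀ A ∈ Fm, ∀ B ∈ Fm, A ≠ B → Disjoint A B) (H : Finset V) :
    (Fm.filter (fun M => ¬ Disjoint M H)).card ≤ H.card := by
  have hex : ∀ M ∈ Fm.filter (fun M => ¬ Disjoint M H), ∃ x, x ∈ M ∧ x ∈ H := by
    intro M hM
    have := (Finset.mem_filter.1 hM).2
    rwa [Finset.not_disjoint_iff] at this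
  rcases isEmpty_or_nonempty V with hV | hV
  · have : Fm.filter (fun M => ¬ Disjoint M H) = ∅ := by
      refine Finset.eq_empty_of_forall_notMem fun M hM => ?_
      obtain ⟨x, _⟩ := hex M hM
      exact hV.elim x
    rw [this]; simp
  choose! φ hφ using hex
  refine Finset.card_le_card_of_injOn φ (fun M hM => (hφ M hM).2) ?_
  intro A hA B hB hAB
  by_contra hne
  have := hdisj A (Finset.mem_filter.1 hA).1 B (Finset.mem_filter.1 hB).1 hne
  exact Finset.disjoint_left.1 this (hφ A hA).1 (hAB ▸ (hφ B hB).1)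

lemma ac_ind (D : ℕ) (hD : 1 ≤ D) (e : ℕ) (he : 1 ≤ e) (heD : e ≤ D) (v : ℝ) (t : ℕ) :
    ∀ (c : Finset V → ℝ) (hc : ∀ S, e < S.card → c S = 0) (Fm : Finset (Finset V))
      (hdisj : ∀ A ∈ Fm, ∀ B ∈ Fm, A ≠ B → Disjoint A B)
      (hFm : ∀ M ∈ Fm, M.card = e ∧ c M ≠ 0) (hcard : t * K0 D + 1 ≤ Fm.card),
      Ex hf (fun x : V → Bool => if QQ c (fun i => sg (x i)) = v then (1:ℝ) else 0) ≤
        1/5 + (1 - 1/(4*9^D))^t := by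
  have h9 : (1:ℝ) ≤ 9^D := one_le_pow₀ (by norm_num)
  have hg1 : (1:ℝ)/(4*9^D) ≤ 1 := by rw [div_le_one (by positivity)]; linarith
  induction t with
  | zero =>
    intro c hc Fm _ _ _
    have : Ex hf (fun x : V → Bool => if QQ c (fun i => sg (x i)) = v then (1:ℝ) else 0) ≤
        Ex hf (fun _ : V → Bool => (1:ℝ)) := Ex_mono hf_isW fun x => by split_ifs <;> norm_num
    rw [Ex_const hf_isW] at this
    simp; linarith
  | succ t ih =>
    intro c hc Fm hdisj hFm hcard
    have hcD : ∀ S, D < S.card → c S = 0 := fun S hS => hc S (by omega)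
    have hv : 0 < vari c := by
      obtain ⟨M, hM⟩ : Fm.Nonempty := Finset.card_pos.1 (by omega)
      obtain ⟨h1, h2⟩ := hFm M hM
      unfold vari
      refine Finset.sum_pos' (fun S _ => by positivity) ⟨M, Finset.mem_univ _, ?_⟩
      rw [if_pos (Finset.card_pos.1 (by omega))]; positivity
    obtain ⟨H, hHcard, hH⟩ := bunch D hD c hcD hv v
    rw [← Ex_piecewise hf_isW H]
    simp only [← QQ_rs]
    set G : (V → Bool) → Prop := fun ρ => Ex hf (fun y : V → Bool => if QQ (rs c H ρ) (fun i => sg (y i)) = v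
      then (1:ℝ) else 0) ≤ 1/5 with hG
    have hρ : ∀ ρ, Ex hf (fun y : V → Bool => if QQ (rs c H ρ) (fun i => sg (y i)) = v
      then (1:ℝ) else 0) ≤ 1/5 + (1 - 1/(4*9^D))^t := by
      intro ρ
      have h1 := Finset.card_filter_add_card_filter_not (s := Fm) (fun M => Disjoint M H)
      have h2 := family_hit Fm hdisj H
      refine ih (rs c H ρ) (rs_deg c H ρ e hc) (Fm.filter (fun M => Disjoint M H)) ?_ ?_ ?_
      · intro A hA B hB
        exact hdisj A (Finset.mem_filter.1 hA).1 B (Finset.mem_filter.1 hB).1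
      · intro M hM
        obtain ⟨hM1, hM2⟩ := Finset.mem_filter.1 hM
        obtain ⟨h3, h4⟩ := hFm M hM1
        refine ⟨h3, ?_⟩
        rwa [rs_top c H ρ M (h3 ▸ hc) hM2]
      · rw [add_mul] at hcard; omega
    set r := (1 - 1/(4*(9:ℝ)^D))^t with hr
    have hr0 : 0 ≤ r := by rw [hr]; exact pow_nonneg (by linarith) _
    have h1 : Ex hf (fun ρ => Ex hf (fun y : V → Bool => if QQ (rs c H ρ) (fun i => sg (y i)) = v
      then (1:ℝ) else 0)) ≤ Ex hf (fun ρ => (1/5 + r) - r * (if G ρ then (1:ℝ) else 0)) := by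
      refine Ex_mono hf_isW fun ρ => ?_
      split_ifs with h
      · rw [hG] at h; linarith
      · have := hρ ρ; linarith
    rw [Ex_sub, Ex_const hf_isW, Ex_mul] at h1
    have h2 : 1/(4*9^D) ≤ Ex hf (fun ρ => if G ρ then (1:ℝ) else 0) := by
      rw [div_le_iff₀ (by positivity), mul_comm]; exact hH
    have h3 := mul_le_mul_of_nonneg_left h2 hr0
    rw [pow_succ, ← hr]
    linarith

theorem ac_sg (D : ℕ) (hD : 1 ≤ D) (e : ℕ) (he : 1 ≤ e) (heD : e ≤ D) (v : ℝ) 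
    (c : Finset V → ℝ) (hc : ∀ S, e < S.card → c S = 0) (Fm : Finset (Finset V))
      (hdisj : ∀ A ∈ Fm, ∀ B ∈ Fm, A ≠ B → Disjoint A B)
      (hFm : ∀ M ∈ Fm, M.card = e ∧ c M ≠ 0) (hcard : RI D ≤ Fm.card) :
      Ex hf (fun x : V → Bool => if QQ c (fun i => sg (x i)) = v then (1:ℝ) else 0) ≤ 1/4 := by
  refine (ac_ind D hD e he heD v (16*9^D) c hc Fm hdisj hFm hcard).trans ?_
  have h9 : (1:ℝ) ≤ 9^D := one_le_pow₀ (by norm_num)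
  have hg1 : (1:ℝ)/(4*9^D) ≤ 1 := by rw [div_le_one (by positivity)]; linarith
  have h1 : (1 - 1/(4*(9:ℝ)^D))^(16*9^D) ≤ Real.exp (-4) := by
    calc (1 - 1/(4*(9:ℝ)^D))^(16*9^D) ≤ (Real.exp (-(1/(4*(9:ℝ)^D))))^(16*9^D) := by
          refine pow_le_pow_left₀ (by linarith) ?_ _
          exact Real.one_sub_le_exp_neg _
      _ = Real.exp (-4) := by
          rw [← Real.exp_nat_mul]; congr 1; push_cast; field_simp; norm_num
  have h2 : Real.exp (-4) ≤ 1/20 := by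
    have : (20:ℝ) ≤ Real.exp 4 := by
      have h : Real.exp 4 = (Real.exp 1)^4 := by rw [← Real.exp_nat_mul]; norm_num
      rw [h]
      have := Real.exp_one_gt_d9
      calc (20:ℝ) ≤ 2.7^4 := by norm_num
        _ ≤ _ := pow_le_pow_left₀ (by norm_num) (by linarith) 4
    rw [Real.exp_neg, ← one_div]
    exact one_div_le_one_div_of_le (by norm_num) this
  linarith

noncomputable def tosg (a : Finset V → ℝ) (T : Finset V) : ℝ :=
  ∑ S, if T ⊆ S then a S * (1/2)^S.card else 0

lemma QQ_bz (a : Finset V → ℝ) (z : V → Bool) :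
    QQ a (fun i => bz (z i)) = QQ (tosg a) (fun i => sg (z i)) := by
  unfold QQ tosg
  simp only [Finset.sum_mul]
  rw [Finset.sum_comm]
  refine Finset.sum_congr rfl fun S _ => ?_
  have : ∏ i ∈ S, bz (z i) = (1/2)^S.card * ∑ T ∈ S.powerset, ∏ i ∈ T, sg (z i) := by
    rw [← Finset.prod_one_add, ← Finset.prod_const, ← Finset.prod_mul_distrib]
    refine Finset.prod_congr rfl fun i _ => ?_
    rw [bz_eq]; ring
  rw [this, ← mul_assoc, Finset.mul_sum]
  have h2 : S.powerset = Finset.univ.filter (fun T => T ⊆ S) := by ext T; simp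
  rw [h2, Finset.sum_filter]
  refine Finset.sum_congr rfl fun T _ => ?_
  split_ifs <;> simp

theorem ac_bz (D : ℕ) (hD : 1 ≤ D) (e : ℕ) (he : 1 ≤ e) (heD : e ≤ D)
    (a : Finset V → ℝ) (ha : ∀ S, e < S.card → a S = 0) (Fm : Finset (Finset V))
      (hdisj : ∀ A ∈ Fm, ∀ B ∈ Fm, A ≠ B → Disjoint A B)
      (hFm : ∀ M ∈ Fm, M.card = e ∧ a M ≠ 0) (hcard : RI D ≤ Fm.card) :
      1/2 ≤ Ex hf (fun x : V → Bool => if QQ a (fun i => bz (x i)) = 0 ∨ QQ a (fun i => bz (x i)) = 1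
        then (0:ℝ) else 1) := by
  have hdeg : ∀ S, e < S.card → tosg a S = 0 := by
    intro S hS
    unfold tosg
    refine Finset.sum_eq_zero fun T _ => ?_
    split_ifs with h
    · rw [ha T (lt_of_lt_of_le hS (Finset.card_le_card h)), zero_mul]
    · rfl
  have htop : ∀ M ∈ Fm, M.card = e ∧ tosg a M ≠ 0 := by
    intro M hM
    obtain ⟨h1, h2⟩ := hFm M hM
    refine ⟨h1, ?_⟩
    have : tosg a M = a M * (1/2)^M.card := by
      unfold tosg
      rw [Finset.sum_eq_single M]
      · simp
      · intro T _ hT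
        split_ifs with h
        · rw [ha T, zero_mul]
          rw [← h1]; exact Finset.card_lt_card (Finset.ssubset_iff_subset_ne.2 ⟨h, hT.symm⟩)
        · rfl
      · simp
    rw [this]; positivity
  have h0 := ac_sg D hD e he heD 0 (tosg a) hdeg Fm hdisj htop hcard
  have h1 := ac_sg D hD e he heD 1 (tosg a) hdeg Fm hdisj htop hcard
  have : Ex hf (fun _ : V → Bool => (1:ℝ)) ≤ Ex hf (fun x : V → Bool => (if QQ a (fun i => bz (x i)) = 0 ∨ QQ a (fun i => bz (x i)) = 1
        then (0:ℝ) else 1) + ((if QQ (tosg a) (fun i => sg (x i)) = 0 then (1:ℝ) else 0) + 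
        (if QQ (tosg a) (fun i => sg (x i)) = 1 then (1:ℝ) else 0))) := by
    refine Ex_mono hf_isW fun x => ?_
    rw [QQ_bz]
    by_cases p : QQ (tosg a) (fun i => sg (x i)) = 0
    · simp [p]
    · by_cases q : QQ (tosg a) (fun i => sg (x i)) = 1
      · simp [q]
      · simp [p, q]
  rw [Ex_const hf_isW, Ex_add, Ex_add] at this
  linarith
end AC

/-! ### Functions of low degree on the cube -/
section LDsec
variable {V U : Type} [Fintype V] [DecidableEq V] [Fintype U] [DecidableEq U]

def LD (D : ℕ) (F : (V → Bool) → ℝ) : Prop :=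
  ∃ a : Finset V → ℝ, (∀ S, D < S.card → a S = 0) ∧ ∀ z, F z = QQ a (fun i => bz (z i))

lemma LD_congr {D : ℕ} {F G : (V → Bool) → ℝ} (h : LD D F) (hFG : ∀ z, G z = F z) : LD D G := by
  obtain ⟨a, ha, hF⟩ := h
  exact ⟨a, ha, fun z => (hFG z).trans (hF z)⟩

lemma LD_le {D D' : ℕ} {F : (V → Bool) → ℝ} (h : LD D F) (hD : D ≤ D') : LD D' F := by
  obtain ⟨a, ha, hF⟩ := h
  exact ⟨a, fun S hS => ha S (by omega), hF⟩

lemma LD_zero (D : ℕ) : LD D (fun _ : V → Bool => (0:ℝ)) :=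
  ⟨fun _ => 0, fun _ _ => rfl, fun z => by simp [QQ]⟩

lemma LD_add {D : ℕ} {F G : (V → Bool) → ℝ} (hF : LD D F) (hG : LD D G) : LD D (fun z => F z + G z) := by
  obtain ⟨a, ha, hF⟩ := hF
  obtain ⟨b, hb, hG⟩ := hG
  refine ⟨fun S => a S + b S, fun S hS => by beta_reduce; rw [ha S hS, hb S hS, add_zero], fun z => ?_⟩
  beta_reduce; rw [hF, hG]; simp [QQ, add_mul, Finset.sum_add_distrib]

lemma LD_smul {D : ℕ} {F : (V → Bool) → ℝ} (r : ℝ) (hF : LD D F) : LD D (fun z => r * F z) := by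
  obtain ⟨a, ha, hF⟩ := hF
  refine ⟨fun S => r * a S, fun S hS => by beta_reduce; rw [ha S hS, mul_zero], fun z => ?_⟩
  beta_reduce; rw [hF]; simp only [QQ, Finset.mul_sum, mul_assoc]

lemma LD_sum {K : Type} (s : Finset K) {D : ℕ} {F : K → (V → Bool) → ℝ} (hF : ∀ k ∈ s, LD D (F k)) :
    LD D (fun z => ∑ k ∈ s, F k z) := by
  induction s using Finset.induction_on with
  | empty => simpa using LD_zero D
  | insert k s hk ih =>
    simp only [Finset.sum_insert hk]
    exact LD_add (hF k (by simp)) (ih fun k' hk' => hF k' (by simp [hk']))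

lemma LD_mono {D : ℕ} (S : Finset V) (hS : S.card ≤ D) : LD D (fun z : V → Bool => ∏ i ∈ S, bz (z i)) := by
  refine ⟨fun T => if T = S then 1 else 0, fun T hT => ?_, fun z => ?_⟩
  · beta_reduce; rw [if_neg]; rintro rfl; omega
  · simp [QQ]

lemma LD_const (D : ℕ) (r : ℝ) : LD D (fun _ : V → Bool => r) := by
  refine LD_congr (LD_smul r (LD_mono (V := V) (D := D) ∅ (by simp))) fun z => by simp

lemma bz_prod_union (S T : Finset V) (z : V → Bool) :
    (∏ i ∈ S, bz (z i)) * ∏ i ∈ T, bz (z i) = ∏ i ∈ S ∪ T, bz (z i) := by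
  have : ∀ S : Finset V, ∏ i ∈ S, bz (z i) = if ∀ i ∈ S, z i = true then 1 else 0 := by
    intro S
    split_ifs with h
    · exact Finset.prod_eq_one fun i hi => by simp [h i hi]
    · push Not at h
      obtain ⟨i, hi, h⟩ := h
      exact Finset.prod_eq_zero hi (by simp [h])
  rw [this, this, this]
  by_cases h1 : ∀ i ∈ S, z i = true
  · by_cases h2 : ∀ i ∈ T, z i = true
    · rw [if_pos h1, if_pos h2, if_pos, one_mul]
      intro i hi; rcases Finset.mem_union.1 hi with h | h; exacts [h1 i h, h2 i h]
    · rw [if_neg h2, mul_zero, if_neg]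
      exact fun (h : ∀ i ∈ S ∪ T, z i = true) => h2 fun i hi => h i (Finset.mem_union_right _ hi)
  · rw [if_neg h1, zero_mul, if_neg]
    exact fun (h : ∀ i ∈ S ∪ T, z i = true) => h1 fun i hi => h i (Finset.mem_union_left _ hi)

lemma LD_mul {D E : ℕ} {F G : (V → Bool) → ℝ} (hF : LD D F) (hG : LD E G) :
    LD (D + E) (fun z => F z * G z) := by
  obtain ⟨a, ha, hF⟩ := hF
  obtain ⟨b, hb, hG⟩ := hG
  have : LD (D+E) (fun z : V → Bool => ∑ S, ∑ T, (a S * b T) * ∏ i ∈ S ∪ T, bz (z i)) := by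
    refine LD_sum _ fun S _ => LD_sum _ fun T _ => ?_
    by_cases hS : D < S.card
    · rw [ha S hS]; simpa using LD_zero _
    · by_cases hT : E < T.card
      · rw [hb T hT]; simpa using LD_zero _
      · refine LD_smul _ (LD_mono _ ?_)
        have := Finset.card_union_le S T
        omega
  refine LD_congr this fun z => ?_
  rw [hF, hG]
  unfold QQ
  rw [Finset.sum_mul_sum]
  refine Finset.sum_congr rfl fun S _ => Finset.sum_congr rfl fun T _ => ?_
  rw [← bz_prod_union]; ring

lemma LD_prod {K : Type} (s : Finset K) {D : ℕ} {F : K → (V → Bool) → ℝ} (hF : ∀ k ∈ s, LD D (F k)) :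
    LD (s.card * D) (fun z => ∏ k ∈ s, F k z) := by
  induction s using Finset.induction_on with
  | empty => simpa using LD_const 0 1
  | insert k s hk ih =>
    simp only [Finset.prod_insert hk, Finset.card_insert_of_notMem hk]
    rw [show (s.card + 1) * D = D + s.card * D by ring]
    exact LD_mul (hF k (by simp)) (ih fun k' hk' => hF k' (by simp [hk']))

lemma LD_subst {D : ℕ} {F : (V → Bool) → ℝ} (hF : LD D F) (pt : (U → Bool) → (V → Bool))
    (hpt : ∀ v, LD 1 (fun z => bz (pt z v))) : LD D (fun z => F (pt z)) := by
  obtain ⟨a, ha, hF⟩ := hF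
  have : LD D (fun z : U → Bool => ∑ S, a S * ∏ v ∈ S, bz (pt z v)) := by
    refine LD_sum _ fun S _ => ?_
    by_cases hS : D < S.card
    · rw [ha S hS]; simpa using LD_zero _
    · refine LD_smul _ (LD_le (LD_prod S fun v _ => hpt v) (by omega))
  exact LD_congr this fun z => hF _

lemma LD_coord (u : U) : LD 1 (fun z : U → Bool => bz (z u)) := by
  simpa using LD_mono (V := U) (D := 1) {u} (by simp)

lemma LD_coord_not (u : U) : LD 1 (fun z : U → Bool => bz (!(z u))) := by
  refine LD_congr (LD_add (LD_const 1 1) (LD_smul (-1) (LD_coord u))) fun z => ?_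
  cases z u <;> simp

lemma LD_poly (P : MvPolynomial V ℝ) (d : ℕ) (hP : P.totalDegree ≤ d) : LD d (fun z => evalBool z P) := by
  have : LD d (fun z : V → Bool => ∑ m ∈ P.support, P.coeff m * ∏ i ∈ m.support, bz (z i)) := by
    refine LD_sum _ fun m hm => LD_smul _ (LD_mono _ ?_)
    refine le_trans ?_ ((MvPolynomial.le_totalDegree hm).trans hP)
    rw [Finsupp.sum, Finset.card_eq_sum_ones]
    exact Finset.sum_le_sum fun i hi => Nat.one_le_iff_ne_zero.2 (Finsupp.mem_support_iff.1 hi)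
  refine LD_congr this fun z => ?_
  unfold evalBool
  rw [MvPolynomial.eval_eq]
  refine Finset.sum_congr rfl fun m _ => ?_
  congr 1
  refine Finset.prod_congr rfl fun i hi => ?_
  cases z i <;> simp [Finsupp.mem_support_iff.1 hi]

/-! ### Good approximations -/
def Good (f : (V → Bool) → Bool) (D : ℕ) (δ : ℝ) : Prop :=
  ∀ (Y : Type) [Fintype Y] (pt : Y → (V → Bool)) (w : Y → ℝ), (∀ y, 0 ≤ w y) →
    ∃ P : (V → Bool) → ℝ, LD D P ∧
      ∑ y, w y * (if P (pt y) = bz (f (pt y)) then (0:ℝ) else 1) ≤ δ * ∑ y, w y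

lemma Good_subst {f : (V → Bool) → Bool} {D : ℕ} {δ : ℝ} (hf : Good f D δ) (pt : (U → Bool) → (V → Bool))
    (hpt : ∀ v, LD 1 (fun z => bz (pt z v))) : Good (fun z => f (pt z)) D δ := by
  intro Y _ q w hw
  obtain ⟨P, hP, h⟩ := hf Y (fun y => pt (q y)) w hw
  exact ⟨fun z => P (pt z), LD_subst hP pt hpt, h⟩

noncomputable def amp (s : ℕ) (y : Fin (2*s) → ℝ) : ℝ :=
  ∑ β : Fin (2*s) → Bool, (if s < (Finset.univ.filter (fun j => β j = true)).card then (1:ℝ) else 0) *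
    ∏ j, (if β j then y j else 1 - y j)

lemma amp_correct (s : ℕ) (y : Fin (2*s) → ℝ) (b : Bool)
    (h : s < (Finset.univ.filter (fun j => y j = bz b)).card) : amp s y = bz b := by
  have hc := fun β : Fin (2*s) → Bool =>
    Finset.card_filter_add_card_filter_not (s := (Finset.univ : Finset (Fin (2*s)))) (fun j => β j = true)
  cases b with
  | false =>
    rw [bz_false] at h ⊢
    unfold amp
    refine Finset.sum_eq_zero fun β _ => ?_
    by_cases hex : ∃ j, y j = 0 ∧ β j = true
    · obtain ⟨j, h1, h2⟩ := hex
      rw [Finset.prod_eq_zero (Finset.mem_univ j) (by simp [h1, h2]), mul_zero]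
    · push Not at hex
      rw [if_neg, zero_mul]
      have h3 : (Finset.univ.filter (fun j => y j = 0)).card ≤ (Finset.univ.filter (fun j => ¬ β j = true)).card :=
        Finset.card_le_card fun j hj => by
          simp only [Finset.mem_filter, Finset.mem_univ, true_and] at hj ⊢
          exact hex j hj
      have := hc β
      simp only [Finset.card_univ, Fintype.card_fin] at this
      omega
  | true =>
    rw [bz_true] at h ⊢
    have h1 : amp s y = ∑ β : Fin (2*s) → Bool, ∏ j, (if β j then y j else 1 - y j) := by
      unfold amp
      refine Finset.sum_congr rfl fun β _ => ?_
      by_cases hex : ∃ j, y j = 1 ∧ ¬ β j = true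
      · obtain ⟨j, h1, h2⟩ := hex
        rw [Finset.prod_eq_zero (Finset.mem_univ j) (by simp [h1, h2]), mul_zero]
      · push Not at hex
        rw [if_pos, one_mul]
        refine lt_of_lt_of_le h (Finset.card_le_card fun j hj => ?_)
        simp only [Finset.mem_filter, Finset.mem_univ, true_and] at hj ⊢
        exact hex j hj
    rw [h1]
    have := Finset.prod_univ_sum (fun _ : Fin (2*s) => (Finset.univ : Finset Bool))
      (fun j b => if b = true then y j else 1 - y j)
    rw [Fintype.piFinset_univ] at this
    rw [← this]
    simp

lemma Ex_prod {W Ω : Type} [Fintype W] [DecidableEq W] [Fintype Ω] (w : Ω → ℝ) (g : Ω → ℝ) :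
    Ex w (fun ω : W → Ω => ∏ j, g (ω j)) = (∑ o, w o * g o)^(Fintype.card W) := by
  unfold Ex
  simp only [← Finset.prod_mul_distrib]
  have := Finset.prod_univ_sum (fun _ : W => (Finset.univ : Finset Ω)) (fun _ o => w o * g o)
  rw [Fintype.piFinset_univ] at this
  rw [← this]; simp

lemma good_of_prob {n : ℕ} (f : (Fin n → Bool) → Bool) (d : ℕ) (h : HasProbPoly f (1/3) d) :
    Good f (80*(d+1)) (1/100) := by
  obtain ⟨k, w, P, hw0, hw1, hdeg, herr⟩ := h
  have hw : IsW w := ⟨hw0, hw1⟩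
  set s := 40
  set A : (Fin (2*s) → Fin k) → (Fin n → Bool) → ℝ := fun ω z => amp s (fun j => evalBool z (P (ω j))) with hA
  have hLD : ∀ ω, LD (80*(d+1)) (A ω) := by
    intro ω
    rw [hA]; unfold amp
    refine LD_sum _ fun β _ => LD_smul _ (LD_le (LD_prod Finset.univ (D := d) fun j _ => ?_) ?_)
    · cases β j
      · simp only [Bool.false_eq_true, if_false]
        refine LD_congr (LD_add (LD_const d 1) (LD_smul (-1) (LD_poly (P (ω j)) d (hdeg _)))) fun z => by ring
      · simpa using LD_poly (P (ω j)) d (hdeg _)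
    · rw [Finset.card_univ, Fintype.card_fin]
      simp only [s]; omega
  have hpt : ∀ z, Ex w (fun ω => if A ω z = bz (f z) then (0:ℝ) else 1) ≤ 1/100 := by
    intro z
    set g : Fin k → ℝ := fun i => if evalBool z (P i) ≠ (if f z then (1:ℝ) else 0) then 2 else 1 with hg
    have h1 : Ex w (fun ω : Fin (2*s) → Fin k => ∏ j, g (ω j)) ≤ (4/3)^(2*s) := by
      rw [Ex_prod, Fintype.card_fin]
      refine pow_le_pow_left₀ (Finset.sum_nonneg fun o _ => mul_nonneg (hw0 o) (by rw [hg]; positivity)) ?_ _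
      have : ∑ o, w o * g o = ∑ o, w o + ∑ i ∈ Finset.univ.filter
          (fun i => evalBool z (P i) ≠ (if f z then (1:ℝ) else 0)), w i := by
        rw [Finset.sum_filter, ← Finset.sum_add_distrib]
        refine Finset.sum_congr rfl fun o _ => ?_
        rw [hg]; dsimp only
        split_ifs <;> ring
      rw [this, hw1]
      have := herr z
      linarith
    have h2 : Ex w (fun ω => (2:ℝ)^s * (if A ω z = bz (f z) then (0:ℝ) else 1)) ≤
        Ex w (fun ω : Fin (2*s) → Fin k => ∏ j, g (ω j)) := by
      refine Ex_mono hw fun ω => ?_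
      have hgp : ∏ j, g (ω j) = 2^(Finset.univ.filter (fun j => ¬ evalBool z (P (ω j)) = bz (f z))).card := by
        rw [← Finset.prod_const, Finset.prod_filter]
        rfl
      rw [hgp]
      split_ifs with hc
      · simp
      · rw [mul_one]
        refine pow_le_pow_right₀ (by norm_num) ?_
        by_contra hlt
        rw [not_le] at hlt
        refine hc (amp_correct s _ _ ?_)
        have := Finset.card_filter_add_card_filter_not (s := (Finset.univ : Finset (Fin (2*s))))
          (fun j => evalBool z (P (ω j)) = bz (f z))
        simp only [Finset.card_univ, Fintype.card_fin] at this
        omega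
    rw [Ex_mul] at h2
    have h3 := h2.trans h1
    simp only [s] at h3 ⊢
    norm_num at h3 ⊢
    linarith
  intro Y _ pt wt hwt
  obtain ⟨ω, hω⟩ := Ex_exists_le hw (fun ω => ∑ y, wt y * (if A ω (pt y) = bz (f (pt y)) then (0:ℝ) else 1))
  refine ⟨A ω, hLD ω, hω.trans ?_⟩
  rw [Ex_sum, Finset.mul_sum]
  refine Finset.sum_le_sum fun y _ => ?_
  rw [Ex_mul]
  have := mul_le_mul_of_nonneg_left (hpt (pt y)) (hwt y)
  linarith
end LDsec

/-! ### Bounding block sensitivity -/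
section Stage
variable {V : Type} [Fintype V] [DecidableEq V]

noncomputable def dg (a : Finset V → ℝ) (U : Finset V) : ℕ :=
  (Finset.univ.filter (fun S : Finset V => S ⊆ U ∧ a S ≠ 0)).sup Finset.card

lemma le_dg (a : Finset V → ℝ) (U S : Finset V) (h1 : S ⊆ U) (h2 : a S ≠ 0) : S.card ≤ dg a U :=
  Finset.le_sup (f := Finset.card) (by simp [h1, h2])

lemma dg_mono (a : Finset V → ℝ) {U U' : Finset V} (h : U ⊆ U') : dg a U ≤ dg a U' :=
  Finset.sup_mono fun S hS => by
    simp only [Finset.mem_filter, Finset.mem_univ, true_and] at hS ⊢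
    exact ⟨hS.1.trans h, hS.2⟩

lemma dg_le (a : Finset V → ℝ) (U : Finset V) (D : ℕ) (ha : ∀ S, D < S.card → a S = 0) : dg a U ≤ D := by
  refine Finset.sup_le fun S hS => ?_
  simp only [Finset.mem_filter, Finset.mem_univ, true_and] at hS
  by_contra h
  exact hS.2 (ha S (by omega))

lemma dg_attained (a : Finset V → ℝ) (U : Finset V) (h : 1 ≤ dg a U) :
    ∃ M, M ⊆ U ∧ a M ≠ 0 ∧ M.card = dg a U := by
  have hne : (Finset.univ.filter (fun S : Finset V => S ⊆ U ∧ a S ≠ 0)).Nonempty := by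
    rw [Finset.nonempty_iff_ne_empty]
    intro he
    unfold dg at h
    rw [he] at h; simp at h
  obtain ⟨M, hM, hM2⟩ := Finset.exists_mem_eq_sup _ hne Finset.card
  simp only [Finset.mem_filter, Finset.mem_univ, true_and] at hM
  exact ⟨M, hM.1, hM.2, hM2.symm⟩

def mask (U : Finset V) (z : V → Bool) : V → Bool := fun i => if i ∈ U then z i else false

lemma QQ_mask (a : Finset V → ℝ) (U : Finset V) (z : V → Bool) :
    QQ a (fun i => bz (mask U z i)) = QQ (fun S => if S ⊆ U then a S else 0) (fun i => bz (z i)) := by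
  unfold QQ
  refine Finset.sum_congr rfl fun S _ => ?_
  beta_reduce
  split_ifs with h
  · congr 1
    refine Finset.prod_congr rfl fun i hi => ?_
    simp [mask, h hi]
  · obtain ⟨i, hi, hiU⟩ := Finset.not_subset.1 h
    rw [Finset.prod_eq_zero hi (by simp [mask, hiU])]; simp

lemma stage (D : ℕ) (hD : 1 ≤ D) (a : Finset V → ℝ) (ha : ∀ S, D < S.card → a S = 0) (U : Finset V) :
    ∃ H : Finset V, H.card ≤ D * RI D ∧ (1 ≤ dg a U →
      (1/2 ≤ Ex hf (fun x : V → Bool => if QQ a (fun i => bz (mask U x i)) = 0 ∨ QQ a (fun i => bz (mask U x i)) = 1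
        then (0:ℝ) else 1)) ∨ ∀ M, M ⊆ U → a M ≠ 0 → M.card = dg a U → ¬ Disjoint M H) := by
  by_cases h1 : 1 ≤ dg a U
  swap
  · exact ⟨∅, by simp, fun h => absurd h h1⟩
  set e := dg a U with he
  set fam : Finset (Finset (Finset V)) := Finset.univ.filter (fun Fm =>
    (∀ A ∈ Fm, ∀ B ∈ Fm, A ≠ B → Disjoint A B) ∧ ∀ M ∈ Fm, M ⊆ U ∧ a M ≠ 0 ∧ M.card = e) with hfam
  obtain ⟨Fm, hFm, hmax⟩ := Finset.exists_max_image fam Finset.card ⟨∅, by simp [hfam]⟩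
  simp only [hfam, Finset.mem_filter, Finset.mem_univ, true_and] at hFm
  by_cases hR : RI D ≤ Fm.card
  · refine ⟨∅, by simp, fun _ => Or.inl ?_⟩
    simp only [QQ_mask]
    refine ac_bz D hD e h1 (dg_le a U D ha) _ ?_ Fm hFm.1 ?_ hR
    · intro S hS
      split_ifs with h
      · by_contra hne
        have := le_dg a U S h hne
        omega
      · rfl
    · intro M hM
      obtain ⟨h2, h3, h4⟩ := hFm.2 M hM
      exact ⟨h4, by simp [h2, h3]⟩
  · refine ⟨Fm.biUnion id, ?_, fun _ => Or.inr ?_⟩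
    · refine Finset.card_biUnion_le.trans ?_
      calc ∑ M ∈ Fm, (id M).card ≤ ∑ M ∈ Fm, D := Finset.sum_le_sum fun M hM => by
            rw [id, (hFm.2 M hM).2.2]; exact dg_le a U D ha
        _ = Fm.card * D := by simp
        _ ≤ RI D * D := Nat.mul_le_mul_right _ (by omega)
        _ = _ := Nat.mul_comm _ _
    · intro M hMU hM0 hMc hdisj
      have hsub : ∀ A ∈ Fm, Disjoint M A := fun A hA =>
        Finset.disjoint_of_subset_right (Finset.subset_biUnion_of_mem id hA) hdisj
      have hnot : M ∉ Fm := fun hM => by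
        have := hsub M hM
        rw [disjoint_self] at this
        have h0 : M.card = 0 := by rw [this]; rfl
        omega
      have := hmax (insert M Fm) (by
        simp only [hfam, Finset.mem_filter, Finset.mem_univ, true_and]
        constructor
        · intro A hA B hB hAB
          rcases Finset.mem_insert.1 hA with hA' | hA'
          · rcases Finset.mem_insert.1 hB with hB' | hB'
            · exact absurd (hA'.trans hB'.symm) hAB
            · rw [hA']; exact hsub B hB'
          · rcases Finset.mem_insert.1 hB with hB' | hB'
            · rw [hB']; exact (hsub A hA').symm
            · exact hFm.1 A hA' B hB' hAB
        · intro A hA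
          rcases Finset.mem_insert.1 hA with rfl | hA
          · exact ⟨hMU, hM0, hMc⟩
          · exact hFm.2 A hA)
      rw [Finset.card_insert_of_notMem hnot] at this
      omega

def ej (j : V) : V → Bool := Function.update (fun _ => false) j true

lemma QQ_ej (a : Finset V → ℝ) (j : V) (h : a {j} = 0) :
    QQ a (fun i => bz (ej j i)) = QQ a (fun i => bz ((fun _ : V => false) i)) := by
  unfold QQ
  refine Finset.sum_congr rfl fun S _ => ?_
  by_cases hS : S ⊆ {j}
  · rcases Finset.subset_singleton_iff.1 hS with rfl | rfl
    · simp
    · rw [h]; simp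
  · obtain ⟨i, hi, hij⟩ := Finset.not_subset.1 hS
    rw [Finset.mem_singleton] at hij
    rw [Finset.prod_eq_zero hi, Finset.prod_eq_zero hi]
    · simp
    · simp [ej, hij]
end Stage

lemma drops (d : ℕ → ℕ) (hd : ∀ l, d (l+1) ≤ d l) (L : ℕ) :
    d L + L ≤ d 0 + ((Finset.range L).filter (fun l => d (l+1) = d l)).card := by
  induction L with
  | zero => simp
  | succ L ih =>
    rw [Finset.range_add_one, Finset.filter_insert]
    have := hd L
    split_ifs with h
    · rw [Finset.card_insert_of_notMem (by simp)]; omega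
    · omega

def KI (D : ℕ) : ℕ := 4 * D * RI D

noncomputable def un (K : ℕ) (_ : Fin K) : ℝ := 1 / K
lemma un_isW {K : ℕ} (hK : 1 ≤ K) : IsW (un K) :=
  ⟨fun _ => by unfold un; positivity, by
    have : (0:ℝ) < K := by exact_mod_cast hK
    simp [un]; field_simp⟩

section Block
variable {L K : ℕ}
def SS (j : Fin L → Fin K) (l : ℕ) : Finset (Fin L → Fin K) :=
  Finset.univ.filter (fun i => ∀ m : Fin L, m.val < l → i m = j m)

lemma SS_anti (j : Fin L → Fin K) (l : ℕ) : SS j (l+1) ⊆ SS j l := fun i hi => by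
  simp only [SS, Finset.mem_filter, Finset.mem_univ, true_and] at hi ⊢
  exact fun m hm => hi m (by omega)

lemma SS_self (j : Fin L → Fin K) (l : ℕ) : j ∈ SS j l := by simp [SS]

lemma SS_update (j : Fin L → Fin K) (l : Fin L) (o : Fin K) : SS (Function.update j l o) l = SS j l := by
  ext i
  simp only [SS, Finset.mem_filter, Finset.mem_univ, true_and]
  refine forall_congr' fun m => ?_
  refine imp_congr_right fun hm => ?_
  have : m ≠ l := by rintro rfl; omega
  rw [Function.update_of_ne this]

lemma Ex_hit {D R : ℕ} (hK : 1 ≤ K) (l : Fin L) (H : Finset (Fin L → Fin K) → Finset (Fin L → Fin K))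
    (hH : ∀ U, (H U).card ≤ R) :
    Ex (un K) (fun j : Fin L → Fin K => if ∃ h ∈ H (SS j l), h l = j l then (1:ℝ) else 0) ≤ R / K := by
  rw [Ex_resample (un_isW hK) _ l]
  have : Ex (un K) (fun j : Fin L → Fin K => (R:ℝ) / K) = R / K := Ex_const (un_isW hK) _
  rw [← this]
  refine Ex_mono (un_isW hK) fun j => ?_
  simp only [SS_update, Function.update_self, un]
  rw [← Finset.mul_sum, div_mul_eq_mul_div, one_mul]
  refine div_le_div_of_nonneg_right ?_ (by positivity)
  rw [← Finset.sum_filter, Finset.sum_const, nsmul_eq_mul, mul_one]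
  refine le_trans ?_ (Nat.cast_le.2 (hH (SS j l)))
  refine Nat.cast_le.2 ?_
  refine le_trans (Finset.card_le_card ?_) (Finset.card_image_le (s := H (SS j l)) (f := fun h => h l))
  intro o ho
  simpa using ho
end Block

theorem block_core (D L K : ℕ) (hD : 1 ≤ D) (hL : L = 2*D+2) (hKdef : K = KI D)
    (g : ((Fin L → Fin K) → Bool) → Bool)
    (hg : Good g D (1/100)) (hs : ∀ j, g (ej j) ≠ g (fun _ => false)) : False := by
  have hRpos : 1 ≤ RI D := by unfold RI; omega
  have hK : 1 ≤ K := by rw [hKdef]; unfold KI; exact Nat.mul_pos (by omega) hRpos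
  have hu := un_isW hK
  have hLr : (0:ℝ) < L := by rw [hL]; positivity
  obtain ⟨P, ⟨a, ha, hPa⟩, herr⟩ := hg (Unit ⊕ ((Fin L → Fin K) ⊕ ((Fin L → Fin K) × Fin L × ((Fin L → Fin K) → Bool))))
    (Sum.elim (fun _ => (fun _ => false)) (Sum.elim (fun j => ej j) (fun p => mask (SS p.1 p.2.1) p.2.2)))
    (Sum.elim (fun _ => 1) (Sum.elim (fun j => ∏ i, un K (j i))
      (fun p => (∏ i, un K (p.1 i)) * ((1/L) * ∏ v, hf (p.2.2 v)))))
    (by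
      rintro (_ | j | p)
      · simp
      · rw [Sum.elim_inr, Sum.elim_inl]; exact Finset.prod_nonneg fun i _ => hu.nn _
      · rw [Sum.elim_inr, Sum.elim_inr]; exact mul_nonneg (Finset.prod_nonneg fun i _ => hu.nn _)
          (mul_nonneg (by positivity) (Finset.prod_nonneg fun i _ => hf_isW.nn _)))
  set er : ((Fin L → Fin K) → Bool) → ℝ := fun z => if P z = bz (g z) then (0:ℝ) else 1 with her
  have er0 : ∀ z, 0 ≤ er z := fun z => by rw [her]; positivity
  simp only [Fintype.sum_sum_type, Sum.elim_inl, Sum.elim_inr, Fintype.sum_prod_type, one_mul,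
    Finset.univ_unique, Finset.sum_singleton] at herr
  change er (fun _ => false) + (Ex (un K) (fun j => er (ej j)) + ∑ j, ∑ l : Fin L, ∑ z, (∏ i, un K (j i)) * ((1/L) * ∏ v, hf (z v)) * er (mask (SS j l) z)) ≤ _ at herr
  have e3 : (∑ j, ∑ l : Fin L, ∑ z, (∏ i, un K (j i)) * ((1/L) * ∏ v, hf (z v)) * er (mask (SS j l) z)) =
      Ex (un K) (fun j : Fin L → Fin K => ∑ l : Fin L, (1/(L:ℝ)) * Ex hf (fun z => er (mask (SS j l) z))) := by
    unfold Ex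
    refine Finset.sum_congr rfl fun j _ => ?_
    simp only [Finset.mul_sum]
    refine Finset.sum_congr rfl fun l _ => Finset.sum_congr rfl fun z _ => ?_
    ring
  have e4 : (∑ j : Fin L → Fin K, ∑ l : Fin L, ∑ z : (Fin L → Fin K) → Bool, (∏ i, un K (j i)) * ((1/(L:ℝ)) * ∏ v, hf (z v))) = 1 := by
    have h1 : (∑ j : Fin L → Fin K, ∑ l : Fin L, ∑ z : (Fin L → Fin K) → Bool, (∏ i, un K (j i)) * ((1/(L:ℝ)) * ∏ v, hf (z v))) =
      Ex (un K) (fun j : Fin L → Fin K => ∑ l : Fin L, (1/(L:ℝ)) * Ex hf (fun z : (Fin L → Fin K) → Bool => (1:ℝ))) := by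
      unfold Ex
      refine Finset.sum_congr rfl fun j _ => ?_
      simp only [Finset.mul_sum]
      refine Finset.sum_congr rfl fun l _ => Finset.sum_congr rfl fun z _ => ?_
      ring
    rw [h1, Ex_const hf_isW]
    have : (∑ l : Fin L, (1/(L:ℝ)) * 1) = 1 := by
      simp; field_simp
    rw [this]
    exact Ex_const hu 1
  have e5 : ∑ j : Fin L → Fin K, ∏ i, un K (j i) = 1 := by
    have := Ex_const (V := Fin L) hu 1
    simpa [Ex] using this
  rw [e3, e4, e5] at herr
  choose H hHc hH using stage D hD a ha
  -- pointwise inequality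
  have hpt : ∀ j : Fin L → Fin K, 1 ≤ er (fun _ => false) + er (ej j) +
      1/(D+1) * ∑ l : Fin L, (2 * Ex hf (fun z => er (mask (SS j l) z)) +
        (if ∃ h ∈ H (SS j l), h l = j l then (1:ℝ) else 0)) := by
    intro j
    have hstage0 : ∀ l : Fin L, 0 ≤ (2 * Ex hf (fun z => er (mask (SS j l) z)) +
        (if ∃ h ∈ H (SS j l), h l = j l then (1:ℝ) else 0)) := by
      intro l
      have := Ex_nonneg hf_isW (fun z => er0 (mask (SS j l) z))
      have h2 : (0:ℝ) ≤ (if ∃ h ∈ H (SS j l), h l = j l then (1:ℝ) else 0) := by positivity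
      linarith
    by_cases haj : a {j} = 0
    · have hPe : P (ej j) = P (fun _ => false) := by rw [hPa, hPa]; exact QQ_ej a j haj
      have hsum : 0 ≤ 1/((D:ℝ)+1) * ∑ l : Fin L, (2 * Ex hf (fun z => er (mask (SS j l) z)) +
        (if ∃ h ∈ H (SS j l), h l = j l then (1:ℝ) else 0)) :=
        mul_nonneg (by positivity) (Finset.sum_nonneg fun l _ => hstage0 l)
      have : 1 ≤ er (fun _ => false) + er (ej j) := by
        by_cases h1 : P (fun _ => false) = bz (g (fun _ => false))
        · have h2 : ¬ P (ej j) = bz (g (ej j)) := by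
            rw [hPe, h1]
            have := hs j
            cases h3 : g (ej j) <;> cases h4 : g (fun _ => false) <;> simp_all
          have h3 : er (ej j) = 1 := by rw [her]; simp only [h2, if_false]
          have := er0 (fun _ => false)
          linarith
        · have h3 : er (fun _ => false) = 1 := by rw [her]; simp only [h1, if_false]
          have := er0 (ej j)
          linarith
      linarith
    · set d : ℕ → ℕ := fun l => dg a (SS j l) with hd
      have hd1 : ∀ l, 1 ≤ d l := fun l => by
        have := le_dg a (SS j l) {j} (by simpa using SS_self j l) haj
        simpa using this
      have hdr := drops d (fun l => dg_mono a (SS_anti j l)) L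
      have hd0 : d 0 ≤ D := dg_le a _ D ha
      have hdL := hd1 L
      have hcount : D + 1 ≤ ((Finset.range L).filter (fun l => d (l+1) = d l)).card := by omega
      have hnd : ∀ l : Fin L, d (l+1) = d l → 1 ≤ 2 * Ex hf (fun z => er (mask (SS j l) z)) +
        (if ∃ h ∈ H (SS j l), h l = j l then (1:ℝ) else 0) := by
        intro l hl
        rcases hH (SS j l) (hd1 l) with hb | hb
        · have h1 : Ex hf (fun x : (Fin L → Fin K) → Bool => if QQ a (fun i => bz (mask (SS j l) x i)) = 0 ∨ QQ a (fun i => bz (mask (SS j l) x i)) = 1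
              then (0:ℝ) else 1) ≤ Ex hf (fun z => er (mask (SS j l) z)) := by
            refine Ex_mono hf_isW fun z => ?_
            rw [← hPa, her]; dsimp only
            by_cases hc : P (mask (SS j l) z) = bz (g (mask (SS j l) z))
            · rw [if_pos]
              · positivity
              · rw [hc]; cases g (mask (SS j l) z) <;> simp
            · rw [if_neg hc]; split_ifs <;> norm_num
          have h2 : (0:ℝ) ≤ (if ∃ h ∈ H (SS j l), h l = j l then (1:ℝ) else 0) := by positivity
          linarith
        · obtain ⟨M, hM1, hM2, hM3⟩ := dg_attained a (SS j (l+1)) (hd1 _)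
          have h1 := hb M (hM1.trans (SS_anti j l)) hM2 (hM3.trans hl)
          obtain ⟨h, hhM, hhH⟩ := Finset.not_disjoint_iff.1 h1
          have h2 : h l = j l := by
            have := hM1 hhM
            simp only [SS, Finset.mem_filter, Finset.mem_univ, true_and] at this
            exact this l (by omega)
          rw [if_pos ⟨h, hhH, h2⟩]
          have := Ex_nonneg hf_isW (fun z => er0 (mask (SS j l) z))
          linarith
      have hge : ((D:ℝ)+1) ≤ ∑ l : Fin L, (2 * Ex hf (fun z => er (mask (SS j l) z)) +
        (if ∃ h ∈ H (SS j l), h l = j l then (1:ℝ) else 0)) := by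
        calc ((D:ℝ)+1) ≤ (((Finset.range L).filter (fun l => d (l+1) = d l)).card : ℝ) := by exact_mod_cast hcount
          _ = ∑ l : Fin L, (if d (l+1) = d l then (1:ℝ) else 0) := by
              rw [Fin.sum_univ_eq_sum_range (fun l => if d (l+1) = d l then (1:ℝ) else 0) L]
              simp
          _ ≤ _ := by
              refine Finset.sum_le_sum fun l _ => ?_
              by_cases h : d (l+1) = d l
              · rw [if_pos h]; exact hnd l h
              · rw [if_neg h]; exact hstage0 l
      have h0 := er0 (fun _ => false)
      have h1 := er0 (ej j)
      have : 1 ≤ 1/((D:ℝ)+1) * ∑ l : Fin L, (2 * Ex hf (fun z => er (mask (SS j l) z)) +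
        (if ∃ h ∈ H (SS j l), h l = j l then (1:ℝ) else 0)) := by
        rw [div_mul_eq_mul_div, one_mul, le_div_iff₀ (by positivity), one_mul]; exact hge
      linarith
  have hfin := Ex_mono hu hpt
  rw [Ex_const hu, Ex_add, Ex_add, Ex_const hu, Ex_mul, Ex_sum] at hfin
  have hN : ∀ l : Fin L, Ex (un K) (fun j : Fin L → Fin K => (2 * Ex hf (fun z => er (mask (SS j l) z)) +
        (if ∃ h ∈ H (SS j l), h l = j l then (1:ℝ) else 0))) ≤
        2 * Ex (un K) (fun j : Fin L → Fin K => Ex hf (fun z => er (mask (SS j l) z))) + 1/4 := by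
    intro l
    rw [Ex_add, Ex_mul]
    have := Ex_hit (D := D) (R := D * RI D) hK l H hHc
    have h2 : ((D * RI D : ℕ):ℝ) / K = 1/4 := by
      have h3 : (0:ℝ) < RI D := by exact_mod_cast hRpos
      have h4 : (0:ℝ) < D := by exact_mod_cast hD
      rw [hKdef]; unfold KI; push_cast; field_simp
    rw [h2] at this
    linarith
  have hsum := Finset.sum_le_sum fun l (_ : l ∈ (Finset.univ : Finset (Fin L))) => hN l
  rw [Finset.sum_add_distrib, ← Finset.mul_sum] at hsum
  set A := ∑ l : Fin L, Ex (un K) (fun j : Fin L → Fin K => Ex hf (fun z => er (mask (SS j l) z))) with hA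
  have e6 : Ex (un K) (fun j : Fin L → Fin K => ∑ l : Fin L, (1/(L:ℝ)) * Ex hf (fun z => er (mask (SS j l) z))) = 1/L * A := by
    rw [Ex_sum, hA, Finset.mul_sum]
    refine Finset.sum_congr rfl fun l _ => ?_
    rw [Ex_mul]
  rw [e6] at herr
  have hLe : (L:ℝ) = 2*(D+1) := by rw [hL]; push_cast; ring
  have e7 : (∑ l : Fin L, (1/4:ℝ)) = (D+1)/2 := by simp; rw [hLe]; ring
  rw [e7] at hsum
  have hDp : (0:ℝ) < (D:ℝ)+1 := by positivity
  have h8 := mul_le_mul_of_nonneg_left hsum (by positivity : (0:ℝ) ≤ 1/((D:ℝ)+1))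
  have e9 : 1/((D:ℝ)+1) * (2*A + (D+1)/2) = 4 * (1/L * A) + 1/2 := by
    rw [hLe]; field_simp; ring
  rw [e9] at h8
  have h10 : 0 ≤ er (fun _ => false) := er0 _
  have h11 : 0 ≤ Ex (un K) (fun j : Fin L → Fin K => er (ej j)) := Ex_nonneg hu fun j => er0 _
  linarith

theorem block_bound (D : ℕ) (hD : 1 ≤ D) (g : ((Fin (2*D+2) → Fin (KI D)) → Bool) → Bool)
    (hg : Good g D (1/100)) (hs : ∀ j, g (ej j) ≠ g (fun _ => false)) : False :=
  block_core D _ _ hD rfl rfl g hg hs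

/-! ### Certificates -/
def BI (D : ℕ) : ℕ := (KI D)^(2*D+2)

section Cert
variable {W : Type} [Fintype W] [DecidableEq W]

def flp (x : W → Bool) (β : Finset W) : W → Bool := fun i => if i ∈ β then !(x i) else x i

lemma blocks_lt (D : ℕ) (hD : 1 ≤ D) (f : (W → Bool) → Bool) (hf : Good f D (1/100)) (x : W → Bool)
    (Fm : Finset (Finset W)) (hdisj : ∀ A ∈ Fm, ∀ B ∈ Fm, A ≠ B → Disjoint A B)
    (hs : ∀ β ∈ Fm, f (flp x β) ≠ f x) : Fm.card < BI D := by
  by_contra hcon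
  push Not at hcon
  have hcard : Fintype.card (Fin (2*D+2) → Fin (KI D)) ≤ Fintype.card Fm := by
    simpa [BI] using hcon
  obtain ⟨φ⟩ := Function.Embedding.nonempty_of_card_le hcard
  have huniq : ∀ i v v', i ∈ (φ v).1 → i ∈ (φ v').1 → v = v' := by
    intro i v v' h1 h2
    by_contra hne
    have h3 : (φ v).1 ≠ (φ v').1 := fun h => hne (φ.injective (Subtype.ext h))
    exact Finset.disjoint_left.1 (hdisj _ (φ v).2 _ (φ v').2 h3) h1 h2
  set pt : ((Fin (2*D+2) → Fin (KI D)) → Bool) → (W → Bool) :=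
    fun z i => if ∃ v, i ∈ (φ v).1 ∧ z v = true then !(x i) else x i with hpt
  have hLD : ∀ i, LD 1 (fun z => bz (pt z i)) := by
    intro i
    by_cases hex : ∃ v, i ∈ (φ v).1
    · obtain ⟨v, hv⟩ := hex
      have h1 : ∀ z : (Fin (2*D+2) → Fin (KI D)) → Bool, (∃ v', i ∈ (φ v').1 ∧ z v' = true) ↔ z v = true := by
        intro z
        constructor
        · rintro ⟨v', h1, h2⟩
          rwa [huniq i v v' hv h1]
        · exact fun h => ⟨v, hv, h⟩
      cases hx : x i
      · refine LD_congr (LD_coord v) fun z => ?_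
        simp only [hpt, h1, hx]
        cases z v <;> simp
      · refine LD_congr (LD_coord_not v) fun z => ?_
        simp only [hpt, h1, hx]
        cases z v <;> simp
    · refine LD_congr (LD_const 1 (bz (x i))) fun z => ?_
      rw [hpt]; dsimp only
      rw [if_neg]
      rintro ⟨v, h1, _⟩
      exact hex ⟨v, h1⟩
  refine block_bound D hD (fun z => f (pt z)) (Good_subst hf pt hLD) fun j => ?_
  have e1 : pt (ej j) = flp x (φ j).1 := by
    ext i
    simp only [hpt, flp]
    have : (∃ v, i ∈ (φ v).1 ∧ ej j v = true) ↔ i ∈ (φ j).1 := by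
      constructor
      · rintro ⟨v, h1, h2⟩
        by_cases hvj : v = j
        · exact hvj ▸ h1
        · simp [ej, hvj] at h2
      · exact fun h => ⟨j, h, by simp [ej]⟩
    simp only [this]
  have e2 : pt (fun _ => false) = x := by
    ext i; simp [hpt]
  beta_reduce
  rw [e1, e2]
  exact hs _ (φ j).2

lemma min_block (D : ℕ) (hD : 1 ≤ D) (f : (W → Bool) → Bool) (hf : Good f D (1/100)) (x : W → Bool)
    (β : Finset W) (h1 : f (flp x β) ≠ f x) (h2 : ∀ β', β' ⊂ β → f (flp x β') = f x) : β.card < BI D := by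
  have := blocks_lt D hD f hf (flp x β) (β.image (fun i => {i})) ?_ ?_
  · rwa [Finset.card_image_of_injective _ Finset.singleton_injective] at this
  · intro A hA B hB hAB
    obtain ⟨a, _, rfl⟩ := Finset.mem_image.1 hA
    obtain ⟨b, _, rfl⟩ := Finset.mem_image.1 hB
    simpa [eq_comm] using fun h : a = b => hAB (by rw [h])
  · intro A hA
    obtain ⟨i, hi, rfl⟩ := Finset.mem_image.1 hA
    have : flp (flp x β) {i} = flp x (β.erase i) := by
      ext k
      by_cases hk : k = i
      · subst hk; simp [flp, hi]
      · simp [flp, hk]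
    rw [this, h2 _ (Finset.erase_ssubset hi)]
    exact h1.symm

lemma certificate (D : ℕ) (hD : 1 ≤ D) (f : (W → Bool) → Bool) (hf : Good f D (1/100)) (x : W → Bool) :
    ∃ C : Finset W, C.card ≤ (BI D)^2 ∧ ∀ y, (∀ i ∈ C, y i = x i) → f y = f x := by
  set fam : Finset (Finset (Finset W)) := Finset.univ.filter (fun Fm =>
    (∀ A ∈ Fm, ∀ B ∈ Fm, A ≠ B → Disjoint A B) ∧
      ∀ β ∈ Fm, f (flp x β) ≠ f x ∧ ∀ β', β' ⊂ β → f (flp x β') = f x) with hfam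
  obtain ⟨Fm, hFm, hmax⟩ := Finset.exists_max_image fam Finset.card ⟨∅, by simp [hfam]⟩
  simp only [hfam, Finset.mem_filter, Finset.mem_univ, true_and] at hFm
  refine ⟨Fm.biUnion id, ?_, ?_⟩
  · refine Finset.card_biUnion_le.trans ?_
    have hc := blocks_lt D hD f hf x Fm hFm.1 (fun β hβ => (hFm.2 β hβ).1)
    calc ∑ M ∈ Fm, (id M).card ≤ ∑ M ∈ Fm, BI D := Finset.sum_le_sum fun M hM =>
          (min_block D hD f hf x M (hFm.2 M hM).1 (hFm.2 M hM).2).le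
      _ = Fm.card * BI D := by simp
      _ ≤ BI D * BI D := Nat.mul_le_mul_right _ hc.le
      _ = _ := by ring
  · intro y hy
    by_contra hne
    set β := Finset.univ.filter (fun i => y i ≠ x i) with hβ
    have hyβ : flp x β = y := by
      ext i
      by_cases h : y i = x i
      · simp [flp, hβ, h]
      · simp only [flp, hβ, Finset.mem_filter, Finset.mem_univ, true_and, ne_eq, h, not_false_eq_true, if_true]
        cases h1 : y i <;> cases h2 : x i <;> simp_all
    obtain ⟨M, hM, hMmin⟩ := Finset.exists_min_image (β.powerset.filter (fun M => f (flp x M) ≠ f x)) Finset.card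
      ⟨β, by simp [hyβ, hne]⟩
    simp only [Finset.mem_filter, Finset.mem_powerset] at hM hMmin
    have hMm : ∀ β', β' ⊂ M → f (flp x β') = f x := by
      intro β' hβ'
      by_contra h
      have := hMmin β' ⟨hβ'.1.trans hM.1, h⟩
      have := Finset.card_lt_card hβ'
      omega
    have hMne : M.Nonempty := by
      rw [Finset.nonempty_iff_ne_empty]
      rintro rfl
      exact hM.2 (by congr 1)
    have hsub : ∀ A ∈ Fm, Disjoint M A := by
      intro A hA
      rw [Finset.disjoint_left]
      intro i hi hiA
      have h1 := hM.1 hi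
      simp only [hβ, Finset.mem_filter, Finset.mem_univ, true_and] at h1
      exact h1 (hy i (Finset.mem_biUnion.2 ⟨A, hA, hiA⟩))
    have hnot : M ∉ Fm := fun h => by
      have := hsub M h
      rw [disjoint_self] at this
      exact hMne.ne_empty this
    have := hmax (insert M Fm) (by
      simp only [hfam, Finset.mem_filter, Finset.mem_univ, true_and]
      constructor
      · intro A hA B hB hAB
        rcases Finset.mem_insert.1 hA with hA' | hA'
        · rcases Finset.mem_insert.1 hB with hB' | hB'
          · exact absurd (hA'.trans hB'.symm) hAB
          · rw [hA']; exact hsub B hB'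
        · rcases Finset.mem_insert.1 hB with hB' | hB'
          · rw [hB']; exact (hsub A hA').symm
          · exact hFm.1 A hA' B hB' hAB
      · intro A hA
        rcases Finset.mem_insert.1 hA with hA' | hA'
        · rw [hA']; exact ⟨hM.2, hMm⟩
        · exact hFm.2 A hA')
    rw [Finset.card_insert_of_notMem hnot] at this
    omega
end Cert

/-! ### Hashing -/
section Hash
variable {W : Type} [Fintype W] [DecidableEq W]

lemma Ex_hash1 {m : ℕ} (hm : 1 ≤ m) (z0 : Fin m) (i : W) :
    Ex (un m) (fun h : W → Fin m => if h i = z0 then (1:ℝ) else 0) = 1 / m := by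
  rw [Ex_resample (un_isW hm) _ i]
  have : ∀ ω : W → Fin m, ∑ o, un m o * (if (Function.update ω i o) i = z0 then (1:ℝ) else 0) = 1 / m := by
    intro ω
    simp [un]
  simp only [this]
  exact Ex_const (un_isW hm) _

lemma Ex_hash2 {m : ℕ} (hm : 1 ≤ m) (z0 : Fin m) (i u v : W) (huv : u ≠ v) (hv : v ≠ i) :
    Ex (un m) (fun h : W → Fin m => if h i = z0 ∧ h u = h v then (1:ℝ) else 0) = 1 / m * (1 / m) := by
  rw [Ex_resample (un_isW hm) _ v]
  have : ∀ ω : W → Fin m, ∑ o, un m o * (if (Function.update ω v o) i = z0 ∧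
      (Function.update ω v o) u = (Function.update ω v o) v then (1:ℝ) else 0)
      = 1 / m * (if ω i = z0 then (1:ℝ) else 0) := by
    intro ω
    simp only [Function.update_of_ne huv, Function.update_of_ne hv.symm, Function.update_self]
    by_cases h : ω i = z0 <;> simp [un, h]
  simp only [this]
  rw [Ex_mul, Ex_hash1 hm]

lemma Ex_hash3 {m : ℕ} (hm : 1 ≤ m) (z0 : Fin m) (i u v : W) (huv : u ≠ v) :
    Ex (un m) (fun h : W → Fin m => if h i = z0 ∧ h u = h v then (1:ℝ) else 0) = 1 / m * (1 / m) := by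
  by_cases hv : v = i
  · have : ∀ h : W → Fin m, (if h i = z0 ∧ h u = h v then (1:ℝ) else 0) =
        if h i = z0 ∧ h v = h u then (1:ℝ) else 0 := fun h =>
        if_congr (and_congr_right' eq_comm) rfl rfl
    simp only [this]
    exact Ex_hash2 hm z0 i v u huv.symm (by rw [← hv]; exact huv)
  · exact Ex_hash2 hm z0 i u v huv hv

lemma hash_exists (s m : ℕ) (hm : m = 2*(s+1)^2) (z0 : Fin m) (A : W → Finset W) (hA : ∀ i, (A i).card ≤ s) :
    ∃ h : W → Fin m, Fintype.card W ≤ 2 * m *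
      (Finset.univ.filter (fun i => h i = z0 ∧ Set.InjOn h (insert i (A i) : Finset W))).card := by
  have hm1 : 1 ≤ m := by rw [hm]; have : 0 < (s+1)^2 := by positivity
                         omega
  have hw := un_isW hm1
  have hmR : (m:ℝ) = 2 * ((s:ℝ)+1)^2 := by rw [hm]; push_cast; ring
  have hmp : (0:ℝ) < m := by exact_mod_cast hm1
  set gd : (W → Fin m) → W → ℝ := fun h i =>
    if h i = z0 ∧ Set.InjOn h (insert i (A i) : Finset W) then 1 else 0 with hgd
  have h1 : ∀ i, 1 / (2 * m : ℝ) ≤ Ex (un m) (fun h => gd h i) := by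
    intro i
    set T := (insert i (A i)).offDiag with hT
    have hTc : (T.card : ℝ) ≤ ((s:ℝ)+1)^2 := by
      have h2 : (insert i (A i)).card ≤ s + 1 := (Finset.card_insert_le _ _).trans (by have := hA i; omega)
      have h3 : T.card ≤ (s+1)^2 := by
        rw [hT, Finset.offDiag_card, sq]
        exact (Nat.sub_le _ _).trans (Nat.mul_le_mul h2 h2)
      exact_mod_cast h3
    have h4 : Ex (un m) (fun h : W → Fin m => (if h i = z0 then (1:ℝ) else 0) -
        ∑ p ∈ T, if h i = z0 ∧ h p.1 = h p.2 then (1:ℝ) else 0) ≤ Ex (un m) (fun h => gd h i) := by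
      refine Ex_mono hw fun h => ?_
      have hnn : 0 ≤ ∑ p ∈ T, if h i = z0 ∧ h p.1 = h p.2 then (1:ℝ) else 0 :=
        Finset.sum_nonneg fun p _ => by split_ifs <;> norm_num
      by_cases hz : h i = z0
      · by_cases hinj : Set.InjOn h (insert i (A i) : Finset W)
        · have : gd h i = 1 := by rw [hgd]; exact if_pos ⟨hz, hinj⟩
          rw [this, if_pos hz]; linarith
        · have : gd h i = 0 := by rw [hgd]; exact if_neg fun hh => hinj hh.2
          rw [this, if_pos hz]
          unfold Set.InjOn at hinj
          push Not at hinj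
          obtain ⟨u, hu, v, hv, e, ne⟩ := hinj
          have hm : (u, v) ∈ T := by
            rw [hT, Finset.mem_offDiag]; exact ⟨hu, hv, ne⟩
          have := Finset.single_le_sum (f := fun p : W × W => if h i = z0 ∧ h p.1 = h p.2 then (1:ℝ) else 0)
            (fun p _ => by beta_reduce; split_ifs <;> norm_num) hm
          beta_reduce at this
          rw [if_pos ⟨hz, e⟩] at this
          linarith
      · have : gd h i = 0 := by rw [hgd]; exact if_neg fun hh => hz hh.1
        rw [this, if_neg hz]; linarith
    rw [Ex_sub, Ex_hash1 hm1, Ex_sum] at h4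
    have h5 : ∑ p ∈ T, Ex (un m) (fun h : W → Fin m => if h i = z0 ∧ h p.1 = h p.2 then (1:ℝ) else 0)
        = T.card * (1 / m * (1 / m)) := by
      rw [Finset.sum_congr rfl fun p hp => Ex_hash3 hm1 z0 i p.1 p.2 (Finset.mem_offDiag.1 hp).2.2]
      rw [Finset.sum_const, nsmul_eq_mul]
    rw [h5] at h4
    refine le_trans ?_ h4
    have h6 : (T.card:ℝ) * (1 / m * (1 / m)) ≤ (m/2) * (1 / m * (1 / m)) := by
      refine mul_le_mul_of_nonneg_right (by linarith) (by positivity)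
    have h7 : (m/2 : ℝ) * (1 / m * (1 / m)) = 1 / (2*m) := by field_simp
    have h8 : (1 / m : ℝ) = 1 / (2*m) + 1/(2*m) := by field_simp; norm_num
    linarith
  obtain ⟨h, hh⟩ := Ex_exists_le hw (fun h : W → Fin m => - ∑ i, gd h i)
  refine ⟨h, ?_⟩
  have h9 : Ex (un m) (fun h : W → Fin m => - ∑ i, gd h i) = - ∑ i, Ex (un m) (fun h => gd h i) := by
    rw [← Ex_sum]
    have := Ex_mul (un m) (-1) (fun h : W → Fin m => ∑ i, gd h i)
    simpa using this
  rw [h9] at hh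
  have h10 : (Fintype.card W : ℝ) * (1 / (2*m)) ≤ ∑ i, Ex (un m) (fun h => gd h i) := by
    have := Finset.card_nsmul_le_sum Finset.univ (fun i => Ex (un m) (fun h => gd h i)) _ (fun i _ => h1 i)
    simpa [nsmul_eq_mul] using this
  have h11 : ∑ i, gd h i = ((Finset.univ.filter (fun i => h i = z0 ∧ Set.InjOn h (insert i (A i) : Finset W))).card : ℝ) := by
    rw [hgd]; simp only [Finset.sum_boole]
  have h12 : (Fintype.card W : ℝ) * (1 / (2*m)) ≤ ((Finset.univ.filter (fun i => h i = z0 ∧ Set.InjOn h (insert i (A i) : Finset W))).card : ℝ) := by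
    rw [← h11]; linarith
  rw [mul_one_div, div_le_iff₀ (by positivity)] at h12
  have : (Fintype.card W : ℝ) ≤ ((2 * m * (Finset.univ.filter (fun i => h i = z0 ∧ Set.InjOn h (insert i (A i) : Finset W))).card : ℕ) : ℝ) := by
    rw [Nat.cast_mul, Nat.cast_mul, mul_comm]; exact h12
  exact_mod_cast this
end Hash

/-! ### Counting -/
section Count
variable {G : Type} [Fintype G] [DecidableEq G]

lemma pivots (d : ℕ) : ∀ W : Submodule ℝ (G → ℝ), Module.finrank ℝ W ≤ d →
    ∃ J : Finset G, J.card ≤ d ∧ ∀ x ∈ W, (∀ j ∈ J, x j = 0) → x = 0 := by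
  induction d with
  | zero =>
    intro W hW
    refine ⟨∅, by simp, fun x hx _ => ?_⟩
    have : W = ⊥ := Submodule.finrank_eq_zero.1 (Nat.le_zero.1 hW)
    rw [this] at hx
    simpa using hx
  | succ d ih =>
    intro W hW
    by_cases hb : W = ⊥
    · refine ⟨∅, by simp, fun x hx _ => ?_⟩
      rw [hb] at hx
      simpa using hx
    · obtain ⟨w, hw, hw0⟩ := Submodule.exists_mem_ne_zero_of_ne_bot hb
      obtain ⟨i, hi⟩ := Function.ne_iff.1 hw0
      have hlt : W ⊓ LinearMap.ker (LinearMap.proj i : (G → ℝ) →ₗ[ℝ] ℝ) < W := by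
        refine lt_of_le_of_ne inf_le_left fun h => ?_
        have : w ∈ W ⊓ LinearMap.ker (LinearMap.proj i : (G → ℝ) →ₗ[ℝ] ℝ) := by rw [h]; exact hw
        exact hi (by simpa using this.2)
      have hfr := Submodule.finrank_lt_finrank_of_lt hlt
      obtain ⟨J, hJ, hJ2⟩ := ih (W ⊓ LinearMap.ker (LinearMap.proj i : (G → ℝ) →ₗ[ℝ] ℝ)) (by omega)
      refine ⟨insert i J, (Finset.card_insert_le _ _).trans (by omega), fun x hx hz => ?_⟩
      refine hJ2 x ⟨hx, ?_⟩ fun j hj => hz j (Finset.mem_insert_of_mem hj)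
      simpa using hz i (Finset.mem_insert_self _ _)

lemma bz_inj {a b : Bool} (h : bz a = bz b) : a = b := by
  cases a <;> cases b <;> simp_all

lemma bool_in_span (U : Finset (G → ℝ)) (S : Finset (G → Bool))
    (hS : ∀ x ∈ S, (fun i => bz (x i)) ∈ Submodule.span ℝ (U : Set (G → ℝ))) : S.card ≤ 2 ^ U.card := by
  obtain ⟨J, hJ, hJ2⟩ := pivots U.card (Submodule.span ℝ (U : Set (G → ℝ))) (finrank_span_finset_le_card U)
  have h1 : S.card ≤ (Finset.univ : Finset (J → Bool)).card := by
    refine Finset.card_le_card_of_injOn (fun x j => x j) (fun _ _ => by simp) fun x hx y hy hxy => ?_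
    have h2 := hJ2 _ (Submodule.sub_mem _ (hS x hx) (hS y hy)) fun j hj => by
      have := congrFun hxy ⟨j, hj⟩
      beta_reduce at this
      simp only [Pi.sub_apply, this, sub_self]
    ext i
    have h3 := congrFun h2 i
    simp only [Pi.sub_apply, Pi.zero_apply, sub_eq_zero] at h3
    exact bz_inj h3
  refine h1.trans ?_
  simp only [Finset.card_univ, Fintype.card_fun, Fintype.card_bool, Fintype.card_coe]
  exact Nat.pow_le_pow_right (by norm_num) hJ

lemma count_main (R : ℕ) (F : (G → Bool) → (G → Bool)) (hF : Function.Injective F)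
    (p : (G → Bool) → (G → ℝ)) (U : Finset (G → ℝ)) (hU : U.card ≤ R)
    (hp : ∀ y, p y ∈ Submodule.span ℝ (U : Set (G → ℝ)))
    (herr : ∑ y, ((Finset.univ.filter (fun i => p y i ≠ bz (F y i))).card : ℝ) ≤
      (Fintype.card G : ℝ) * 2 ^ (Fintype.card G) / 100) :
    Fintype.card G ≤ 2 * R + 2 := by
  set q := Fintype.card G with hq
  rcases Nat.eq_zero_or_pos q with hq0 | hqp
  · omega
  set err : (G → Bool) → Finset G := fun y => Finset.univ.filter (fun i => p y i ≠ bz (F y i)) with herrd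
  set good : Finset (G → Bool) := Finset.univ.filter (fun y => (err y).card ≤ q / 50) with hgood
  -- many good points
  have hg1 : 2 ^ q ≤ 2 * good.card := by
    set bad : Finset (G → Bool) := Finset.univ.filter (fun y => ¬ (err y).card ≤ q / 50) with hbad
    have h1 : good.card + bad.card = 2 ^ q := by
      rw [hgood, hbad, Finset.card_filter_add_card_filter_not]
      simp [hq]
    have h2 : (bad.card : ℝ) * (q / 50) ≤ ∑ y, ((err y).card : ℝ) := by
      have h3 : (bad.card : ℝ) * (q / 50) ≤ ∑ y ∈ bad, ((err y).card : ℝ) := by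
        have := Finset.card_nsmul_le_sum bad (fun y => ((err y).card : ℝ)) (q/50) fun y hy => by
          have h4 := (Finset.mem_filter.1 hy).2
          have h5 : q ≤ 50 * (err y).card := by omega
          have h6 : (q:ℝ) ≤ 50 * (err y).card := by exact_mod_cast h5
          linarith
        rwa [nsmul_eq_mul] at this
      exact h3.trans (Finset.sum_le_sum_of_subset_of_nonneg (Finset.subset_univ _) fun _ _ _ => by positivity)
    have hqR : (0:ℝ) < q := by exact_mod_cast hqp
    have h7 : (bad.card : ℝ) * 2 ≤ 2 ^ q := by
      have h8 : (q:ℝ) * ((bad.card : ℝ) * 2) ≤ q * 2 ^ q := by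
        have := h2.trans herr
        linarith
      exact le_of_mul_le_mul_left h8 hqR
    have h9 : bad.card * 2 ≤ 2 ^ q := by exact_mod_cast h7
    omega
  have hg2 : good.card ≤ ∑ E : Finset G, if E.card ≤ q / 50 then 2 ^ (R + E.card) else 0 := by
    have h1 : good.card = ∑ E : Finset G, (good.filter (fun y => err y = E)).card :=
      Finset.card_eq_sum_card_fiberwise fun _ _ => by simp
    rw [h1]
    refine Finset.sum_le_sum fun E _ => ?_
    split_ifs with hE
    · have h2 : ((good.filter (fun y => err y = E)).image F).card ≤
          2 ^ (U ∪ E.image (fun i => (Pi.single i 1 : G → ℝ))).card := by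
        refine bool_in_span _ _ fun x hx => ?_
        obtain ⟨y, hy, rfl⟩ := Finset.mem_image.1 hx
        have hyE := (Finset.mem_filter.1 hy).2
        have h3 : (fun i => bz (F y i)) = p y + ∑ i ∈ E, (bz (F y i) - p y i) • (Pi.single i 1 : G → ℝ) := by
          ext i
          simp only [Pi.add_apply, Finset.sum_apply, Pi.smul_apply, smul_eq_mul, Pi.single_apply, mul_ite, mul_one, mul_zero,
            Finset.sum_ite_eq]
          split_ifs with hi
          · ring
          · rw [← hyE] at hi
            simp only [herrd, Finset.mem_filter, Finset.mem_univ, true_and, not_not] at hi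
            rw [hi]; ring
        rw [h3]
        refine Submodule.add_mem _ (Submodule.span_mono (by simp) (hp y)) (Submodule.sum_mem _ fun i hi =>
          Submodule.smul_mem _ _ (Submodule.subset_span ?_))
        simp only [Finset.coe_union, Finset.coe_image, Set.mem_union, Set.mem_image, Finset.mem_coe]
        exact Or.inr ⟨i, hi, rfl⟩
      rw [Finset.card_image_of_injective _ hF] at h2
      refine h2.trans (Nat.pow_le_pow_right (by norm_num) ((Finset.card_union_le _ _).trans ?_))
      exact Nat.add_le_add hU Finset.card_image_le
    · rw [Nat.le_zero, Finset.card_eq_zero, Finset.filter_eq_empty_iff]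
      intro y hy hyE
      rw [← hyE] at hE
      exact hE (Finset.mem_filter.1 hy).2
  have hg3 : (∑ E : Finset G, if E.card ≤ q / 50 then 2 ^ (R + E.card) else 0) * 32 ^ q ≤
      2 ^ R * 64 ^ (q/50) * 33 ^ q := by
    have h1 : (33:ℕ) ^ q = ∑ E : Finset G, 1 ^ E.card * 32 ^ (q - E.card) := by
      rw [hq, Fintype.sum_pow_mul_eq_add_pow]
    rw [h1, Finset.mul_sum, Finset.sum_mul]
    refine Finset.sum_le_sum fun E _ => ?_
    split_ifs with hE
    · have hEq : E.card ≤ q := hE.trans (Nat.div_le_self _ _)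
      have h2 : (32:ℕ) ^ q = 32 ^ E.card * 32 ^ (q - E.card) := by
        rw [← pow_add]; congr 1; omega
      rw [h2, pow_add, one_pow, one_mul]
      have h3 : (2:ℕ) ^ E.card * 32 ^ E.card ≤ 64 ^ (q/50) := by
        rw [← mul_pow]; exact Nat.pow_le_pow_right (by norm_num) hE
      calc 2 ^ R * 2 ^ E.card * (32 ^ E.card * 32 ^ (q - E.card))
          = 2 ^ R * (2 ^ E.card * 32 ^ E.card) * 32 ^ (q - E.card) := by ring
        _ ≤ _ := by gcongr
    · simp
  have h4 : 2 ^ q * 32 ^ q ≤ 2 * (2 ^ R * 64 ^ (q/50) * 33 ^ q) := by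
    calc 2 ^ q * 32 ^ q ≤ (2 * good.card) * 32 ^ q := Nat.mul_le_mul_right _ hg1
      _ ≤ (2 * _) * 32 ^ q := Nat.mul_le_mul_right _ (Nat.mul_le_mul_left _ hg2)
      _ ≤ _ := by rw [mul_assoc]; exact Nat.mul_le_mul_left _ hg3
  have h5 : (2 ^ q * 32 ^ q) ^ 4 ≤ (2 * (2 ^ R * 64 ^ (q/50) * 33 ^ q)) ^ 4 := Nat.pow_le_pow_left h4 4
  have h6 : (33 ^ q) ^ 4 ≤ 2 ^ q * (32 ^ q) ^ 4 := by
    rw [← pow_mul, ← pow_mul, mul_comm q 4, pow_mul, pow_mul, ← mul_pow]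
    exact Nat.pow_le_pow_left (by norm_num) q
  have h7 : (64 ^ (q/50)) ^ 4 ≤ 2 ^ q := by
    rw [show (64:ℕ) = 2 ^ 6 by norm_num, ← pow_mul, ← pow_mul]
    exact Nat.pow_le_pow_right (by norm_num) (by omega)
  have h8 : 2 ^ (4 * q) * (32 ^ q) ^ 4 ≤ 2 ^ (4 + 4 * R + 2 * q) * (32 ^ q) ^ 4 := by
    calc 2 ^ (4 * q) * (32 ^ q) ^ 4 = (2 ^ q * 32 ^ q) ^ 4 := by rw [mul_pow]; ring
      _ ≤ _ := h5
      _ = 2 ^ (4 + 4 * R) * ((64 ^ (q/50)) ^ 4 * (33 ^ q) ^ 4) := by rw [mul_pow, mul_pow, mul_pow]; ring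
      _ ≤ 2 ^ (4 + 4 * R) * (2 ^ q * (2 ^ q * (32 ^ q) ^ 4)) := Nat.mul_le_mul_left _ (Nat.mul_le_mul h7 h6)
      _ = _ := by rw [pow_add, two_mul q, pow_add]; ring
  have h9 := Nat.le_of_mul_le_mul_right h8 (by positivity)
  have h10 := (Nat.pow_le_pow_iff_right (by norm_num)).1 h9
  omega

/-- number of small sets -/
lemma card_small (m D : ℕ) (hm : 1 ≤ m) :
    (Finset.univ.filter (fun T : Finset (Fin m) => T.card ≤ D)).card ≤ (D+1) * m ^ D := by
  have h1 : Finset.univ.filter (fun T : Finset (Fin m) => T.card ≤ D) ⊆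
      (Finset.range (D+1)).biUnion fun k => Finset.powersetCard k Finset.univ := by
    intro T hT
    simp only [Finset.mem_filter, Finset.mem_univ, true_and] at hT
    simp only [Finset.mem_biUnion, Finset.mem_range, Finset.mem_powersetCard]
    exact ⟨T.card, by omega, Finset.subset_univ _, rfl⟩
  refine (Finset.card_le_card h1).trans (Finset.card_biUnion_le.trans ?_)
  refine (Finset.sum_le_card_nsmul _ _ (m ^ D) fun k hk => ?_).trans (by simp)
  rw [Finset.card_powersetCard, Finset.card_univ, Fintype.card_fin]
  exact (Nat.choose_le_pow _ _).trans (Nat.pow_le_pow_right hm (by have := Finset.mem_range.1 hk; omega))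
end Count

/-! ### The bound on the number of variables -/

lemma sens_set {n : ℕ} (f : (Fin n → Bool) → Bool) (hf : TrulyVariate f) (D : ℕ) (hD : 1 ≤ D)
    (hG : Good f D (1/100)) (i : Fin n) :
    ∃ (a : Fin n → Bool) (A : Finset (Fin n)) (c : Bool), A.card ≤ 2 * (BI D)^2 ∧ i ∉ A ∧
      ∀ y : Fin n → Bool, (∀ v ∈ A, y v = a v) → f y = xor (y i) c := by
  obtain ⟨a, ha0⟩ := hf i
  have ha : f (Function.update a i (!(a i))) ≠ f a := by convert ha0
  obtain ⟨C, hC, hC2⟩ := certificate D hD f hG a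
  obtain ⟨C', hC', hC2'⟩ := certificate D hD f hG (Function.update a i (!(a i)))
  refine ⟨a, (C ∪ C').erase i, xor (a i) (f a), ?_, by simp, fun y hy => ?_⟩
  · refine (Finset.card_erase_le).trans ((Finset.card_union_le _ _).trans ?_)
    omega
  · by_cases hyi : y i = a i
    · have h1 : f y = f a := hC2 y fun v hv => by
        by_cases hvi : v = i
        · rw [hvi, hyi]
        · exact hy v (by simp [hvi, hv])
      rw [h1, hyi]; cases a i <;> simp
    · have h1 : f y = f (Function.update a i (!(a i))) := hC2' y fun v hv => by
        by_cases hvi : v = i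
        · rw [hvi, Function.update_self]
          revert hyi; cases y i <;> cases a i <;> simp
        · rw [Function.update_of_ne hvi]
          exact hy v (by simp [hvi, hv])
      rw [h1]
      generalize f (Function.update a i (!(a i))) = b at ha
      clear h1
      revert hyi ha
      clear * -
      generalize f a = b'
      generalize a i = b''
      cases y i <;> cases b'' <;> cases b' <;> cases b <;> simp

theorem n_bound {n : ℕ} (f : (Fin n → Bool) → Bool) (hf : TrulyVariate f) (D : ℕ) (hD : 1 ≤ D)
    (hG : Good f D (1/100)) (m : ℕ) (hm : m = 2*(2*(BI D)^2+1)^2) :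
    n ≤ 2 * m * (2 * ((D+1) * m^D) + 2) := by
  choose a A c hA hiA hAf using sens_set f hf D hD hG
  have hm1 : 1 ≤ m := by
    rw [hm]; have : 0 < (2*(BI D)^2+1)^2 := by positivity
    omega
  have z0 : Fin m := ⟨0, hm1⟩
  obtain ⟨h, hh⟩ := hash_exists (2*(BI D)^2) m hm z0 A hA
  rw [Fintype.card_fin] at hh
  generalize hGs : Finset.univ.filter (fun i => h i = z0 ∧ Set.InjOn h (insert i (A i) : Finset (Fin n))) = Gs at hh
  have hGs' : ∀ i ∈ Gs, h i = z0 ∧ Set.InjOn h (insert i (A i) : Finset (Fin n)) := fun i hi => by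
    rw [← hGs] at hi; exact (Finset.mem_filter.1 hi).2
  have key : Fintype.card Gs ≤ 2 * ((D+1) * m^D) + 2 := by
    let zz : Gs → Fin m → Bool := fun i k => decide (∃ v ∈ A i, h v = k ∧ a i v = true)
    let pb : (Gs → Bool) → (Fin m → Bool) → (Fin n → Bool) := fun y ζ v =>
      if h v = z0 then (if hv : v ∈ Gs then y ⟨v, hv⟩ else false) else ζ (h v)
    have hval : ∀ (i : Gs) (y : Gs → Bool), f (pb y (zz i)) = xor (y i) (c i) := by
      intro i y
      obtain ⟨h1, h2⟩ := hGs' i i.2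
      rw [hAf i (pb y (zz i))]
      · congr 1
        simp only [pb, h1, if_true, i.2, dif_pos]
      · intro v hv
        have hne : h v ≠ z0 := by
          intro h3
          have : v = i := h2 (by simp [hv]) (by simp) (h3.trans h1.symm)
          rw [this] at hv
          exact hiA i hv
        simp only [pb, if_neg hne, zz]
        by_cases hav : a i v = true
        · rw [hav]; exact decide_eq_true ⟨v, hv, rfl, hav⟩
        · rw [Bool.not_eq_true] at hav
          rw [hav]
          refine decide_eq_false ?_
          rintro ⟨u, hu, huv, hau⟩
          have : u = v := h2 (by simp [hu]) (by simp [hv]) huv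
          rw [this, hav] at hau
          exact absurd hau (by simp)
    obtain ⟨P, hP, hPe⟩ := hG ((Gs → Bool) × Gs) (fun q => pb q.1 (zz q.2)) (fun _ => 1) (fun _ => zero_le_one)
    let mon : Finset (Fin m) → (Gs → ℝ) := fun T i => ∏ k ∈ T, bz (zz i k)
    refine count_main ((D+1) * m^D) (fun y i => f (pb y (zz i))) ?_ (fun y i => P (pb y (zz i)))
      ((Finset.univ.filter (fun T : Finset (Fin m) => T.card ≤ D)).image mon)
      (Finset.card_image_le.trans (card_small m D hm1)) ?_ ?_
    · intro y y' hyy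
      ext i
      have := congrFun hyy i
      beta_reduce at this
      rw [hval, hval] at this
      revert this
      cases y i <;> cases y' i <;> cases c i <;> simp
    · intro y
      have hLD : LD D (fun ζ : Fin m → Bool => P (pb y ζ)) := by
        refine LD_subst hP (pb y) fun v => ?_
        by_cases hv : h v = z0
        · simp only [pb, if_pos hv]; exact LD_const _ _
        · simp only [pb, if_neg hv]; exact LD_coord _
      obtain ⟨co, hco, hcoe⟩ := hLD
      have h3 : (fun i => P (pb y (zz i))) = ∑ T, co T • mon T := by
        ext i
        have := hcoe (zz i)
        beta_reduce at this
        rw [this]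
        simp only [QQ, Finset.sum_apply, Pi.smul_apply, smul_eq_mul, mon]
      rw [h3]
      refine Submodule.sum_mem _ fun T _ => ?_
      by_cases hT : D < T.card
      · rw [hco T hT, zero_smul]; exact Submodule.zero_mem _
      · refine Submodule.smul_mem _ _ (Submodule.subset_span ?_)
        rw [Finset.coe_image]
        exact ⟨T, by simpa using hT, rfl⟩
    · simp only [one_mul, Fintype.sum_prod_type] at hPe
      have h4 : ∀ y : Gs → Bool, ((Finset.univ.filter (fun i : Gs => P (pb y (zz i)) ≠ bz (f (pb y (zz i))))).card : ℝ) =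
          ∑ i : Gs, if P (pb y (zz i)) = bz (f (pb y (zz i))) then (0:ℝ) else 1 := by
        intro y
        rw [Finset.card_filter, Nat.cast_sum]
        refine Finset.sum_congr rfl fun i _ => ?_
        by_cases hi : P (pb y (zz i)) = bz (f (pb y (zz i)))
        · simp [hi]
        · simp [hi]
      simp only [h4]
      refine hPe.trans (le_of_eq ?_)
      simp
      ring
  rw [Fintype.card_coe] at key
  exact hh.trans (Nat.mul_le_mul_left _ key)

/-! ### Numerical bounds -/

lemma BI_le (D Z : ℕ) (hD : 1 ≤ D) (hZ : Z = 20000 * (D+1)) : BI D ≤ Z ^ (180 * D^2) := by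
  have hZ1 : 1 ≤ Z := by omega
  have pw : ∀ {a b : ℕ}, a ≤ b → Z ^ a ≤ Z ^ b := fun h => Nat.pow_le_pow_right hZ1 h
  have hDZ : D ≤ Z := by omega
  have h9 : 9 ^ D ≤ Z ^ D := Nat.pow_le_pow_left (by omega) D
  have h1 : MM D ≤ Z ^ 2 := by
    unfold MM; rw [hZ]; nlinarith
  have h2 : etaI D ≤ Z ^ (1 + 4*D) := by
    unfold etaI
    calc 40*(2*D+1)*(MM D)^(2*D) ≤ Z * (Z^2)^(2*D) :=
          Nat.mul_le_mul (by omega) (Nat.pow_le_pow_left h1 _)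
      _ = _ := by rw [← pow_mul, pow_add]; congr 1; · simp
                  congr 1; ring
  have h3 : kapI D ≤ Z ^ (4 + 13*D) := by
    unfold kapI
    calc 2000*(D+1)*9^D*(etaI D)^3 ≤ Z * Z^D * (Z ^ (1+4*D))^3 :=
          Nat.mul_le_mul (Nat.mul_le_mul (by omega) h9) (Nat.pow_le_pow_left h2 _)
      _ = Z ^ (4 + 13*D) := by rw [← pow_mul, ← pow_succ', ← pow_add]; congr 1; ring
  have h4 : tauI D ≤ Z ^ (8 + 27*D) := by
    unfold tauI
    calc (kapI D)^2*9^D ≤ (Z ^ (4 + 13*D))^2 * Z^D :=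
          Nat.mul_le_mul (Nat.pow_le_pow_left h3 _) h9
      _ = _ := by rw [← pow_mul, ← pow_add]; congr 1; ring
  have h5 : tpI D ≤ Z ^ (11 + 30*D) := by
    unfold tpI
    calc 10240*9^(3*D)*D^2*tauI D ≤ Z * Z^(3*D) * Z^2 * Z^(8+27*D) :=
          Nat.mul_le_mul (Nat.mul_le_mul (Nat.mul_le_mul (by omega) (Nat.pow_le_pow_left (by omega) _))
            (Nat.pow_le_pow_left hDZ _)) h4
      _ = _ := by rw [← pow_succ', ← pow_add, ← pow_add]; congr 1; ring
  have h6 : K0 D ≤ Z ^ (12 + 30*D) := by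
    unfold K0
    calc D * tpI D ≤ Z * Z ^ (11+30*D) := Nat.mul_le_mul hDZ h5
      _ = _ := by rw [← pow_succ']; congr 1; ring
  have h7 : RI D ≤ Z ^ (13 + 31*D) := by
    unfold RI
    calc 16*9^D*K0 D + 1 ≤ 16 * Z^D * Z^(12+30*D) + Z^D * Z^(12+30*D) :=
          Nat.add_le_add (Nat.mul_le_mul (Nat.mul_le_mul_left _ h9) h6) (Nat.one_le_iff_ne_zero.2 (by positivity))
      _ = 17 * Z ^ (12 + 31*D) := by
          rw [show 12 + 31*D = D + (12+30*D) by ring, pow_add]; ring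
      _ ≤ Z * Z ^ (12 + 31*D) := Nat.mul_le_mul_right _ (by omega)
      _ = _ := by rw [← pow_succ']; congr 1; ring
  have h8 : KI D ≤ Z ^ (45*D) := by
    unfold KI
    calc 4*D*RI D ≤ Z * Z^(13+31*D) := Nat.mul_le_mul (by omega) h7
      _ = Z ^ (14 + 31*D) := by rw [← pow_succ']; congr 1; ring
      _ ≤ _ := pw (by omega)
  unfold BI
  calc (KI D)^(2*D+2) ≤ (Z^(45*D))^(2*D+2) := Nat.pow_le_pow_left h8 _
    _ = Z ^ (45*D*(2*D+2)) := by rw [← pow_mul]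
    _ ≤ _ := pw (by nlinarith)

lemma n_le_Z {n : ℕ} (f : (Fin n → Bool) → Bool) (hf : TrulyVariate f) (D Z : ℕ) (hD : 1 ≤ D)
    (hZ : Z = 20000 * (D+1)) (hG : Good f D (1/100)) : n ≤ Z ^ (1443 * D^3) := by
  have hZ1 : 1 ≤ Z := by omega
  have pw : ∀ {a b : ℕ}, a ≤ b → Z ^ a ≤ Z ^ b := fun h => Nat.pow_le_pow_right hZ1 h
  have hB := BI_le D Z hD hZ
  have h0 := n_bound f hf D hD hG _ rfl
  generalize hm : 2*(2*(BI D)^2+1)^2 = m at h0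
  have hX : 1 ≤ Z ^ (180*D^2) := Nat.one_le_iff_ne_zero.2 (by positivity)
  have h1 : m ≤ Z ^ (721*D^2) := by
    rw [← hm]
    calc 2*(2*(BI D)^2+1)^2 ≤ 2*(2*(Z ^ (180*D^2))^2+(Z ^ (180*D^2))^2)^2 := by
          gcongr; exact Nat.one_le_pow _ _ hX
      _ = 18 * Z ^ (720*D^2) := by
          rw [show 720*D^2 = (180*D^2)*4 by ring, pow_mul]; ring
      _ ≤ Z * Z ^ (720*D^2) := Nat.mul_le_mul_right _ (by omega)
      _ = Z ^ (720*D^2+1) := by rw [← pow_succ']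
      _ ≤ _ := pw (by nlinarith)
  have hM : 1 ≤ Z ^ (721*D^2) := Nat.one_le_iff_ne_zero.2 (by positivity)
  calc n ≤ 2 * m * (2 * ((D+1) * m^D) + 2) := h0
    _ ≤ 2 * Z ^ (721*D^2) * (2 * ((D+1) * (Z ^ (721*D^2))^D) + 2 * ((D+1) * (Z ^ (721*D^2))^D)) := by
        gcongr
        have : 1 ≤ (Z ^ (721*D^2))^D := Nat.one_le_pow _ _ hM
        nlinarith
    _ = (8 * (D+1)) * (Z ^ (721*D^2))^(D+1) := by ring
    _ ≤ Z * (Z ^ (721*D^2))^(D+1) := Nat.mul_le_mul_right _ (by omega)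
    _ = Z ^ (721*D^2*(D+1) + 1) := by rw [← pow_mul, ← pow_succ']
    _ ≤ _ := pw (by
        have : D^2 ≤ D^3 := Nat.pow_le_pow_right hD (by norm_num)
        have h3 : 1 ≤ D^3 := Nat.one_le_pow _ _ hD
        have : 721*D^2*(D+1) = 721*D^3 + 721*D^2 := by ring
        omega)

lemma logn_le {n : ℕ} (hn : 1 ≤ n) (f : (Fin n → Bool) → Bool) (hf : TrulyVariate f) (d : ℕ)
    (h : HasProbPoly f (1/3) d) :
    Real.logb 2 n ≤ 1443 * (80 * ((d:ℝ)+1))^3 * Real.logb 2 (3240000 * ((d:ℝ)+1)) := by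
  have h1 := n_le_Z f hf (80*(d+1)) _ (by omega) rfl (good_of_prob f d h)
  obtain ⟨E, hE⟩ : ∃ E : ℕ, E = 1443 * (80*(d+1))^3 := ⟨_, rfl⟩
  rw [← hE] at h1
  have h2 : (n:ℝ) ≤ (3240000 * ((d:ℝ)+1)) ^ E := by
    have h1' : (n:ℝ) ≤ ((20000 * (80*(d+1)+1) : ℕ):ℝ)^E := by exact_mod_cast h1
    refine h1'.trans ?_
    refine pow_le_pow_left₀ (by positivity) ?_ _
    push_cast
    have : (0:ℝ) ≤ d := by positivity
    nlinarith
  have h3 : Real.logb 2 n ≤ Real.logb 2 ((3240000 * ((d:ℝ)+1)) ^ E) :=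
    Real.logb_le_logb_of_le (by norm_num) (by exact_mod_cast hn) h2
  rw [Real.logb_pow] at h3
  refine h3.trans (le_of_eq ?_)
  rw [hE]
  push_cast
  ring

lemma hasProb_exists {n : ℕ} (f : (Fin n → Bool) → Bool) : ∃ d, HasProbPoly f (1/3) d := by
  let P : MvPolynomial (Fin n) ℝ := ∑ a : Fin n → Bool, MvPolynomial.C (if f a then (1:ℝ) else 0) *
    ∏ i, (if a i then MvPolynomial.X i else 1 - MvPolynomial.X i)
  refine ⟨P.totalDegree, 1, fun _ => 1, fun _ => P, fun _ => zero_le_one, by simp, fun _ => le_rfl, fun a => ?_⟩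
  have h : evalBool a P = if f a then (1:ℝ) else 0 := by
    simp only [evalBool, P, map_sum, map_mul, map_prod, MvPolynomial.eval_C]
    rw [Finset.sum_eq_single a]
    · rw [Finset.prod_eq_one, mul_one]
      intro i _
      cases ha : a i <;> simp [ha]
    · intro b _ hb
      obtain ⟨i, hi⟩ := Function.ne_iff.1 hb
      rw [Finset.prod_eq_zero (Finset.mem_univ i), mul_zero]
      revert hi
      cases ha : a i <;> cases hb : b i <;> simp [ha]
    · simp
  simp [h]

lemma ev_ineq (ε : ℝ) (hε : 0 < ε) (C : ℝ) (hC : 0 < C) :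
    ∀ᶠ x : ℝ in Filter.atTop, C * (23 + Real.logb 2 x) < x ^ ε := by
  have h1 : (fun x : ℝ => 23 + Real.logb 2 x) =o[Filter.atTop] fun x : ℝ => x ^ ε := by
    refine Asymptotics.IsLittleO.add ?_ ?_
    · rw [Asymptotics.isLittleO_const_left]
      right
      exact Filter.tendsto_abs_atTop_atTop.comp (tendsto_rpow_atTop hε)
    · have := (isLittleO_log_rpow_atTop hε).const_mul_left (Real.log 2)⁻¹
      refine this.congr_left fun x => ?_
      rw [Real.logb]; ring
  have h2 := h1.bound (show (0:ℝ) < 1 / (2*C) by positivity)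
  filter_upwards [h2, Filter.eventually_gt_atTop 0] with x hx hx0
  have hp : 0 < x ^ ε := Real.rpow_pos_of_pos hx0 _
  rw [Real.norm_of_nonneg hp.le, Real.norm_eq_abs] at hx
  have h3 := (le_abs_self _).trans hx
  calc C * (23 + Real.logb 2 x) ≤ C * (1/(2*C) * x ^ ε) := by gcongr
    _ = x ^ ε / 2 := by field_simp
    _ < _ := by linarith

lemma final_aux (ε : ℝ) (hε : 0 < ε) (hε3 : ε < 1/3) : ∃ N : ℕ, ∀ n : ℕ, N ≤ n →
      ∀ f : (Fin n → Bool) → Bool, TrulyVariate f →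
        1 ≤ Real.logb 2 n ∧ (Real.logb 2 n) ^ ((1:ℝ)/3 - ε) ≤ (pdeg (1/3) f : ℝ) := by
  have hev := ev_ineq (3*ε) (by linarith) (1443 * 80^3 * 8) (by norm_num)
  have ht : Filter.Tendsto (fun n : ℕ => Real.logb 2 n) Filter.atTop Filter.atTop :=
    (Real.tendsto_logb_atTop (by norm_num)).comp tendsto_natCast_atTop_atTop
  have hev2 := (ht.eventually hev).and ((ht.eventually (Filter.eventually_ge_atTop 1)).and
    (Filter.eventually_ge_atTop 1))
  obtain ⟨N, hN⟩ := Filter.eventually_atTop.1 hev2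
  refine ⟨N, fun n hn f hf => ?_⟩
  obtain ⟨h1, h2, h3⟩ := hN n hn
  refine ⟨h2, ?_⟩
  by_contra hcon
  rw [not_le] at hcon
  have hmem : HasProbPoly f (1/3) (pdeg (1/3) f) := Nat.sInf_mem (s := {d | HasProbPoly f (1/3) d}) (hasProb_exists f)
  have h4 := logn_le h3 f hf _ hmem
  generalize hx : Real.logb 2 n = x at *
  generalize pdeg (1/3) f = d at *
  have hx0 : 0 < x := by linarith
  set t := x ^ ((1:ℝ)/3 - ε) with htd
  have ht1 : 1 ≤ t := Real.one_le_rpow h2 (by linarith)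
  have hd : (d:ℝ) + 1 ≤ 2 * t := by linarith
  have htx : t ≤ x := by
    calc t ≤ x ^ (1:ℝ) := Real.rpow_le_rpow_of_exponent_le h2 (by linarith)
      _ = x := Real.rpow_one x
  have hd0 : (0:ℝ) ≤ d := by positivity
  have h5 : Real.logb 2 (3240000 * ((d:ℝ)+1)) ≤ 23 + Real.logb 2 x := by
    have : Real.logb 2 (2^23 * x) = 23 + Real.logb 2 x := by
      rw [Real.logb_mul (by norm_num) hx0.ne', Real.logb_pow]; simp
    rw [← this]
    refine Real.logb_le_logb_of_le (by norm_num) (by positivity) ?_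
    nlinarith
  have h6 : 0 ≤ 23 + Real.logb 2 x := by
    have := Real.logb_nonneg (b := 2) (by norm_num) h2
    linarith
  have h7 : x ≤ 1443 * (80 * (2 * t))^3 * (23 + Real.logb 2 x) := by
    refine h4.trans ?_
    refine mul_le_mul ?_ h5 (Real.logb_nonneg (by norm_num) (by nlinarith)) (by positivity)
    gcongr
  have h8 : t ^ 3 * x ^ (3*ε) = x := by
    rw [htd, ← Real.rpow_natCast, ← Real.rpow_mul hx0.le, ← Real.rpow_add hx0]
    conv_rhs => rw [← Real.rpow_one x]
    congr 1; push_cast; ring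
  have h9 : t ^ 3 * (1443 * 80^3 * 8 * (23 + Real.logb 2 x)) < t ^ 3 * x ^ (3*ε) :=
    mul_lt_mul_of_pos_left h1 (by positivity)
  rw [h8] at h9
  have h10 : 1443 * (80 * (2 * t))^3 * (23 + Real.logb 2 x) = t ^ 3 * (1443 * 80^3 * 8 * (23 + Real.logb 2 x)) := by ring
  linarith

theorem unconditional_lower_bound :
    ∀ ε : ℝ, 0 < ε → ∃ N : ℕ, ∀ n : ℕ, N ≤ n →
      ∀ f : (Fin n → Bool) → Bool, TrulyVariate f →
        (Real.logb 2 n) ^ ((1:ℝ)/3 - ε) ≤ (pdeg (1/3) f : ℝ) := by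
  intro ε hε
  obtain ⟨N, hN⟩ := final_aux (min ε (1/6)) (lt_min hε (by norm_num)) (lt_of_le_of_lt (min_le_right _ _) (by norm_num))
  refine ⟨N, fun n hn f hf => ?_⟩
  obtain ⟨h1, h2⟩ := hN n hn f hf
  refine le_trans (Real.rpow_le_rpow_of_exponent_le h1 ?_) h2
  have := min_le_left ε (1/6)
  linarith
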